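/- arXiv:1701.01971 — 4 statements merged into one kernel-verified Lean document; each statement's English description precedes it below -/
import Mathlib

section
/- For every nondeterministic Büchi automaton over an alphabet A with n states and initial state set I there exists a backward deterministic automaton over A with a generalized transition Büchi recurrence condition and at most (3n)^n states which, augmented with a suitable set of initial states, recognizes the same ω-language. -/
/-- A (backward) run of a backward deterministic automaton with transition function `ρ`
on the ω-word `u`: `r i = ρ (u i) (r (i+1))` for all `i`. -/
def IsBackRun {P A : Type*} (ρ : A → P → P) (u : ℕ → A) (r : ℕ → P) : Prop :=
  ∀ i, r i = ρ (u i) (r (i + 1))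

/-- A run is final for the generalized transition Büchi condition `T` if for every `j`
the run uses a transition from `T j` infinitely often. -/
def GTBFinal {P A : Type*} {k : ℕ} (T : Fin k → Set (P × A × P)) (u : ℕ → A)
    (r : ℕ → P) : Prop :=
  ∀ j : Fin k, ∀ m : ℕ, ∃ i, m ≤ i ∧ (r i, u i, r (i + 1)) ∈ T j

/-- The ω-word `u` is accepted by the nondeterministic Büchi automaton with transition
relation `Δ` and Büchi set `B` from state `q`: there is a run starting in `q` that
visits `B` infinitely often. -/
def NBAAccepts {Q A : Type*} (Δ : Set (Q × A × Q)) (B : Set Q) (u : ℕ → A) (q : Q) :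
    Prop :=
  ∃ r : ℕ → Q, r 0 = q ∧ (∀ i, (r i, u i, r (i + 1)) ∈ Δ) ∧
    ∀ m, ∃ i, m ≤ i ∧ r i ∈ B

/-!
Give every state of the Büchi automaton a rank at each position of the word `u`. From an even rank
every run ends or falls to a lower rank after finitely many steps; from an odd rank below the top
no run visits `B` before falling to a lower rank, and some run stays until the next lower rank can
be entered; the top rank `2 n + 1` means that `u` is accepted. Ranks obey a backward recursion, but
the recursion has spurious solutions. What singles out the genuine one is that every state has a
finite distance, obeying a backward recursion too, from the target of its rank: the fall to a lower
rank, or a visit to `B` in the top rank.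

The recursion can be carried out on the order of the distances within each rank, so this order is
all the automaton remembers. Finiteness of the distances becomes the recurrence condition that the
largest distance in a rank must not grow at all late steps back, since true distances cannot
decrease forever along `u`. Eventually no odd rank is skipped, and then ranks and orders are
determined by the position of each state in a total preorder of the `n` states and one of three
marks, which gives `(3 n) ^ n`.
-/

namespace BackwardDeterminization

open Filter
open scoped Finset

section NatSequences

variable {f : ℕ → ℕ}

theorem exists_ge_le_succ (f : ℕ → ℕ) (m : ℕ) : ∃ i, m ≤ i ∧ f i ≤ f (i + 1) := by
  by_contra! h
  exact not_strictAnti_of_wellFoundedLT (fun i => f (m + i))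
    (strictAnti_nat_of_succ_lt fun i => h (m + i) (Nat.le_add_right m i))

theorem exists_forall_ge_eq_of_monotone_of_le (hf : Monotone f) {b : ℕ} (hb : ∀ i, f i ≤ b) :
    ∃ N, ∀ i, N ≤ i → f N = f i := by
  have antitone_sub : Antitone fun i => b - f i := fun _ _ hij => Nat.sub_le_sub_left (hf hij) b
  obtain ⟨N, hN⟩ := WellFoundedLT.antitone_chain_condition antitone_sub
  refine ⟨N, fun i hi => ?_⟩
  have := hN i hi
  have := hb N
  have := hb i
  omega

end NatSequences

section DenseRank

variable {Q α β : Type*} {s : Finset Q} {f : Q → α} {g : Q → β}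

theorem card_image_le_card_image_of_eq_imp_eq [DecidableEq α] [DecidableEq β]
    (h : ∀ x ∈ s, ∀ y ∈ s, g x = g y → f x = f y) :
    #(s.image f) ≤ #(s.image g) := by
  refine Finset.card_le_card_of_forall_subsingleton (fun b c => ∃ x ∈ s, f x = b ∧ g x = c) ?_ ?_
  · intro b hb
    obtain ⟨x, hx, rfl⟩ := Finset.mem_image.1 hb
    exact ⟨g x, Finset.mem_image_of_mem g hx, x, hx, rfl, rfl⟩
  · rintro _ - _ ⟨-, x, hx, rfl, hxc⟩ _ ⟨-, y, hy, rfl, hyc⟩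
    exact h x hx y hy (hxc.trans hyc.symm)

variable [LinearOrder α] [LinearOrder β]

theorem card_image_eq_card_image_of_lt_iff_lt (h : ∀ x ∈ s, ∀ y ∈ s, f x < f y ↔ g x < g y) :
    #(s.image f) = #(s.image g) := by
  have eq_iff : ∀ x ∈ s, ∀ y ∈ s, f x = f y ↔ g x = g y := fun x hx y hy => by
    simp only [le_antisymm_iff, ← not_lt, h x hx y hy, h y hy x hx]
  exact le_antisymm
    (card_image_le_card_image_of_eq_imp_eq fun x hx y hy => (eq_iff x hx y hy).2)
    (card_image_le_card_image_of_eq_imp_eq fun x hx y hy => (eq_iff x hx y hy).1)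

/-- The position of `f q` among the values of `f` on `s`: the number of distinct values of `f` on
`s` below `f q`. -/
def denseRank (s : Finset Q) (f : Q → α) (q : Q) : ℕ :=
  #{x ∈ s.image f | x < f q}

theorem denseRank_lt_denseRank_iff {q q' : Q} (hq : q ∈ s) :
    denseRank s f q < denseRank s f q' ↔ f q < f q' := by
  constructor
  · contrapose!
    exact fun hle => Finset.card_le_card
      (Finset.monotone_filter_right _ fun x _ hx => lt_of_lt_of_le hx hle)
  · intro hlt
    refine Finset.card_lt_card ((Finset.ssubset_iff_of_subset
      (Finset.monotone_filter_right _ fun x _ hx => lt_trans hx hlt)).2 ⟨f q, ?_, ?_⟩)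
    · exact Finset.mem_filter.2 ⟨Finset.mem_image_of_mem f hq, hlt⟩
    · simp

theorem denseRank_congr (h : ∀ x ∈ s, ∀ y ∈ s, f x < f y ↔ g x < g y) {q : Q} (hq : q ∈ s) :
    denseRank s f q = denseRank s g q := by
  have filter_eq : s.filter (fun x => f x < f q) = s.filter (fun x => g x < g q) :=
    Finset.filter_congr fun x hx => h x hx q hq
  rw [denseRank, denseRank, Finset.filter_image, Finset.filter_image, filter_eq]
  exact card_image_eq_card_image_of_lt_iff_lt fun x hx y hy =>
    h x (Finset.mem_filter.1 hx).1 y (Finset.mem_filter.1 hy).1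

theorem denseRank_lt_card {q : Q} (hq : q ∈ s) : denseRank s f q < #s :=
  calc denseRank s f q < #(s.image f) :=
        Finset.card_lt_card (Finset.filter_ssubset.2 ⟨f q, Finset.mem_image_of_mem f hq, by simp⟩)
    _ ≤ #s := Finset.card_image_le

end DenseRank

section OrderAgree

variable {Q : Type*} {r d d' : Q → ℕ}

/-- `d` and `d'` order each level set of `r` in the same way. -/
def OrderAgree (r d d' : Q → ℕ) : Prop :=
  ∀ q q', r q = r q' → (d q < d q' ↔ d' q < d' q')

theorem OrderAgree.symm (h : OrderAgree r d d') : OrderAgree r d' d :=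
  fun q q' hr => (h q q' hr).symm

theorem OrderAgree.exists_cut [Finite Q] (h : OrderAgree r d d') (k t : ℕ) :
    ∃ t', ∀ q, r q = k → (d q < t ↔ d' q < t') := by
  classical
  cases nonempty_fintype Q
  refine ⟨({q | r q = k ∧ d q < t} : Finset Q).sup (fun q => d' q + 1), fun q hq => ⟨?_, ?_⟩⟩
  · intro hlt
    exact Finset.le_sup (f := fun q => d' q + 1) (by simp [hq, hlt])
  · rw [Finset.lt_sup_iff]
    rintro ⟨q₀, hq₀, hlt⟩
    simp only [Finset.mem_filter, Finset.mem_univ, true_and] at hq₀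
    have not_lt : ¬ d q₀ < d q := by
      rw [h q₀ q (hq₀.1.trans hq.symm)]
      omega
    omega

variable [Fintype Q]

/-- The canonical representative of the order that `d` induces on each level set of `r`. -/
def compress (r d : Q → ℕ) (q : Q) : ℕ :=
  denseRank {q' | r q' = r q} d q

theorem orderAgree_compress (r d : Q → ℕ) : OrderAgree r (compress r d) d := by
  intro q q' hr
  rw [compress, compress, hr]
  exact denseRank_lt_denseRank_iff (by simpa using hr)

theorem OrderAgree.compress_eq (h : OrderAgree r d d') : compress r d = compress r d' := by
  funext q
  refine denseRank_congr (fun x hx y hy => h x y ?_) (by simp)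
  simp only [Finset.mem_filter, Finset.mem_univ, true_and] at hx hy
  exact hx.trans hy.symm

theorem compress_compress (r d : Q → ℕ) : compress r (compress r d) = compress r d :=
  (orderAgree_compress r d).compress_eq

theorem exists_compress_eq_zero (r d : Q → ℕ) (q : Q) : ∃ w, r w = r q ∧ compress r d w = 0 := by
  obtain ⟨w, hw, hmin⟩ := Finset.exists_min_image ({w | r w = r q} : Finset Q) d ⟨q, by simp⟩
  simp only [Finset.mem_filter, Finset.mem_univ, true_and] at hw hmin
  refine ⟨w, hw, Finset.card_eq_zero.2 (Finset.filter_eq_empty_iff.2 fun x hx => ?_)⟩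
  obtain ⟨w', hw', rfl⟩ := Finset.mem_image.1 hx
  exact (hmin w' (by simpa [hw] using hw')).not_gt

end OrderAgree

section RankStep

variable {Q A : Type*} [Fintype Q] {Δ : Set (Q × A × Q)} {B : Set Q} {M : ℕ} {a : A} {r : Q → ℕ}
  {q w : Q} {k : ℕ}

open scoped Classical in
/-- The largest rank of an `a`-successor of `q`, and `0` if there is none. -/
noncomputable def succSup (Δ : Set (Q × A × Q)) (a : A) (r : Q → ℕ) (q : Q) : ℕ :=
  ({w | (q, a, w) ∈ Δ} : Finset Q).sup r

theorem succSup_le_iff : succSup Δ a r q ≤ k ↔ ∀ w, (q, a, w) ∈ Δ → r w ≤ k := by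
  simp [succSup, Finset.sup_le_iff]

theorem exists_eq_succSup (h : succSup Δ a r q ≠ 0) :
    ∃ w, (q, a, w) ∈ Δ ∧ r w = succSup Δ a r q := by
  by_contra! hne
  have le_pred : succSup Δ a r q ≤ succSup Δ a r q - 1 := succSup_le_iff.2 fun w hw => by
    have := hne w hw
    have := succSup_le_iff.1 (le_refl (succSup Δ a r q)) w hw
    omega
  omega

open scoped Classical in
/-- The rank of `q` before reading `a`, given the ranks `r` afterwards. Odd ranks below the top
rank `M` are reserved for states that have to avoid `B`. -/
noncomputable def rankStep (Δ : Set (Q × A × Q)) (B : Set Q) (M : ℕ) (a : A) (r : Q → ℕ) (q : Q) :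
    ℕ :=
  if Odd (succSup Δ a r q) ∧ q ∈ B ∧ succSup Δ a r q ≠ M then succSup Δ a r q + 1
  else succSup Δ a r q

theorem le_rankStep (hw : (q, a, w) ∈ Δ) : r w ≤ rankStep Δ B M a r q := by
  have := succSup_le_iff.1 (le_refl (succSup Δ a r q)) w hw
  rw [rankStep]
  split_ifs <;> omega

theorem exists_succ_of_rankStep_ne_zero (h : rankStep Δ B M a r q ≠ 0) :
    ∃ w, (q, a, w) ∈ Δ ∧ (r w = rankStep Δ B M a r q ∨
      r w + 1 = rankStep Δ B M a r q ∧ Odd (r w) ∧ q ∈ B ∧ r w ≠ M) := by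
  have succSup_ne : succSup Δ a r q ≠ 0 := by
    rintro h0
    simp [rankStep, h0] at h
  obtain ⟨w, hw, hrw⟩ := exists_eq_succSup succSup_ne
  refine ⟨w, hw, ?_⟩
  rw [rankStep, hrw]
  split_ifs with hcond
  · exact Or.inr ⟨rfl, hcond⟩
  · exact Or.inl rfl

theorem exists_succ_of_odd_rankStep (h : Odd (rankStep Δ B M a r q)) :
    ∃ w, (q, a, w) ∈ Δ ∧ r w = rankStep Δ B M a r q := by
  obtain ⟨w, hw, heq | ⟨heq, hodd, -⟩⟩ := exists_succ_of_rankStep_ne_zero h.pos.ne'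
  · exact ⟨w, hw, heq⟩
  · rw [← heq] at h
    exact absurd hodd (by simpa [Nat.odd_add_one] using h)

theorem notMem_of_odd_rankStep (h : Odd (rankStep Δ B M a r q)) (hM : rankStep Δ B M a r q ≠ M) :
    q ∉ B := by
  intro hB
  by_cases hodd : Odd (succSup Δ a r q) ∧ q ∈ B ∧ succSup Δ a r q ≠ M
  · rw [rankStep, if_pos hodd, Nat.odd_add_one] at h
    exact h hodd.1
  · rw [rankStep, if_neg hodd] at h hM
    exact hodd ⟨h, hB, hM⟩

theorem rankStep_le_iff (hk : k ≠ M) :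
    rankStep Δ B M a r q ≤ k ↔
      ∀ w, (q, a, w) ∈ Δ → r w ≤ k ∧ (Odd k → q ∈ B → r w < k) := by
  constructor
  · intro hle w hw
    refine ⟨(le_rankStep hw).trans hle, fun hodd hB => ?_⟩
    refine lt_of_le_of_ne ((le_rankStep hw).trans hle) fun heq => ?_
    have rank_eq : rankStep Δ B M a r q = k := hle.antisymm (heq ▸ le_rankStep hw)
    exact notMem_of_odd_rankStep (rank_eq ▸ hodd) (rank_eq ▸ hk) hB
  · intro h
    by_contra! hlt
    obtain ⟨w, hw, heq | ⟨heq, hodd, hB, -⟩⟩ := exists_succ_of_rankStep_ne_zero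
      (Nat.ne_zero_of_lt hlt)
    · have := (h w hw).1
      omega
    · have rank_eq : r w = k := by have := (h w hw).1; omega
      have := (h w hw).2 (rank_eq ▸ hodd) hB
      omega

theorem rankStep_le_top (h : ∀ q, r q ≤ M) (q : Q) : rankStep Δ B M a r q ≤ M := by
  by_contra! hlt
  obtain ⟨w, -, heq | ⟨heq, -, -, hne⟩⟩ := exists_succ_of_rankStep_ne_zero (Nat.ne_zero_of_lt hlt)
  · exact (heq ▸ h w).not_gt hlt
  · have := h w
    omega

theorem rankStep_eq_top_iff (hM : Odd M) (h : ∀ q, r q ≤ M) :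
    rankStep Δ B M a r q = M ↔ ∃ w, (q, a, w) ∈ Δ ∧ r w = M := by
  constructor
  · intro heq
    obtain ⟨w, hw, hrw⟩ := exists_succ_of_odd_rankStep (heq.symm ▸ hM)
    exact ⟨w, hw, hrw.trans heq⟩
  · rintro ⟨w, hw, hrw⟩
    exact (rankStep_le_top h q).antisymm (hrw ▸ le_rankStep hw)

end RankStep

section DistStep

variable {Q A : Type*} [Fintype Q] {Δ : Set (Q × A × Q)} {B : Set Q} {M : ℕ} {a : A} {r : Q → ℕ}
  {φ ψ : Q → Prop} {d d' : Q → ℕ} {q : Q} {k t : ℕ}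

/-- `q` has reached the target of an odd rank: `B` for the top rank `M`, and a state of the next
lower rank otherwise. Nothing lies below rank `1` but states without infinite runs, so every state
of rank `1` counts. -/
def IsGoal (Δ : Set (Q × A × Q)) (B : Set Q) (M : ℕ) (a : A) (r : Q → ℕ) (q : Q) : Prop :=
  rankStep Δ B M a r q = M ∧ q ∈ B ∨
    rankStep Δ B M a r q ≠ M ∧
      (rankStep Δ B M a r q = 1 ∨ ∃ w, (q, a, w) ∈ Δ ∧ r w + 1 = rankStep Δ B M a r q)

/-- One step towards the target of the rank of `q`, where `φ` says which states are already under
way: from an even rank every run has to leave the rank, from an odd rank some run has to reach a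
goal within the rank. -/
def Progresses (Δ : Set (Q × A × Q)) (B : Set Q) (M : ℕ) (a : A) (r : Q → ℕ) (φ : Q → Prop)
    (q : Q) : Prop :=
  (Even (rankStep Δ B M a r q) → ∀ w, (q, a, w) ∈ Δ → r w = rankStep Δ B M a r q → φ w) ∧
    (Odd (rankStep Δ B M a r q) →
      IsGoal Δ B M a r q ∨ ∃ w, (q, a, w) ∈ Δ ∧ r w = rankStep Δ B M a r q ∧ φ w)

theorem Progresses.mono (h : Progresses Δ B M a r φ q)
    (hφψ : ∀ w, r w = rankStep Δ B M a r q → φ w → ψ w) : Progresses Δ B M a r ψ q :=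
  ⟨fun heven w hw hrw => hφψ w hrw (h.1 heven w hw hrw),
    fun hodd => (h.2 hodd).imp_right fun ⟨w, hw, hrw, hφ⟩ => ⟨w, hw, hrw, hφψ w hrw hφ⟩⟩

theorem progresses_congr (hφψ : ∀ w, r w = rankStep Δ B M a r q → (φ w ↔ ψ w)) :
    Progresses Δ B M a r φ q ↔ Progresses Δ B M a r ψ q :=
  ⟨fun h => h.mono fun w hrw => (hφψ w hrw).1, fun h => h.mono fun w hrw => (hφψ w hrw).2⟩

theorem Progresses.exists_of_monotone {φ : ℕ → Q → Prop} (hφ : Monotone φ)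
    (h : Progresses Δ B M a r (fun w => ∃ t, φ t w) q) : ∃ t, Progresses Δ B M a r (φ t) q := by
  have exists_bound : ∃ t, ∀ w, (∃ t, φ t w) → φ t w := by
    choose! s hs using fun w (hw : ∃ t, φ t w) => hw
    exact ⟨Finset.univ.sup s, fun w hw => hφ (Finset.le_sup (Finset.mem_univ w)) w (hs w hw)⟩
  obtain ⟨t, ht⟩ := exists_bound
  exact ⟨t, h.mono fun w _ => ht w⟩

theorem progresses_true : Progresses Δ B M a r (fun _ => True) q :=
  ⟨fun _ _ _ _ => trivial, fun hodd => Or.inr <| by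
    obtain ⟨w, hw, hrw⟩ := exists_succ_of_odd_rankStep hodd
    exact ⟨w, hw, hrw, trivial⟩⟩

/-- The number of steps from `q` to the target of its rank, given the numbers `d` after one
step. -/
noncomputable def distStep (Δ : Set (Q × A × Q)) (B : Set Q) (M : ℕ) (a : A) (r d : Q → ℕ)
    (q : Q) : ℕ :=
  sInf {t | Progresses Δ B M a r (fun w => d w < t) q}

theorem distStep_le_iff :
    distStep Δ B M a r d q ≤ t ↔ Progresses Δ B M a r (fun w => d w < t) q := by
  have monotone_lt : Monotone fun t w => d w < t := fun _ _ hst w hw => hw.trans_le hst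
  have progresses_lt : ∃ t, Progresses Δ B M a r (fun w => d w < t) q :=
    (progresses_true.mono fun w _ _ => ⟨d w + 1, Nat.lt_succ_self _⟩).exists_of_monotone monotone_lt
  have progresses_distStep : Progresses Δ B M a r (fun w => d w < distStep Δ B M a r d q) q :=
    Nat.sInf_mem progresses_lt
  exact ⟨fun hle => progresses_distStep.mono fun w _ => monotone_lt hle w, fun h => Nat.sInf_le h⟩

theorem dist_lt_distStep {w : Q} (hw : (q, a, w) ∈ Δ) (hrw : r w = rankStep Δ B M a r q)
    (heven : Even (rankStep Δ B M a r q)) : d w < distStep Δ B M a r d q :=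
  (distStep_le_iff.1 le_rfl).1 heven w hw hrw

theorem exists_dist_lt_distStep (hodd : Odd (rankStep Δ B M a r q)) (hgoal : ¬ IsGoal Δ B M a r q) :
    ∃ w, (q, a, w) ∈ Δ ∧ r w = rankStep Δ B M a r q ∧ d w < distStep Δ B M a r d q :=
  ((distStep_le_iff.1 le_rfl).2 hodd).resolve_left hgoal

theorem OrderAgree.distStep_lt_distStep (h : OrderAgree r d d') {q' : Q}
    (hR : rankStep Δ B M a r q = rankStep Δ B M a r q')
    (hlt : distStep Δ B M a r d q < distStep Δ B M a r d q') :
    distStep Δ B M a r d' q < distStep Δ B M a r d' q' := by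
  obtain ⟨t', ht'⟩ := h.exists_cut (rankStep Δ B M a r q) (distStep Δ B M a r d q)
  have le_cut : distStep Δ B M a r d' q ≤ t' :=
    distStep_le_iff.2 ((distStep_le_iff.1 le_rfl).mono fun w hrw => (ht' w hrw).1)
  refine le_cut.trans_lt (lt_of_not_ge fun hle => hlt.not_ge ?_)
  exact distStep_le_iff.2 ((distStep_le_iff.1 hle).mono fun w hrw => (ht' w (hrw.trans hR.symm)).2)

theorem OrderAgree.orderAgree_distStep (h : OrderAgree r d d') :
    OrderAgree (rankStep Δ B M a r) (distStep Δ B M a r d) (distStep Δ B M a r d') :=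
  fun _ _ hR => ⟨h.distStep_lt_distStep hR, h.symm.distStep_lt_distStep hR⟩

/-- Some state of rank `k` is farther from the target than every state of rank `k` after the
step. This depends only on the order of the distances within rank `k`. -/
def Overflow (Δ : Set (Q × A × Q)) (B : Set Q) (M : ℕ) (a : A) (r d : Q → ℕ) (k : ℕ) : Prop :=
  ∃ q, rankStep Δ B M a r q = k ∧ ∀ w, r w = k → d w < distStep Δ B M a r d q

theorem Overflow.congr (h : OrderAgree r d d') (hover : Overflow Δ B M a r d k) :
    Overflow Δ B M a r d' k := by
  obtain ⟨q, rfl, hlt⟩ := hover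
  refine ⟨q, rfl, fun w hrw => lt_of_not_ge fun hle => (hlt w hrw).not_ge ?_⟩
  exact distStep_le_iff.2 ((distStep_le_iff.1 hle).mono fun w' hrw' =>
    (h w' w (hrw'.trans hrw.symm)).2)

end DistStep

section Measure

variable {Q A : Type*} [Fintype Q] {Δ : Set (Q × A × Q)} {B : Set Q} {M : ℕ} {u : ℕ → A}
  {r δ : ℕ → Q → ℕ} {i t : ℕ} {q w : Q}

/-- `r` solves the backward recursion for ranks along `u`; it need not be the only solution. -/
structure IsRanking (Δ : Set (Q × A × Q)) (B : Set Q) (M : ℕ) (u : ℕ → A) (r : ℕ → Q → ℕ) :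
    Prop where
  rank_le : ∀ i q, r i q ≤ M
  rank_eq : ∀ i, r i = rankStep Δ B M (u i) (r (i + 1))

namespace IsRanking

theorem shift (h : IsRanking Δ B M u r) (N : ℕ) :
    IsRanking Δ B M (fun i => u (N + i)) fun i => r (N + i) :=
  ⟨fun i => h.rank_le (N + i), fun i => h.rank_eq (N + i)⟩

theorem succ_le (h : IsRanking Δ B M u r) (hw : (q, u i, w) ∈ Δ) : r (i + 1) w ≤ r i q :=
  h.rank_eq i ▸ le_rankStep hw

theorem exists_succ_of_ne_zero (h : IsRanking Δ B M u r) (hne : r i q ≠ 0) :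
    ∃ w, (q, u i, w) ∈ Δ ∧ (r (i + 1) w = r i q ∨
      r (i + 1) w + 1 = r i q ∧ Odd (r (i + 1) w) ∧ q ∈ B ∧ r (i + 1) w ≠ M) := by
  rw [h.rank_eq i] at hne ⊢
  exact exists_succ_of_rankStep_ne_zero hne

theorem notMem_of_odd (h : IsRanking Δ B M u r) (hodd : Odd (r i q)) (hM : r i q ≠ M) : q ∉ B := by
  rw [h.rank_eq i] at hodd hM
  exact notMem_of_odd_rankStep hodd hM

end IsRanking

/-- `q` has distance less than `t` from the target of its rank at position `i`. -/
def DistLT (Δ : Set (Q × A × Q)) (B : Set Q) (M : ℕ) (u : ℕ → A) (r : ℕ → Q → ℕ) :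
    ℕ → ℕ → Q → Prop
  | 0, _, _ => False
  | t + 1, i, q => Progresses Δ B M (u i) (r (i + 1)) (DistLT Δ B M u r t (i + 1)) q

theorem DistLT.succ : ∀ {t i : ℕ} {q : Q}, DistLT Δ B M u r t i q → DistLT Δ B M u r (t + 1) i q
  | _ + 1, _, _, h => Progresses.mono h fun _ _ hw => DistLT.succ hw

theorem monotone_distLT (i : ℕ) : Monotone fun t => DistLT Δ B M u r t i :=
  monotone_nat_of_le_succ fun _ _ => DistLT.succ

/-- `q` has a finite distance from the target of its rank at position `i`. -/
def HasDist (Δ : Set (Q × A × Q)) (B : Set Q) (M : ℕ) (u : ℕ → A) (r : ℕ → Q → ℕ) (i : ℕ)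
    (q : Q) : Prop :=
  ∃ t, DistLT Δ B M u r t i q

theorem hasDist_of_progresses
    (h : Progresses Δ B M (u i) (r (i + 1)) (HasDist Δ B M u r (i + 1)) q) :
    HasDist Δ B M u r i q := by
  obtain ⟨t, ht⟩ := h.exists_of_monotone (monotone_distLT (i + 1))
  exact ⟨t + 1, ht⟩

/-- A ranking together with the distances to the targets of the ranks. -/
structure IsMeasure (Δ : Set (Q × A × Q)) (B : Set Q) (M : ℕ) (u : ℕ → A) (r δ : ℕ → Q → ℕ) : Prop
    extends IsRanking Δ B M u r where
  dist_eq : ∀ i, δ i = distStep Δ B M (u i) (r (i + 1)) (δ (i + 1))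

theorem IsRanking.exists_isMeasure (h : IsRanking Δ B M u r)
    (hdist : ∀ i q, HasDist Δ B M u r i q) : ∃ δ, IsMeasure Δ B M u r δ := by
  let δ : ℕ → Q → ℕ := fun i q => sInf {t | DistLT Δ B M u r (t + 1) i q}
  have dist_lt_iff (i q t) : δ i q < t ↔ DistLT Δ B M u r t i q := by
    have nonempty : {t | DistLT Δ B M u r (t + 1) i q}.Nonempty :=
      (hdist i q).imp fun t ht => ht.succ
    refine ⟨fun hlt => monotone_distLT i hlt q (Nat.sInf_mem nonempty), fun ht => ?_⟩
    cases t with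
    | zero => exact ht.elim
    | succ t => exact Nat.lt_succ_of_le (Nat.sInf_le ht)
  refine ⟨δ, h, fun i => funext fun q => eq_of_forall_ge_iff fun t => ?_⟩
  rw [distStep_le_iff, ← Nat.lt_succ_iff, dist_lt_iff]
  exact progresses_congr fun w _ => (dist_lt_iff (i + 1) w t).symm

namespace IsMeasure

theorem shift (h : IsMeasure Δ B M u r δ) (N : ℕ) :
    IsMeasure Δ B M (fun i => u (N + i)) (fun i => r (N + i)) fun i => δ (N + i) :=
  ⟨h.toIsRanking.shift N, fun i => h.dist_eq (N + i)⟩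

theorem dist_lt_of_even (h : IsMeasure Δ B M u r δ) (hw : (q, u i, w) ∈ Δ)
    (hrw : r (i + 1) w = r i q) (heven : Even (r i q)) : δ (i + 1) w < δ i q := by
  rw [h.rank_eq i] at hrw heven
  rw [h.dist_eq i]
  exact dist_lt_distStep hw hrw heven

theorem isGoal_or_exists_dist_lt (h : IsMeasure Δ B M u r δ) (hodd : Odd (r i q)) :
    r i q = M ∧ q ∈ B ∨
      r i q ≠ M ∧ (r i q = 1 ∨ ∃ w, (q, u i, w) ∈ Δ ∧ r (i + 1) w + 1 = r i q) ∨
      ∃ w, (q, u i, w) ∈ Δ ∧ r (i + 1) w = r i q ∧ δ (i + 1) w < δ i q := by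
  rw [h.rank_eq i] at hodd ⊢
  rw [h.dist_eq i, ← or_assoc]
  exact or_iff_not_imp_left.2 (exists_dist_lt_distStep hodd)

theorem dist_lt_iff (h : IsMeasure Δ B M u r δ) :
    δ i q < t ↔ DistLT Δ B M u r t i q := by
  induction t generalizing i q with
  | zero => exact iff_of_false (Nat.not_lt_zero _) id
  | succ t ih =>
    rw [Nat.lt_succ_iff, h.dist_eq i, distStep_le_iff]
    exact progresses_congr fun w _ => ih

end IsMeasure

end Measure

section Uniqueness

variable {Q A : Type*} [Fintype Q] {Δ : Set (Q × A × Q)} {B : Set Q} {M : ℕ} {u : ℕ → A}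
  {r r' δ δ' : ℕ → Q → ℕ} {i k : ℕ} {q : Q}

theorem IsMeasure.rank_le_of_even (h : IsMeasure Δ B M u r δ) (h' : IsMeasure Δ B M u r' δ')
    (hk : Even k) (ih : ∀ j w, r' j w < k → r j w < k) (hq : r' i q = k) : r i q ≤ k := by
  induction hn : δ' i q using Nat.strong_induction_on generalizing i q with
  | _ n ihδ =>
    by_contra! hlt
    obtain ⟨w, hw, hrw⟩ := h.exists_succ_of_ne_zero (Nat.ne_zero_of_lt hlt)
    have rank'_eq : r' (i + 1) w = k := by
      refine (hq ▸ h'.succ_le hw).eq_of_not_lt fun hlt' => ?_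
      have := ih _ _ hlt'
      omega
    have rank_le : r (i + 1) w ≤ k :=
      ihδ _ (hn ▸ h'.dist_lt_of_even hw (rank'_eq.trans hq.symm) (hq ▸ hk)) rank'_eq rfl
    grind

theorem IsMeasure.not_lt_of_even_of_odd (h : IsMeasure Δ B M u r δ) (h' : IsMeasure Δ B M u r' δ')
    (hk : Odd k) (hkM : k ≠ M) (ih : ∀ j w, r' j w < k → r j w < k) (hq : r' i q = k)
    (heven : Even (r i q)) : ¬ k < r i q := by
  induction hn : δ i q using Nat.strong_induction_on generalizing i q with
  | _ n ihδ =>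
    intro hlt
    have notMem : q ∉ B := h'.notMem_of_odd (hq ▸ hk) (hq ▸ hkM)
    obtain ⟨w, hw, hrw | ⟨-, -, hB, -⟩⟩ := h.exists_succ_of_ne_zero (Nat.ne_zero_of_lt hlt)
    · have rank'_eq : r' (i + 1) w = k := by
        refine (hq ▸ h'.succ_le hw).eq_of_not_lt fun hlt' => ?_
        have := ih _ _ hlt'
        omega
      exact ihδ _ (hn ▸ h.dist_lt_of_even hw hrw heven) rank'_eq (hrw ▸ heven) rfl (hrw ▸ hlt)
    · exact notMem hB

theorem IsMeasure.rank_le_of_odd (h : IsMeasure Δ B M u r δ) (h' : IsMeasure Δ B M u r' δ')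
    (hk : Odd k) (hkM : k ≠ M) (ih : ∀ j w, r' j w < k → r j w < k) (hq : r' i q = k) :
    r i q ≤ k := by
  induction hn : δ i q using Nat.strong_induction_on generalizing i q with
  | _ n ihδ =>
    by_contra! hlt
    have notMem : q ∉ B := h'.notMem_of_odd (hq ▸ hk) (hq ▸ hkM)
    have rank'_eq : ∀ w, (q, u i, w) ∈ Δ → k ≤ r (i + 1) w → r' (i + 1) w = k := fun w hw hle =>
      (hq ▸ h'.succ_le hw).eq_of_not_lt fun hlt' => (ih _ _ hlt').not_ge hle
    have odd_rank : Odd (r i q) := Nat.not_even_iff_odd.1 fun heven =>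
      h.not_lt_of_even_of_odd h' hk hkM ih hq heven hlt
    obtain ⟨-, hB⟩ | ⟨-, hone | ⟨w, hw, hrw⟩⟩ | ⟨w, hw, hrw, hδ⟩ :=
      h.isGoal_or_exists_dist_lt odd_rank
    · exact notMem hB
    · grind
    · exact h.not_lt_of_even_of_odd h' hk hkM ih (rank'_eq w hw (by omega)) (by grind) (by grind)
    · have := ihδ _ (hn ▸ hδ) (rank'_eq w hw (by omega)) rfl
      omega

theorem IsMeasure.rank_le_rank (h : IsMeasure Δ B M u r δ) (h' : IsMeasure Δ B M u r' δ')
    (i : ℕ) (q : Q) : r i q ≤ r' i q := by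
  induction hk : r' i q using Nat.strong_induction_on generalizing i q with
  | _ k ih =>
    have rank_lt : ∀ j w, r' j w < k → r j w < k := fun j w hlt => (ih _ hlt j w rfl).trans_lt hlt
    rcases eq_or_ne k M with rfl | hkM
    · exact h.rank_le i q
    rcases Nat.even_or_odd k with heven | hodd
    · exact h.rank_le_of_even h' heven rank_lt hk
    · exact h.rank_le_of_odd h' hodd hkM rank_lt hk

theorem IsMeasure.rank_unique (h : IsMeasure Δ B M u r δ) (h' : IsMeasure Δ B M u r' δ') : r = r' :=
  funext fun i => funext fun q => (h.rank_le_rank h' i q).antisymm (h'.rank_le_rank h i q)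

end Uniqueness

section Acceptance

variable {Q A : Type*} {Δ : Set (Q × A × Q)} {B : Set Q} {M : ℕ} {u : ℕ → A} {q : Q}

theorem nbaAccepts_iff_exists_succ :
    NBAAccepts Δ B u q ↔ ∃ w, (q, u 0, w) ∈ Δ ∧ NBAAccepts Δ B (fun i => u (i + 1)) w := by
  constructor
  · rintro ⟨p, rfl, hp, hB⟩
    refine ⟨p 1, hp 0, fun i => p (i + 1), rfl, fun i => hp (i + 1), fun m => ?_⟩
    obtain ⟨i, hi, hiB⟩ := hB (m + 1)
    obtain ⟨i, rfl⟩ := Nat.exists_eq_add_of_le' (Nat.one_le_of_lt hi)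
    exact ⟨i, Nat.le_of_succ_le_succ hi, hiB⟩
  · rintro ⟨_, hw, p, rfl, hp, hB⟩
    refine ⟨fun i => i.casesOn q p, rfl, fun i => ?_, fun m => ?_⟩
    · cases i with
      | zero => exact hw
      | succ i => exact hp i
    · obtain ⟨i, hi, hiB⟩ := hB m
      exact ⟨i + 1, by omega, hiB⟩

theorem nbaAccepts_equiv {Q' : Type*} (e : Q ≃ Q') :
    NBAAccepts {x : Q' × A × Q' | (e.symm x.1, x.2.1, e.symm x.2.2) ∈ Δ} (e.symm ⁻¹' B) u (e q) ↔
      NBAAccepts Δ B u q := by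
  constructor
  · rintro ⟨p, hq, hp, hB⟩
    exact ⟨fun i => e.symm (p i), by simp [hq], hp, hB⟩
  · rintro ⟨p, rfl, hp, hB⟩
    exact ⟨fun i => e (p i), rfl, by simpa using hp, by simpa using hB⟩

variable [Fintype Q] {r δ : ℕ → Q → ℕ}

theorem IsMeasure.exists_succ_of_eq_top (h : IsMeasure Δ B M u r δ) (hM : Odd M) {i : ℕ}
    (hq : r i q = M) :
    ∃ w, (q, u i, w) ∈ Δ ∧ r (i + 1) w = M ∧ (q ∈ B ∨ δ (i + 1) w < δ i q) := by
  obtain ⟨-, hB⟩ | ⟨hne, -⟩ | ⟨w, hw, hrw, hδ⟩ := h.isGoal_or_exists_dist_lt (hq ▸ hM)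
  · rw [h.rank_eq i, rankStep_eq_top_iff hM (h.rank_le _)] at hq
    obtain ⟨w, hw, hrw⟩ := hq
    exact ⟨w, hw, hrw, Or.inl hB⟩
  · exact absurd hq hne
  · exact ⟨w, hw, hrw.trans hq, Or.inr hδ⟩

theorem IsMeasure.nbaAccepts_of_eq_top (h : IsMeasure Δ B M u r δ) (hM : Odd M)
    (hq : r 0 q = M) : NBAAccepts Δ B u q := by
  choose! next next_mem next_rank next_dist using
    fun i q (hq : r i q = M) => h.exists_succ_of_eq_top hM hq
  let p : ℕ → Q := fun i => i.rec q next
  have rank_p : ∀ i, r i (p i) = M := fun i => by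
    induction i with
    | zero => exact hq
    | succ i ih => exact next_rank i (p i) ih
  refine ⟨p, rfl, fun i => next_mem i (p i) (rank_p i), fun m => ?_⟩
  obtain ⟨i, hi, hle⟩ := exists_ge_le_succ (fun i => δ i (p i)) m
  exact ⟨i, hi, (next_dist i (p i) (rank_p i)).resolve_right hle.not_gt⟩

theorem IsMeasure.eq_top_of_nbaAccepts (h : IsMeasure Δ B M u r δ) (hacc : NBAAccepts Δ B u q) :
    r 0 q = M := by
  obtain ⟨p, rfl, hp, hB⟩ := hacc
  have antitone_rank : Antitone fun i => r i (p i) :=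
    antitone_nat_of_succ_le fun i => h.succ_le (hp i)
  obtain ⟨N, hN⟩ := WellFoundedLT.antitone_chain_condition antitone_rank
  by_contra hne
  have rank_ne_top : r N (p N) ≠ M :=
    ((antitone_rank N.zero_le).trans_lt ((h.rank_le 0 (p 0)).lt_of_ne hne)).ne
  rcases Nat.even_or_odd (r N (p N)) with heven | hodd
  · obtain ⟨i, hi, hle⟩ := exists_ge_le_succ (fun i => δ i (p i)) N
    have rank_succ : r (i + 1) (p (i + 1)) = r i (p i) :=
      (hN (i + 1) (Nat.le_succ_of_le hi)).symm.trans (hN i hi)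
    exact hle.not_gt (h.dist_lt_of_even (hp i) rank_succ (hN i hi ▸ heven))
  · obtain ⟨i, hi, hiB⟩ := hB N
    exact h.notMem_of_odd (hN i hi ▸ hodd) (hN i hi ▸ rank_ne_top) hiB

theorem IsMeasure.eq_top_iff_nbaAccepts (h : IsMeasure Δ B M u r δ) (hM : Odd M) :
    r 0 q = M ↔ NBAAccepts Δ B u q :=
  ⟨h.nbaAccepts_of_eq_top hM, h.eq_top_of_nbaAccepts⟩

end Acceptance

section Gapless

variable {Q A : Type*} {Δ : Set (Q × A × Q)} {B : Set Q} {M : ℕ}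

/-- No odd number is skipped by the ranks below the top rank `M`. -/
structure Gapless (M : ℕ) (r : Q → ℕ) : Prop where
  rank_le : ∀ q, r q ≤ M
  exists_rank_eq : ∀ {q k}, r q ≠ M → Odd k → k < r q → ∃ q', r q' = k

variable [Fintype Q]

/-- The odd ranks below the top rank `M` that occur in `r`. -/
def oddRanks (M : ℕ) (r : Q → ℕ) : Finset ℕ :=
  {k ∈ Finset.univ.image r | Odd k ∧ k < M}

theorem mem_oddRanks {r : Q → ℕ} {k : ℕ} : k ∈ oddRanks M r ↔ (∃ q, r q = k) ∧ Odd k ∧ k < M := by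
  simp [oddRanks]

theorem oddRanks_rankStep_subset (a : A) (r : Q → ℕ) :
    oddRanks M (rankStep Δ B M a r) ⊆ oddRanks M r := by
  intro k hk
  obtain ⟨⟨q, rfl⟩, hodd, hlt⟩ := mem_oddRanks.1 hk
  obtain ⟨w, -, hw⟩ := exists_succ_of_odd_rankStep hodd
  exact mem_oddRanks.2 ⟨⟨w, hw⟩, hodd, hlt⟩

theorem card_oddRanks_le (M : ℕ) (r : Q → ℕ) : #(oddRanks M r) ≤ Fintype.card Q :=
  (Finset.card_filter_le _ _).trans Finset.card_image_le

theorem Gapless.rankStep {r : Q → ℕ} (h : Gapless M r) {a : A}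
    (hsub : oddRanks M r ⊆ oddRanks M (rankStep Δ B M a r)) : Gapless M (rankStep Δ B M a r) := by
  refine ⟨rankStep_le_top h.rank_le, fun {q k} hne hodd hlt => ?_⟩
  have lt_top := (rankStep_le_top (Δ := Δ) (B := B) (a := a) h.rank_le q).lt_of_ne hne
  obtain ⟨w, -, hrw⟩ := exists_succ_of_rankStep_ne_zero (Nat.ne_zero_of_lt hlt)
  have exists_rank_eq : ∃ q', r q' = k := by
    rcases eq_or_ne (r w) k with heq | hne'
    · exact ⟨w, heq⟩
    · exact h.exists_rank_eq (q := w) (by omega) hodd (by omega)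
  exact (mem_oddRanks.1 (hsub (mem_oddRanks.2 ⟨exists_rank_eq, hodd, hlt.trans lt_top⟩))).1

variable {u : ℕ → A} {r δ : ℕ → Q → ℕ}

theorem IsMeasure.exists_rank_eq_pred (h : IsMeasure Δ B M u r δ) {i k : ℕ} {q : Q}
    (hq : r i q = k + 1) (hM : k + 1 ≠ M) (hk : k ≠ 0) : ∃ j w, i ≤ j ∧ r j w = k := by
  induction hn : δ i q using Nat.strong_induction_on generalizing i q with
  | _ n ih =>
    suffices hsucc : ∃ w, r (i + 1) w = k ∨ r (i + 1) w = k + 1 ∧ δ (i + 1) w < n by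
      obtain ⟨w, hw | ⟨hw, hδ⟩⟩ := hsucc
      · exact ⟨i + 1, w, i.le_succ, hw⟩
      · obtain ⟨j, w', hj, hw'⟩ := ih _ hδ hw rfl
        exact ⟨j, w', i.le_succ.trans hj, hw'⟩
    rcases Nat.even_or_odd (r i q) with heven | hodd
    · obtain ⟨w, hw, hrw | ⟨hrw, -⟩⟩ := h.exists_succ_of_ne_zero (i := i) (q := q) (by omega)
      · exact ⟨w, Or.inr ⟨hrw.trans hq, hn ▸ h.dist_lt_of_even hw hrw heven⟩⟩
      · exact ⟨w, Or.inl (by omega)⟩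
    · obtain ⟨heq, -⟩ | ⟨-, hone | ⟨w, -, hrw⟩⟩ | ⟨w, -, hrw, hδ⟩ := h.isGoal_or_exists_dist_lt hodd
      · omega
      · omega
      · exact ⟨w, Or.inl (by omega)⟩
      · exact ⟨w, Or.inr ⟨hrw.trans hq, hn ▸ hδ⟩⟩

theorem IsMeasure.exists_rank_eq (h : IsMeasure Δ B M u r δ) {i k : ℕ} {q : Q}
    (hlt : k < r i q) (hM : r i q ≠ M) (hk : k ≠ 0) : ∃ j w, i ≤ j ∧ r j w = k := by
  induction hn : r i q generalizing i q with
  | zero => omega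
  | succ n ih =>
    have := h.rank_le i q
    obtain ⟨j, w, hj, hw⟩ := h.exists_rank_eq_pred hn (by omega) (by omega)
    rcases eq_or_ne n k with rfl | hne
    · exact ⟨j, w, hj, hw⟩
    · obtain ⟨j', w', hj', hw'⟩ := ih (i := j) (q := w) (by omega) (by omega) hw
      exact ⟨j', w', hj.trans hj', hw'⟩

theorem exists_forall_ge_oddRanks_eq (hmono : Monotone fun i => oddRanks M (r i)) :
    ∃ N, ∀ i, N ≤ i → oddRanks M (r N) = oddRanks M (r i) := by
  obtain ⟨N, hN⟩ := exists_forall_ge_eq_of_monotone_of_le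
    (fun i j hij => Finset.card_le_card (hmono hij)) fun i => card_oddRanks_le M (r i)
  exact ⟨N, fun i hi => Finset.eq_of_subset_of_card_le (hmono hi) (hN i hi).ge⟩

theorem IsMeasure.eventually_gapless (h : IsMeasure Δ B M u r δ) :
    ∀ᶠ i in atTop, Gapless M (r i) := by
  obtain ⟨N, hN⟩ := exists_forall_ge_oddRanks_eq (M := M) (r := r) <|
    monotone_nat_of_le_succ fun i => h.rank_eq i ▸ oddRanks_rankStep_subset _ _
  filter_upwards [eventually_ge_atTop N] with i hi
  refine ⟨h.rank_le i, fun {q k} hne hodd hlt => ?_⟩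
  obtain ⟨j, w, hj, hw⟩ := h.exists_rank_eq hlt hne hodd.pos.ne'
  have mem : k ∈ oddRanks M (r j) := mem_oddRanks.2 ⟨⟨w, hw⟩, hodd, hlt.trans_le (h.rank_le i q)⟩
  rw [← hN j (hi.trans hj), hN i hi] at mem
  exact (mem_oddRanks.1 mem).1

end Gapless

section RankLT

variable {Q A : Type*} {Δ : Set (Q × A × Q)} {B : Set Q} {M : ℕ} {u : ℕ → A} {X : ℕ → Set Q}
  {i k : ℕ} {q w : Q}

/-- Every run on `u` from `q` at position `i` is finite or reaches `X`. -/
inductive Inevitable (Δ : Set (Q × A × Q)) (u : ℕ → A) (X : ℕ → Set Q) : ℕ → Q → Prop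
  | of_mem {i : ℕ} {q : Q} : q ∈ X i → Inevitable Δ u X i q
  | of_succ {i : ℕ} {q : Q} : (∀ w, (q, u i, w) ∈ Δ → Inevitable Δ u X (i + 1) w) →
      Inevitable Δ u X i q

/-- No run on `u` from `q` at position `i` visits `B` outside `X`. This is a greatest fixed point,
so it is witnessed by an invariant `Y`. -/
def AvoidsOutside (Δ : Set (Q × A × Q)) (B : Set Q) (u : ℕ → A) (X : ℕ → Set Q) (i : ℕ) (q : Q) :
    Prop :=
  ∃ Y : ℕ → Set Q, q ∈ Y i ∧
    ∀ j, ∀ x ∈ Y j, (x ∈ X j ∨ x ∉ B) ∧ ∀ w, (x, u j, w) ∈ Δ → w ∈ Y (j + 1)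

theorem avoidsOutside_iff :
    AvoidsOutside Δ B u X i q ↔ (q ∈ X i ∨ q ∉ B) ∧
      ∀ w, (q, u i, w) ∈ Δ → AvoidsOutside Δ B u X (i + 1) w := by
  have unroll : ∀ {i q}, AvoidsOutside Δ B u X i q → (q ∈ X i ∨ q ∉ B) ∧
      ∀ w, (q, u i, w) ∈ Δ → AvoidsOutside Δ B u X (i + 1) w := fun ⟨Y, hq, hY⟩ =>
    ⟨(hY _ _ hq).1, fun w hw => ⟨Y, (hY _ _ hq).2 w hw, hY⟩⟩
  refine ⟨unroll, fun h => ⟨fun j => {x | (x ∈ X j ∨ x ∉ B) ∧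
    ∀ w, (x, u j, w) ∈ Δ → AvoidsOutside Δ B u X (j + 1) w}, h, fun j x hx => ?_⟩⟩
  exact ⟨hx.1, fun w hw => unroll (hx.2 w hw)⟩

/-- The states of rank less than `k`: alternately add the states that inevitably reach the
previous stage, and those that avoid `B` outside of it. -/
def RankLT (Δ : Set (Q × A × Q)) (B : Set Q) (u : ℕ → A) : ℕ → ℕ → Set Q
  | 0, _ => ∅
  | k + 1, i => {q | (Even k → Inevitable Δ u (RankLT Δ B u k) i q) ∧
      (Odd k → AvoidsOutside Δ B u (RankLT Δ B u k) i q)}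

theorem mem_rankLT_succ_of_even (hk : Even k) :
    q ∈ RankLT Δ B u (k + 1) i ↔ Inevitable Δ u (RankLT Δ B u k) i q := by
  simp [RankLT, hk, Nat.not_odd_iff_even.2 hk]

theorem mem_rankLT_succ_of_odd (hk : Odd k) :
    q ∈ RankLT Δ B u (k + 1) i ↔ AvoidsOutside Δ B u (RankLT Δ B u k) i q := by
  simp [RankLT, hk, Nat.not_even_iff_odd.2 hk]

theorem succ_mem_rankLT (hq : q ∈ RankLT Δ B u k i) (hw : (q, u i, w) ∈ Δ) :
    w ∈ RankLT Δ B u k (i + 1) := by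
  induction k with
  | zero => exact hq.elim
  | succ k ih =>
    rcases Nat.even_or_odd k with hk | hk
    · rw [mem_rankLT_succ_of_even hk] at hq ⊢
      obtain hmem | hsucc := hq
      · exact .of_mem (ih hmem)
      · exact hsucc w hw
    · rw [mem_rankLT_succ_of_odd hk] at hq ⊢
      exact (avoidsOutside_iff.1 hq).2 w hw

theorem rankLT_mono : Monotone (RankLT Δ B u) := by
  refine monotone_nat_of_le_succ fun k i q hq => ?_
  rcases Nat.even_or_odd k with hk | hk
  · exact (mem_rankLT_succ_of_even hk).2 (.of_mem hq)
  · exact (mem_rankLT_succ_of_odd hk).2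
      ⟨RankLT Δ B u k, hq, fun j x hx => ⟨Or.inl hx, fun w => succ_mem_rankLT hx⟩⟩

theorem mem_rankLT_iff_of_odd (hk : Odd k) :
    q ∈ RankLT Δ B u k i ↔ ∀ w, (q, u i, w) ∈ Δ → w ∈ RankLT Δ B u k (i + 1) := by
  refine ⟨fun hq w => succ_mem_rankLT hq, fun h => ?_⟩
  obtain ⟨k, rfl⟩ := Nat.exists_eq_add_of_le' hk.pos
  have heven : Even k := by simpa [Nat.odd_add_one] using hk
  exact (mem_rankLT_succ_of_even heven).2 <|
    .of_succ fun w hw => (mem_rankLT_succ_of_even heven).1 (h w hw)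

theorem mem_rankLT_succ_iff :
    q ∈ RankLT Δ B u (k + 1) i ↔ ∀ w, (q, u i, w) ∈ Δ →
      w ∈ RankLT Δ B u (k + 1) (i + 1) ∧ (Odd k → q ∈ B → w ∈ RankLT Δ B u k (i + 1)) := by
  rcases Nat.even_or_odd k with hk | hk
  · simp only [mem_rankLT_iff_of_odd hk.add_one (q := q), Nat.not_odd_iff_even.2 hk,
      false_imp_iff, and_true]
  · simp only [mem_rankLT_succ_of_odd hk, avoidsOutside_iff (q := q),
      mem_rankLT_iff_of_odd hk (q := q), hk, true_imp_iff]
    grind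

theorem subset_rankLT_succ_of_odd (hk : Odd k) {S : ℕ → Set Q}
    (hS : ∀ j, ∀ x ∈ S j, x ∉ B ∧
      ∀ w, (x, u j, w) ∈ Δ → w ∈ S (j + 1) ∨ w ∈ RankLT Δ B u (k + 1) (j + 1)) (i : ℕ) :
    S i ⊆ RankLT Δ B u (k + 1) i := by
  refine fun q hq => (mem_rankLT_succ_of_odd hk).2
    ⟨fun j => S j ∪ RankLT Δ B u (k + 1) j, Or.inl hq, fun j x hx => ?_⟩
  rcases hx with hx | hx
  · exact ⟨Or.inr (hS j x hx).1, (hS j x hx).2⟩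
  · exact ⟨(avoidsOutside_iff.1 ((mem_rankLT_succ_of_odd hk).1 hx)).1,
      fun w hw => Or.inr (succ_mem_rankLT hx hw)⟩

theorem rankLT_add_three_le_of_odd (hk : Odd k) (h : RankLT Δ B u (k + 1) ≤ RankLT Δ B u k) :
    RankLT Δ B u (k + 3) ≤ RankLT Δ B u (k + 2) := by
  have stage_two_le : RankLT Δ B u (k + 2) ≤ RankLT Δ B u k := by
    intro i q hq
    induction (mem_rankLT_succ_of_even hk.add_one).1 hq with
    | of_mem hmem => exact h _ hmem
    | of_succ _ ih =>
      exact (mem_rankLT_iff_of_odd hk).2 fun w hw => ih w hw (succ_mem_rankLT hq hw)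
  refine le_trans (fun i q hq => ?_) (rankLT_mono (k + 1).le_succ)
  obtain ⟨Y, hqY, hY⟩ := (mem_rankLT_succ_of_odd hk.add_one.add_one).1 hq
  exact (mem_rankLT_succ_of_odd hk).2
    ⟨Y, hqY, fun j x hx => ⟨(hY j x hx).1.imp_left fun hx => stage_two_le j hx, (hY j x hx).2⟩⟩

end RankLT

section Existence

variable {Q A : Type*} {Δ : Set (Q × A × Q)} {B : Set Q} {M : ℕ} {u : ℕ → A} {i k : ℕ} {q : Q}

theorem eventually_exists_mem_rankLT_diff (hk : Odd k)
    (h : ¬ RankLT Δ B u (k + 1) ≤ RankLT Δ B u k) :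
    ∀ᶠ i in atTop, ∃ q, q ∈ RankLT Δ B u (k + 1) i ∧ q ∉ RankLT Δ B u k i := by
  simp only [Pi.le_def, not_forall, Set.not_subset] at h
  obtain ⟨N, hN⟩ := h
  filter_upwards [eventually_ge_atTop N] with i hi
  induction i, hi using Nat.le_induction with
  | base => exact hN
  | succ i _ ih =>
    obtain ⟨q, hq, hq'⟩ := ih
    rw [mem_rankLT_iff_of_odd hk] at hq'
    push Not at hq'
    obtain ⟨w, hw, hw'⟩ := hq'
    exact ⟨w, succ_mem_rankLT hq hw, hw'⟩

theorem not_rankLT_le_of_le (n : ℕ) (h : ¬ RankLT Δ B u (2 * n + 2) ≤ RankLT Δ B u (2 * n + 1)) :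
    ∀ j ≤ n, ¬ RankLT Δ B u (2 * j + 2) ≤ RankLT Δ B u (2 * j + 1) := by
  intro j hj
  induction hj using Nat.decreasingInduction with
  | self => exact h
  | of_succ j _ ih => exact fun hle => ih (rankLT_add_three_le_of_odd (odd_two_mul_add_one j) hle)

/-- The rank of `q` at position `i`, capped at `M`. -/
noncomputable def trueRank (Δ : Set (Q × A × Q)) (B : Set Q) (M : ℕ) (u : ℕ → A) (i : ℕ) (q : Q) :
    ℕ :=
  sInf {k | k = M ∨ q ∈ RankLT Δ B u (k + 1) i}

theorem trueRank_lt_iff (hk : k ≤ M) : trueRank Δ B M u i q < k ↔ q ∈ RankLT Δ B u k i := by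
  have trueRank_mem : trueRank Δ B M u i q = M ∨ q ∈ RankLT Δ B u (trueRank Δ B M u i q + 1) i :=
    Nat.sInf_mem (s := {k | k = M ∨ q ∈ RankLT Δ B u (k + 1) i}) ⟨M, Or.inl rfl⟩
  constructor
  · intro hlt
    exact rankLT_mono hlt i (trueRank_mem.resolve_left (hlt.trans_le hk).ne)
  · intro hq
    cases k with
    | zero => exact hq.elim
    | succ k => exact Nat.lt_succ_of_le (Nat.sInf_le (Or.inr hq))

variable [Fintype Q]

-- Each stage that adds a state at all adds one at every late position, so there are at most
-- `card Q` of them.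
theorem rankLT_stationary (Δ : Set (Q × A × Q)) (B : Set Q) (u : ℕ → A) :
    RankLT Δ B u (2 * Fintype.card Q + 2) ≤ RankLT Δ B u (2 * Fintype.card Q + 1) := by
  by_contra hne
  have eventually_new : ∀ᶠ i in atTop, ∀ j : Fin (Fintype.card Q + 1),
      ∃ q, q ∈ RankLT Δ B u (2 * j + 2) i ∧ q ∉ RankLT Δ B u (2 * j + 1) i :=
    eventually_all.2 fun j => eventually_exists_mem_rankLT_diff (odd_two_mul_add_one _)
      (not_rankLT_le_of_le _ hne j (Nat.lt_succ_iff.1 j.2))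
  obtain ⟨i, hi⟩ := eventually_new.exists
  choose f hf hf' using hi
  have f_ne : ∀ j j', j < j' → f j ≠ f j' := fun j j' hlt heq =>
    hf' j' (heq ▸ rankLT_mono (by have : (j : ℕ) < j' := hlt; omega) i (hf j))
  have := Fintype.card_le_of_injective f (.of_lt_imp_ne f_ne)
  simp at this

theorem isRanking_trueRank (Δ : Set (Q × A × Q)) (B : Set Q) (M : ℕ) (u : ℕ → A) :
    IsRanking Δ B M u (trueRank Δ B M u) := by
  have rank_le : ∀ i q, trueRank Δ B M u i q ≤ M := fun i q => Nat.sInf_le (Or.inl rfl)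
  refine ⟨rank_le, fun i => funext fun q => eq_of_forall_ge_iff fun k => ?_⟩
  rcases lt_or_ge k M with hk | hk
  · rw [← Nat.lt_succ_iff, trueRank_lt_iff hk, mem_rankLT_succ_iff, rankStep_le_iff hk.ne]
    simp only [← trueRank_lt_iff hk, ← trueRank_lt_iff hk.le, Nat.lt_succ_iff]
  · exact iff_of_true ((rank_le i q).trans hk) ((rankStep_le_top (rank_le _) q).trans hk)

theorem hasDist_trueRank_of_even (hk : Even k) (hM : k < M) (hq : trueRank Δ B M u i q = k) :
    HasDist Δ B M u (trueRank Δ B M u) i q := by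
  have inevitable : Inevitable Δ u (RankLT Δ B u k) i q :=
    (mem_rankLT_succ_of_even hk).1 ((trueRank_lt_iff hM).1 (hq ▸ Nat.lt_succ_self k))
  induction inevitable with
  | of_mem hmem => exact absurd hq ((trueRank_lt_iff hM.le).2 hmem).ne
  | @of_succ i q _ ih =>
    have rank_eq := congrFun ((isRanking_trueRank Δ B M u).rank_eq i) q
    rw [hq] at rank_eq
    refine hasDist_of_progresses
      ⟨fun _ w hw hrw => ih w hw (hrw.trans rank_eq.symm), fun hodd => ?_⟩
    exact absurd hk (Nat.not_even_iff_odd.2 (rank_eq ▸ hodd))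

theorem not_isGoal_of_not_hasDist {r : ℕ → Q → ℕ} (h : IsRanking Δ B M u r) (hodd : Odd (r i q))
    (hstuck : ¬ HasDist Δ B M u r i q) :
    (r i q = M → q ∉ B) ∧
      (r i q ≠ M → r i q ≠ 1 ∧ ∀ w, (q, u i, w) ∈ Δ → r (i + 1) w + 1 ≠ r i q) ∧
      ∀ w, (q, u i, w) ∈ Δ → r (i + 1) w = r i q → ¬ HasDist Δ B M u r (i + 1) w := by
  have not_progresses := mt hasDist_of_progresses hstuck
  rw [Progresses, IsGoal, ← h.rank_eq i] at not_progresses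
  simp only [Nat.not_even_iff_odd.2 hodd, hodd, true_imp_iff, false_imp_iff,
    true_and] at not_progresses
  grind

theorem mem_rankLT_of_not_hasDist {l : ℕ} (hl : Odd l) (hk : Odd k)
    (hsucc : ∀ j x, trueRank Δ B M u j x = k → ¬ HasDist Δ B M u (trueRank Δ B M u) j x →
      ∀ w, (x, u j, w) ∈ Δ → trueRank Δ B M u (j + 1) w ≠ k → w ∈ RankLT Δ B u (l + 1) (j + 1))
    (hq : trueRank Δ B M u i q = k) (hstuck : ¬ HasDist Δ B M u (trueRank Δ B M u) i q) :
    q ∈ RankLT Δ B u (l + 1) i := by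
  refine subset_rankLT_succ_of_odd hl (S := fun j => {x | trueRank Δ B M u j x = k ∧
    ¬ HasDist Δ B M u (trueRank Δ B M u) j x}) ?_ i ⟨hq, hstuck⟩
  rintro j x ⟨rfl, hx⟩
  obtain ⟨notMem_of_top, -, succ_stuck⟩ :=
    not_isGoal_of_not_hasDist (isRanking_trueRank Δ B M u) hk hx
  refine ⟨fun hB => ?_, fun w hw => ?_⟩
  · exact (isRanking_trueRank Δ B M u).notMem_of_odd hk (fun htop => notMem_of_top htop hB) hB
  · by_cases hrw : trueRank Δ B M u (j + 1) w = trueRank Δ B M u j x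
    · exact Or.inl ⟨hrw, succ_stuck w hw hrw⟩
    · exact Or.inr (hsucc j x rfl hx w hw hrw)

theorem hasDist_trueRank_of_odd_of_ne (hk : Odd k) (hM : k ≠ M) (hq : trueRank Δ B M u i q = k) :
    HasDist Δ B M u (trueRank Δ B M u) i q := by
  by_contra hstuck
  have ranking := isRanking_trueRank Δ B M u
  have no_goal {j x} (hx : trueRank Δ B M u j x = k)
      (hstuck : ¬ HasDist Δ B M u (trueRank Δ B M u) j x) :=
    (not_isGoal_of_not_hasDist ranking (hx ▸ hk) hstuck).2.1 (hx ▸ hM)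
  have k_le : k ≤ M := hq ▸ ranking.rank_le i q
  obtain ⟨l, rfl⟩ : ∃ l, k = l + 2 := Nat.exists_eq_add_of_le' (by
    have := (no_goal hq hstuck).1
    have := hk.pos
    omega)
  have stage_le : l + 1 ≤ M := by omega
  have mem := mem_rankLT_of_not_hasDist (l := l) (by grind) hk (fun j x hx hxstuck w hw hne => by
    have := (no_goal hx hxstuck).2 w hw
    have := ranking.succ_le hw
    exact (trueRank_lt_iff stage_le).1 (by omega)) hq hstuck
  rw [← trueRank_lt_iff stage_le, hq] at mem
  omega

theorem hasDist_trueRank_of_eq_top (hM : Odd M) (hstat : RankLT Δ B u (M + 1) ≤ RankLT Δ B u M)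
    (hq : trueRank Δ B M u i q = M) : HasDist Δ B M u (trueRank Δ B M u) i q := by
  by_contra hstuck
  have mem := mem_rankLT_of_not_hasDist hM hM (fun j x _ _ w _ hne =>
    rankLT_mono M.le_succ _ ((trueRank_lt_iff le_rfl).1
      (((isRanking_trueRank Δ B M u).rank_le _ w).lt_of_ne hne))) hq hstuck
  exact hq.not_lt ((trueRank_lt_iff le_rfl).2 (hstat i mem))

theorem exists_isMeasure (Δ : Set (Q × A × Q)) (B : Set Q) (u : ℕ → A) :
    ∃ r δ, IsMeasure Δ B (2 * Fintype.card Q + 1) u r δ := by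
  have odd_top := odd_two_mul_add_one (Fintype.card Q)
  refine ⟨_, (isRanking_trueRank Δ B _ u).exists_isMeasure fun i q => ?_⟩
  have rank_le := (isRanking_trueRank Δ B (2 * Fintype.card Q + 1) u).rank_le i q
  rcases rank_le.eq_or_lt with htop | hlt
  · exact hasDist_trueRank_of_eq_top odd_top (rankLT_stationary Δ B u) htop
  · rcases Nat.even_or_odd (trueRank Δ B (2 * Fintype.card Q + 1) u i q) with heven | hodd
    · exact hasDist_trueRank_of_even heven hlt rfl
    · exact hasDist_trueRank_of_odd_of_ne hodd hlt.ne rfl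

end Existence

section ApproxMeasure

variable {Q A : Type*} [Fintype Q] {Δ : Set (Q × A × Q)} {B : Set Q} {M : ℕ} {u : ℕ → A}
  {r d δ : ℕ → Q → ℕ} {i k : ℕ} {q q' : Q}

/-- A ranking with distances that satisfy the recursion of a measure only up to their order within
each rank. -/
structure IsApproxMeasure (Δ : Set (Q × A × Q)) (B : Set Q) (M : ℕ) (u : ℕ → A)
    (r d : ℕ → Q → ℕ) : Prop extends IsRanking Δ B M u r where
  dist_agree : ∀ i, OrderAgree (r i) (d i) (distStep Δ B M (u i) (r (i + 1)) (d (i + 1)))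

theorem IsApproxMeasure.exists_cut (h : IsApproxMeasure Δ B M u r d) (t i k : ℕ) :
    ∃ c, ∀ q, r i q = k → (DistLT Δ B M u r t i q ↔ d i q < c) := by
  induction t generalizing i with
  | zero => exact ⟨0, fun q _ => iff_of_false id (Nat.not_lt_zero _)⟩
  | succ t ih =>
    obtain ⟨c, hc⟩ := ih (i + 1)
    obtain ⟨c', hc'⟩ := (h.dist_agree i).symm.exists_cut k (c + 1)
    refine ⟨c', fun q hq => ?_⟩
    rw [← hc' q hq, Nat.lt_succ_iff, distStep_le_iff]
    exact progresses_congr fun w hw => hc w (by rw [hw, ← h.rank_eq i, hq])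

theorem IsApproxMeasure.hasDist_of_le (h : IsApproxMeasure Δ B M u r d)
    (hq' : HasDist Δ B M u r i q') (hr : r i q = r i q') (hle : d i q ≤ d i q') :
    HasDist Δ B M u r i q := by
  obtain ⟨t, ht⟩ := hq'
  obtain ⟨c, hc⟩ := h.exists_cut t i (r i q')
  exact ⟨t, (hc q hr).2 (hle.trans_lt ((hc q' rfl).1 ht))⟩

theorem IsApproxMeasure.exists_succ_not_hasDist (h : IsApproxMeasure Δ B M u r d)
    (hq : ¬ HasDist Δ B M u r i q) :
    ∃ w, r (i + 1) w = r i q ∧ ¬ HasDist Δ B M u r (i + 1) w ∧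
      distStep Δ B M (u i) (r (i + 1)) (d (i + 1)) q = d (i + 1) w + 1 := by
  by_contra! hne
  set c := distStep Δ B M (u i) (r (i + 1)) (d (i + 1)) q
  have progresses_lt : Progresses Δ B M (u i) (r (i + 1)) (fun w => d (i + 1) w < c) q :=
    distStep_le_iff.1 le_rfl
  by_cases hmax : ∃ w, r (i + 1) w = r i q ∧ c = d (i + 1) w + 1
  · obtain ⟨w, hrw, hdw⟩ := hmax
    have hasDist_w : HasDist Δ B M u r (i + 1) w := not_not.1 fun hw => hne w hrw hw hdw
    refine hq (hasDist_of_progresses (progresses_lt.mono fun w' hrw' hlt => ?_))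
    rw [← h.rank_eq i] at hrw'
    exact h.hasDist_of_le hasDist_w (hrw'.trans hrw.symm) (by omega)
  · push Not at hmax
    rcases Nat.eq_zero_or_pos c with hc0 | hpos
    · refine hq (hasDist_of_progresses (progresses_lt.mono fun w' _ hlt => ?_))
      omega
    · have le_pred : c ≤ c - 1 := distStep_le_iff.2 (progresses_lt.mono fun w hrw hlt => by
        have := hmax w (by rw [hrw, ← h.rank_eq i])
        omega)
      omega

open scoped Classical in
/-- The states of rank `k` at position `i` without a finite distance. -/
noncomputable def stuck (Δ : Set (Q × A × Q)) (B : Set Q) (M : ℕ) (u : ℕ → A) (r : ℕ → Q → ℕ)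
    (k i : ℕ) : Finset Q :=
  {q | r i q = k ∧ ¬ HasDist Δ B M u r i q}

theorem mem_stuck : q ∈ stuck Δ B M u r k i ↔ r i q = k ∧ ¬ HasDist Δ B M u r i q := by
  simp [stuck]

theorem IsApproxMeasure.image_distStep_subset (h : IsApproxMeasure Δ B M u r d) (k i : ℕ) :
    (stuck Δ B M u r k i).image (distStep Δ B M (u i) (r (i + 1)) (d (i + 1))) ⊆
      ((stuck Δ B M u r k (i + 1)).image (d (i + 1))).image (· + 1) := by
  simp only [Finset.subset_iff, Finset.mem_image, mem_stuck]
  rintro _ ⟨q, ⟨rfl, hq⟩, rfl⟩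
  obtain ⟨w, hrw, hw, hdw⟩ := h.exists_succ_not_hasDist hq
  exact ⟨_, ⟨w, ⟨hrw, hw⟩, rfl⟩, hdw.symm⟩

theorem IsApproxMeasure.card_image_distStep (h : IsApproxMeasure Δ B M u r d) (k i : ℕ) :
    #((stuck Δ B M u r k i).image (distStep Δ B M (u i) (r (i + 1)) (d (i + 1)))) =
      #((stuck Δ B M u r k i).image (d i)) :=
  card_image_eq_card_image_of_lt_iff_lt fun x hx y hy =>
    ((h.dist_agree i) x y ((mem_stuck.1 hx).1.trans (mem_stuck.1 hy).1.symm)).symm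

theorem IsApproxMeasure.monotone_card_image_dist (h : IsApproxMeasure Δ B M u r d) (k : ℕ) :
    Monotone fun i => #((stuck Δ B M u r k i).image (d i)) :=
  monotone_nat_of_le_succ fun i =>
    calc #((stuck Δ B M u r k i).image (d i))
        = #((stuck Δ B M u r k i).image (distStep Δ B M (u i) (r (i + 1)) (d (i + 1)))) :=
          (h.card_image_distStep k i).symm
      _ ≤ #(((stuck Δ B M u r k (i + 1)).image (d (i + 1))).image (· + 1)) :=
          Finset.card_le_card (h.image_distStep_subset k i)
      _ ≤ #((stuck Δ B M u r k (i + 1)).image (d (i + 1))) := Finset.card_image_le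

theorem IsApproxMeasure.overflow_of_card_eq (h : IsApproxMeasure Δ B M u r d)
    (hne : (stuck Δ B M u r k (i + 1)).Nonempty)
    (hcard : #((stuck Δ B M u r k i).image (d i)) =
      #((stuck Δ B M u r k (i + 1)).image (d (i + 1)))) :
    Overflow Δ B M (u i) (r (i + 1)) (d (i + 1)) k := by
  have image_eq : (stuck Δ B M u r k i).image (distStep Δ B M (u i) (r (i + 1)) (d (i + 1))) =
      ((stuck Δ B M u r k (i + 1)).image (d (i + 1))).image (· + 1) :=
    Finset.eq_of_subset_of_card_le (h.image_distStep_subset k i) <| by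
      rw [h.card_image_distStep, hcard]
      exact Finset.card_image_le
  obtain ⟨w, hw, hmax⟩ := Finset.exists_max_image _ (d (i + 1)) hne
  obtain ⟨q, hq, hdist⟩ : ∃ q ∈ stuck Δ B M u r k i,
      distStep Δ B M (u i) (r (i + 1)) (d (i + 1)) q = d (i + 1) w + 1 :=
    Finset.mem_image.1 (image_eq ▸
      Finset.mem_image_of_mem (· + 1) (Finset.mem_image_of_mem (d (i + 1)) hw))
  rw [mem_stuck] at hq hw
  refine ⟨q, h.rank_eq i ▸ hq.1, fun w' hrw' => hdist ▸ Nat.lt_succ_of_le (not_lt.1 fun hlt => ?_)⟩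
  have hasDist_w' : HasDist Δ B M u r (i + 1) w' := not_not.1 fun hstuck =>
    (hmax w' (mem_stuck.2 ⟨hrw', hstuck⟩)).not_gt hlt
  exact hw.2 (h.hasDist_of_le hasDist_w' (hw.1.trans hrw'.symm) hlt.le)

-- The stuck states of a fixed rank have at most `card Q` distances, and moving on never decreases
-- their number; once it is constant, the largest distance grows at every step back.
theorem IsApproxMeasure.hasDist (h : IsApproxMeasure Δ B M u r d)
    (hrec : ∀ k ≤ M, ∀ m, ∃ i, m ≤ i ∧ ¬ Overflow Δ B M (u i) (r (i + 1)) (d (i + 1)) k)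
    (i : ℕ) (q : Q) : HasDist Δ B M u r i q := by
  by_contra hq
  obtain ⟨N, hN⟩ := exists_forall_ge_eq_of_monotone_of_le
    (h.monotone_card_image_dist (r i q))
    fun i => Finset.card_image_le.trans (Finset.card_le_univ (stuck Δ B M u r _ i))
  obtain ⟨j, hj, hover⟩ := hrec (r i q) (h.rank_le i q) (max N i)
  have stuck_nonempty : ∀ j, i ≤ j → (stuck Δ B M u r (r i q) j).Nonempty := by
    intro j hj
    induction j, hj using Nat.le_induction with
    | base => exact ⟨q, mem_stuck.2 ⟨rfl, hq⟩⟩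
    | succ j _ ih =>
      obtain ⟨x, hx⟩ := ih
      obtain ⟨hrx, hx⟩ := mem_stuck.1 hx
      obtain ⟨w, hrw, hw, -⟩ := h.exists_succ_not_hasDist hx
      exact ⟨w, mem_stuck.2 ⟨hrw.trans hrx, hw⟩⟩
  exact hover (h.overflow_of_card_eq (stuck_nonempty (j + 1) (by omega))
    ((hN j (by omega)).symm.trans (hN (j + 1) (by omega))))

theorem IsApproxMeasure.dist_lt_of_lt (h : IsApproxMeasure Δ B M u r d)
    (hδ : IsMeasure Δ B M u r δ) (hr : r i q = r i q') (hlt : d i q < d i q') :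
    δ i q < δ i q' := by
  induction hn : δ i q' using Nat.strong_induction_on generalizing i q q' with
  | _ n ih =>
    subst hn
    have step_lt := (h.dist_agree i q q' hr).1 hlt
    rw [hδ.dist_eq i]
    by_contra! hle
    refine step_lt.not_ge (distStep_le_iff.2 ?_)
    refine (distStep_le_iff.1 (le_refl (distStep Δ B M (u i) (r (i + 1)) (δ (i + 1)) q'))).mono
      fun w hrw hw => lt_of_not_ge fun hge => (hw.trans_le hle).not_ge ?_
    rw [← h.rank_eq i] at hrw
    refine distStep_le_iff.2 ((distStep_le_iff.1 le_rfl).mono fun w' hrw' hw' =>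
      ih (δ (i + 1) w) (by rwa [hδ.dist_eq i]) ?_ (hw'.trans_le hge) rfl)
    rw [hrw', ← h.rank_eq i, hr, hrw]

theorem IsApproxMeasure.orderAgree (h : IsApproxMeasure Δ B M u r d)
    (hδ : IsMeasure Δ B M u r δ) (i : ℕ) : OrderAgree (r i) (d i) (δ i) := by
  refine fun q q' hr => ⟨h.dist_lt_of_lt hδ hr, fun hlt => ?_⟩
  obtain ⟨c, hc⟩ := h.exists_cut (δ i q') i (r i q')
  have lt_cut : d i q < c := (hc q hr).1 (hδ.dist_lt_iff.1 hlt)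
  have cut_le : c ≤ d i q' := not_lt.1 fun hlt' => (hδ.dist_lt_iff.2 ((hc q' rfl).2 hlt')).false
  exact lt_cut.trans_le cut_le

end ApproxMeasure

section State

variable {Q A : Type*} {Δ : Set (Q × A × Q)} {B : Set Q} {M : ℕ} {r d d' : Q → ℕ} {q : Q}

/-- The ranking that only remembers which states have the top rank. -/
def collapse (M : ℕ) (r : Q → ℕ) (q : Q) : ℕ :=
  if r q = M then M else 0

theorem gapless_collapse (M : ℕ) (r : Q → ℕ) : Gapless M (collapse M r) := by
  refine ⟨fun q => ?_, fun {q k} hne _ hlt => ?_⟩ <;> grind [collapse]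

variable [Fintype Q]

/-- A state of the backward deterministic automaton: ranks without gaps, and an ordering of the
states of each rank by distance, represented by compressed distances. -/
@[ext]
structure State (Q : Type*) [Fintype Q] (M : ℕ) where
  rank : Q → ℕ
  dist : Q → ℕ
  gapless : Gapless M rank
  compress_dist : compress rank dist = dist

namespace State

/-- The state given by a gapless ranking and the order of the distances within each rank. -/
def ofGapless (h : Gapless M r) (d : Q → ℕ) : State Q M :=
  ⟨r, compress r d, h, compress_compress r d⟩

open scoped Classical in
/-- The state given by ranks and distances. A ranking with gaps is collapsed; this happens only
finitely often along a run, and keeps the states of top rank. -/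
noncomputable def ofRanking (M : ℕ) (r d : Q → ℕ) : State Q M :=
  if h : Gapless M r then ofGapless h d else ofGapless (gapless_collapse M r) fun _ => 0

theorem ofRanking_of_gapless (h : Gapless M r) (d : Q → ℕ) : ofRanking M r d = ofGapless h d :=
  dif_pos h

theorem ofRanking_of_not_gapless (h : ¬ Gapless M r) (d : Q → ℕ) :
    ofRanking M r d = ofGapless (gapless_collapse M r) fun _ => 0 :=
  dif_neg h

theorem ofRanking_rank_dist (s : State Q M) : ofRanking M s.rank s.dist = s :=
  (ofRanking_of_gapless s.gapless s.dist).trans (State.ext rfl s.compress_dist)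

theorem ofRanking_congr (h : OrderAgree r d d') : ofRanking M r d = ofRanking M r d' := by
  by_cases hr : Gapless M r
  · simp only [ofRanking_of_gapless hr, ofGapless, h.compress_eq]
  · simp only [ofRanking_of_not_gapless hr]

theorem ofRanking_rank_eq_top_iff (hM : M ≠ 0) : (ofRanking M r d).rank q = M ↔ r q = M := by
  by_cases hr : Gapless M r
  · rw [ofRanking_of_gapless hr, ofGapless]
  · rw [ofRanking_of_not_gapless hr, ofGapless]
    grind [collapse]

theorem oddRanks_ofRanking_subset (M : ℕ) (r d : Q → ℕ) :
    oddRanks M (ofRanking M r d).rank ⊆ oddRanks M r := by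
  by_cases hr : Gapless M r
  · rw [ofRanking_of_gapless hr, ofGapless]
  · intro k hk
    obtain ⟨⟨q, hq⟩, hodd, hlt⟩ := mem_oddRanks.1 hk
    rw [ofRanking_of_not_gapless hr, ofGapless] at hq
    grind [collapse]

/-- The transition function of the backward deterministic automaton. -/
noncomputable def transition (Δ : Set (Q × A × Q)) (B : Set Q) (M : ℕ) (a : A) (s : State Q M) :
    State Q M :=
  ofRanking M (rankStep Δ B M a s.rank) (distStep Δ B M a s.rank s.dist)

/-- The recurrence condition of the backward deterministic automaton: for every rank, infinitely
many transitions do not overflow. -/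
def recurrence (Δ : Set (Q × A × Q)) (B : Set Q) (M : ℕ) (k : Fin (M + 1)) :
    Set (State Q M × A × State Q M) :=
  {x | ¬ Overflow Δ B M x.2.1 x.2.2.rank x.2.2.dist k}

theorem transition_rank_eq_top_iff (hM : Odd M) {a : A} {s : State Q M} :
    (transition Δ B M a s).rank q = M ↔ ∃ w, (q, a, w) ∈ Δ ∧ s.rank w = M :=
  (ofRanking_rank_eq_top_iff hM.pos.ne').trans (rankStep_eq_top_iff hM s.gapless.rank_le)

theorem oddRanks_transition_subset (a : A) (s : State Q M) :
    oddRanks M (transition Δ B M a s).rank ⊆ oddRanks M s.rank :=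
  (oddRanks_ofRanking_subset M _ _).trans (oddRanks_rankStep_subset a s.rank)

theorem gapless_rankStep {a : A} {s : State Q M}
    (h : oddRanks M s.rank ⊆ oddRanks M (transition Δ B M a s).rank) :
    Gapless M (rankStep Δ B M a s.rank) :=
  s.gapless.rankStep (h.trans (oddRanks_ofRanking_subset M _ _))

end State

end State

section Counting

variable {Q : Type*} [Fintype Q] {M : ℕ}

theorem card_filter_odd_range_succ (n : ℕ) : #{k ∈ Finset.range (n + 1) | Odd k} = (n + 1) / 2 := by
  induction n with
  | zero => rfl
  | succ n ih =>
    rw [Finset.range_add_one, Finset.filter_insert]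
    split_ifs with hodd
    · rw [Finset.card_insert_of_notMem (by simp), ih]
      grind
    · grind

namespace State

/-- Orders the states by rank, then by distance, with the states of top rank first. -/
def key (s : State Q M) (q : Q) : ℕ ×ₗ ℕ :=
  toLex (if s.rank q = M then 0 else s.rank q + 1, s.dist q)

/-- `0` marks even ranks, `1` the states of least distance in an odd rank below the top. -/
def mark (s : State Q M) (q : Q) : Fin 3 :=
  if s.rank q = M then 2 else if Even (s.rank q) then 0 else if s.dist q = 0 then 1 else 2

/-- The position of each state in the order by `key`, together with its mark. -/
def code (s : State Q M) (q : Q) : Fin (Fintype.card Q) × Fin 3 :=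
  (⟨denseRank Finset.univ s.key q, denseRank_lt_card (Finset.mem_univ q)⟩, s.mark q)

/-- The number of positions marked `1` up to that of `q`. -/
def countOnes (f : Q → Fin (Fintype.card Q) × Fin 3) (q : Q) : ℕ :=
  #(({x | (f x).2 = 1 ∧ (f x).1 ≤ (f q).1} : Finset Q).image fun x => (f x).1)

/-- Recovers the ranks from a code: the positions marked `1` count the odd ranks up to that of `q`,
and a state not marked `0` has the top rank exactly if there are none. -/
def decodeRank (M : ℕ) (f : Q → Fin (Fintype.card Q) × Fin 3) (q : Q) : ℕ :=
  if (f q).2 = 0 then 2 * countOnes f q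
  else if countOnes f q = 0 then M
  else 2 * countOnes f q - 1

theorem code_fst_lt_code_fst_iff (s : State Q M) (q q' : Q) :
    (s.code q).1 < (s.code q').1 ↔ s.key q < s.key q' :=
  denseRank_lt_denseRank_iff (Finset.mem_univ q)

theorem key_lt_key_iff_of_rank_eq (s : State Q M) {q q' : Q} (h : s.rank q = s.rank q') :
    s.key q < s.key q' ↔ s.dist q < s.dist q' := by
  simp [key, h, Prod.Lex.toLex_lt_toLex]

theorem mark_eq_one_iff (s : State Q M) (q : Q) :
    s.mark q = 1 ↔ s.rank q ≠ M ∧ Odd (s.rank q) ∧ s.dist q = 0 := by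
  rw [mark]
  split_ifs <;> simp_all

theorem key_lt_key_iff_of_mark_eq_one (s : State Q M) {q q' : Q} (hq : s.mark q = 1)
    (hq' : s.mark q' = 1) : s.key q < s.key q' ↔ s.rank q < s.rank q' := by
  rw [mark_eq_one_iff] at hq hq'
  simp [key, hq, hq', Prod.Lex.toLex_lt_toLex]

theorem key_le_key_iff_of_mark_eq_one (s : State Q M) {q q' : Q} (hq : s.mark q = 1) :
    s.key q ≤ s.key q' ↔ s.rank q' ≠ M ∧ s.rank q ≤ s.rank q' := by
  rw [mark_eq_one_iff] at hq
  by_cases hq' : s.rank q' = M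
  · simp [key, hq, hq', Prod.Lex.toLex_le_toLex]
  · have := Nat.zero_le (s.dist q')
    simp only [key, hq, hq', Prod.Lex.toLex_le_toLex, if_false]
    grind

theorem exists_mark_eq_one (s : State Q M) {q : Q} {k : ℕ} (hq : s.rank q ≠ M) (hodd : Odd k)
    (hk : k ≤ s.rank q) : ∃ w, s.rank w = k ∧ s.mark w = 1 := by
  have exists_rank_eq : ∃ q', s.rank q' = k := by
    rcases hk.eq_or_lt with rfl | hlt
    · exact ⟨q, rfl⟩
    · exact s.gapless.exists_rank_eq hq hodd hlt
  obtain ⟨q', rfl⟩ := exists_rank_eq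
  obtain ⟨w, hw, hzero⟩ := exists_compress_eq_zero s.rank s.dist q'
  rw [s.compress_dist] at hzero
  have lt_top := (s.gapless.rank_le q).lt_of_ne hq
  exact ⟨w, hw, (s.mark_eq_one_iff w).2 ⟨by omega, hw ▸ hodd, hzero⟩⟩

theorem image_rank_of_mark_eq_one (s : State Q M) {q : Q} (hq : s.rank q ≠ M) :
    (({x | s.mark x = 1 ∧ s.key x ≤ s.key q} : Finset Q).image s.rank) =
      {k ∈ Finset.range (s.rank q + 1) | Odd k} := by
  ext k
  simp only [Finset.mem_image, Finset.mem_filter, Finset.mem_univ, true_and, Finset.mem_range,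
    Nat.lt_succ_iff]
  constructor
  · rintro ⟨x, ⟨hx, hle⟩, rfl⟩
    exact ⟨((s.key_le_key_iff_of_mark_eq_one hx).1 hle).2, ((s.mark_eq_one_iff x).1 hx).2.1⟩
  · rintro ⟨hk, hodd⟩
    obtain ⟨w, rfl, hw⟩ := s.exists_mark_eq_one hq hodd hk
    exact ⟨w, ⟨hw, (s.key_le_key_iff_of_mark_eq_one hw).2 ⟨hq, hk⟩⟩, rfl⟩

theorem countOnes_code (s : State Q M) (q : Q) :
    countOnes s.code q = if s.rank q = M then 0 else (s.rank q + 1) / 2 := by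
  have image_card : countOnes s.code q =
      #(({x | s.mark x = 1 ∧ s.key x ≤ s.key q} : Finset Q).image s.rank) := by
    simp only [countOnes, ← not_lt, code_fst_lt_code_fst_iff]
    refine card_image_eq_card_image_of_lt_iff_lt fun x hx y hy => ?_
    simp only [Finset.mem_filter, Finset.mem_univ, true_and] at hx hy
    rw [code_fst_lt_code_fst_iff, s.key_lt_key_iff_of_mark_eq_one hx.1 hy.1]
  rw [image_card]
  split_ifs with hq
  · rw [Finset.card_eq_zero, Finset.image_eq_empty, Finset.filter_eq_empty_iff]
    exact fun x _ hx => ((s.key_le_key_iff_of_mark_eq_one hx.1).1 hx.2).1 hq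
  · rw [s.image_rank_of_mark_eq_one hq, card_filter_odd_range_succ]

theorem decodeRank_code (s : State Q M) : decodeRank M s.code = s.rank := by
  funext q
  have code_snd : (s.code q).2 = s.mark q := rfl
  rw [decodeRank, countOnes_code, code_snd, mark]
  grind

theorem code_injective :
    Function.Injective (code : State Q M → Q → Fin (Fintype.card Q) × Fin 3) := by
  intro s s' h
  have rank_eq : s.rank = s'.rank := by rw [← s.decodeRank_code, h, s'.decodeRank_code]
  have agree : OrderAgree s.rank s.dist s'.dist := fun q q' hr => by
    rw [← s.key_lt_key_iff_of_rank_eq hr, ← s'.key_lt_key_iff_of_rank_eq (rank_eq ▸ hr),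
      ← code_fst_lt_code_fst_iff, ← code_fst_lt_code_fst_iff, h]
  refine State.ext rank_eq ?_
  rw [← s.compress_dist, agree.compress_eq, rank_eq, s'.compress_dist]

instance : Finite (State Q M) :=
  Finite.of_injective code code_injective

theorem card_le (Q : Type*) [Fintype Q] (M : ℕ) [Fintype (State Q M)] :
    Fintype.card (State Q M) ≤ (3 * Fintype.card Q) ^ Fintype.card Q := by
  classical
  calc Fintype.card (State Q M)
      ≤ Fintype.card (Q → Fin (Fintype.card Q) × Fin 3) :=
        Fintype.card_le_of_injective code code_injective
    _ = (3 * Fintype.card Q) ^ Fintype.card Q := by simp [mul_comm]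

end State

end Counting

section BackRun

variable {P A : Type*} {ρ : A → P → P} {u : ℕ → A} {s s' g : ℕ → P}

theorem eq_of_isBackRun_of_eventuallyEq (hs : IsBackRun ρ u s) (hs' : IsBackRun ρ u s')
    (h : s =ᶠ[atTop] s') : s = s' :=
  funext <| Nat.decreasing_induction_of_infinite (fun i hi => by rw [hs i, hi, ← hs' i])
    (Nat.frequently_atTop_iff_infinite.1 h.frequently)

theorem exists_isBackRun_eventuallyEq (h : ∀ᶠ i in atTop, g i = ρ (u i) (g (i + 1))) :
    ∃ s, IsBackRun ρ u s ∧ s =ᶠ[atTop] g := by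
  obtain ⟨N, hN⟩ := eventually_atTop.1 h
  clear h
  induction N generalizing g with
  | zero => exact ⟨g, fun i => hN i i.zero_le, EventuallyEq.rfl⟩
  | succ N ih =>
    have update_eq (i : ℕ) (hi : N < i) : Function.update g N (ρ (u N) (g (N + 1))) i = g i :=
      Function.update_of_ne hi.ne' _ _
    obtain ⟨s, hs, hsg⟩ := ih (g := Function.update g N (ρ (u N) (g (N + 1)))) fun i hi => by
      rw [update_eq (i + 1) (Nat.lt_succ_of_le hi)]
      rcases hi.eq_or_lt with rfl | hlt
      · exact Function.update_self ..
      · rw [update_eq i hlt, ← hN i hlt]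
    exact ⟨s, hs, hsg.trans ((eventually_gt_atTop N).mono update_eq)⟩

end BackRun

section Correctness

variable {Q A : Type*} [Fintype Q] {Δ : Set (Q × A × Q)} {B : Set Q} {M : ℕ} {u : ℕ → A}
  {r δ : ℕ → Q → ℕ} {s : ℕ → State Q M}

theorem IsMeasure.exists_ge_not_overflow (h : IsMeasure Δ B M u r δ) (k m : ℕ) :
    ∃ i, m ≤ i ∧ ¬ Overflow Δ B M (u i) (r (i + 1)) (δ (i + 1)) k := by
  by_contra! hover
  have : Nonempty Q := ⟨(hover m le_rfl).choose⟩
  have farther_state : ∀ i, m ≤ i → ∃ q, r i q = k ∧ ∀ w, r (i + 1) w = k → δ (i + 1) w < δ i q :=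
    fun i hi => by
      rw [h.rank_eq i, h.dist_eq i]
      exact hover i hi
  choose! q hrank hlt using farther_state
  obtain ⟨i, hi, hle⟩ := exists_ge_le_succ (fun i => δ i (q i)) m
  exact (hlt i hi (q (i + 1)) (hrank (i + 1) (hi.trans i.le_succ))).not_ge hle

namespace State

theorem ofRanking_eq_transition (h : IsMeasure Δ B M u r δ) {i : ℕ} (hg : Gapless M (r (i + 1))) :
    ofRanking M (r i) (δ i) = transition Δ B M (u i) (ofRanking M (r (i + 1)) (δ (i + 1))) := by
  rw [ofRanking_of_gapless hg, transition, h.rank_eq i, h.dist_eq i]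
  exact ofRanking_congr (orderAgree_compress _ _).symm.orderAgree_distStep

theorem exists_isBackRun_transition (h : IsMeasure Δ B M u r δ) :
    ∃ s, IsBackRun (transition Δ B M) u s ∧ s =ᶠ[atTop] fun i => ofRanking M (r i) (δ i) :=
  exists_isBackRun_eventuallyEq <| ((tendsto_add_atTop_nat 1).eventually h.eventually_gapless).mono
    fun _ => ofRanking_eq_transition h

theorem gtbFinal_recurrence (h : IsMeasure Δ B M u r δ)
    (hs : s =ᶠ[atTop] fun i => ofRanking M (r i) (δ i)) : GTBFinal (recurrence Δ B M) u s := by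
  obtain ⟨N, hN⟩ := eventually_atTop.1 (hs.and h.eventually_gapless)
  intro k m
  obtain ⟨i, hi, hover⟩ := h.exists_ge_not_overflow k (max m N)
  obtain ⟨hsi, hg⟩ := hN (i + 1) (by omega)
  refine ⟨i, by omega, fun hover' => hover ?_⟩
  rw [hsi.trans (ofRanking_of_gapless hg _)] at hover'
  exact Overflow.congr (orderAgree_compress _ _) hover'

-- The odd ranks in use only increase along a run, and once they are constant no step collapses.
theorem exists_isApproxMeasure (hs : IsBackRun (transition Δ B M) u s) :
    ∃ N, IsApproxMeasure Δ B M (fun i => u (N + i)) (fun i => (s (N + i)).rank)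
      fun i => (s (N + i)).dist := by
  obtain ⟨N, hN⟩ := exists_forall_ge_oddRanks_eq (M := M) (r := fun i => (s i).rank) <|
    monotone_nat_of_le_succ fun i => hs i ▸ oddRanks_transition_subset (u i) (s (i + 1))
  have gapless_step (i : ℕ) : Gapless M (rankStep Δ B M (u (N + i)) (s (N + i + 1)).rank) :=
    gapless_rankStep (by rw [← hs, ← hN (N + i) (by omega), ← hN (N + i + 1) (by omega)])
  have eq_ofGapless (i : ℕ) : s (N + i) = ofGapless (gapless_step i)
      (distStep Δ B M (u (N + i)) (s (N + i + 1)).rank (s (N + i + 1)).dist) :=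
    (hs (N + i)).trans (ofRanking_of_gapless (gapless_step i) _)
  refine ⟨N, ⟨fun i => (s (N + i)).gapless.rank_le, fun i => congrArg rank (eq_ofGapless i)⟩,
    fun i => ?_⟩
  rw [eq_ofGapless i]
  exact orderAgree_compress _ _

theorem eventuallyEq_ofRanking (hs : IsBackRun (transition Δ B M) u s)
    (hfinal : GTBFinal (recurrence Δ B M) u s) (h : IsMeasure Δ B M u r δ) :
    s =ᶠ[atTop] fun i => ofRanking M (r i) (δ i) := by
  obtain ⟨N, happrox⟩ := exists_isApproxMeasure hs
  have hasDist := happrox.hasDist fun k hk m => by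
    obtain ⟨i, hi, hover⟩ := hfinal ⟨k, Nat.lt_succ_of_le hk⟩ (N + m)
    obtain ⟨j, rfl⟩ := Nat.exists_eq_add_of_le (Nat.le_of_add_right_le hi)
    exact ⟨j, Nat.le_of_add_le_add_left hi, hover⟩
  obtain ⟨δ', hδ'⟩ := happrox.exists_isMeasure hasDist
  have rank_eq : (fun i => (s (N + i)).rank) = fun i => r (N + i) := hδ'.rank_unique (h.shift N)
  have orderAgree := happrox.orderAgree (δ := fun i => δ (N + i)) (rank_eq ▸ h.shift N)
  filter_upwards [eventually_ge_atTop N] with i hi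
  obtain ⟨j, rfl⟩ := Nat.exists_eq_add_of_le hi
  rw [← congrFun rank_eq j, ← ofRanking_congr (orderAgree j), ofRanking_rank_dist]

theorem existsUnique_final_run (h : IsMeasure Δ B M u r δ) :
    ∃! s, IsBackRun (transition Δ B M) u s ∧ GTBFinal (recurrence Δ B M) u s := by
  obtain ⟨s, hs, hsr⟩ := exists_isBackRun_transition h
  refine ⟨s, ⟨hs, gtbFinal_recurrence h hsr⟩, fun s' ⟨hs', hfinal⟩ => ?_⟩
  exact eq_of_isBackRun_of_eventuallyEq hs' hs
    ((eventuallyEq_ofRanking hs' hfinal h).trans hsr.symm)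

theorem rank_eq_top_iff_nbaAccepts (hs : IsBackRun (transition Δ B M) u s)
    (hfinal : GTBFinal (recurrence Δ B M) u s) (h : IsMeasure Δ B M u r δ) (hM : Odd M) (i : ℕ) :
    ∀ q, (s i).rank q = M ↔ NBAAccepts Δ B (fun j => u (i + j)) q := by
  refine Nat.decreasing_induction_of_infinite
    (P := fun i => ∀ q, (s i).rank q = M ↔ NBAAccepts Δ B (fun j => u (i + j)) q) ?_
    (Nat.frequently_atTop_iff_infinite.1 (Eventually.frequently ?_)) i
  · intro i ih q
    rw [hs i, transition_rank_eq_top_iff hM, nbaAccepts_iff_exists_succ]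
    simp only [ih, add_right_comm i 1, add_zero, ← add_assoc]
  · filter_upwards [eventuallyEq_ofRanking hs hfinal h] with i hi q
    rw [hi, ofRanking_rank_eq_top_iff hM.pos.ne']
    exact (h.shift i).eq_top_iff_nbaAccepts hM

end State

end Correctness

end BackwardDeterminization

open BackwardDeterminization

/-- Carton–Michel: for every nondeterministic Büchi automaton with `n`
states and initial state set `I` there is an equivalent backward deterministic automaton
with a generalized transition Büchi condition and at most `(3n)^n` states. -/
theorem buechi_to_backward_deterministic_gtb {Q A : Type*} [Fintype Q]
    (Δ : Set (Q × A × Q)) (B : Set Q) (I : Set Q) :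
    ∃ (P : Type) (_ : Fintype P) (ρ : A → P → P) (k : ℕ)
      (T : Fin k → Set (P × A × P)) (I' : Set P),
      Fintype.card P ≤ (3 * Fintype.card Q) ^ Fintype.card Q ∧
      (∀ u : ℕ → A, ∃! r : ℕ → P, IsBackRun ρ u r ∧ GTBFinal T u r) ∧
      (∀ (u : ℕ → A) (r : ℕ → P), IsBackRun ρ u r → GTBFinal T u r →
        (r 0 ∈ I' ↔ ∃ q ∈ I, NBAAccepts Δ B u q)) := by
  let e := Fintype.equivFin Q
  let M := 2 * Fintype.card (Fin (Fintype.card Q)) + 1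
  let Δ' : Set (Fin (Fintype.card Q) × A × Fin (Fintype.card Q)) :=
    {x | (e.symm x.1, x.2.1, e.symm x.2.2) ∈ Δ}
  let B' : Set (Fin (Fintype.card Q)) := e.symm ⁻¹' B
  let _ : Fintype (State (Fin (Fintype.card Q)) M) := Fintype.ofFinite _
  refine ⟨State (Fin (Fintype.card Q)) M, inferInstance, State.transition Δ' B' M, M + 1,
    State.recurrence Δ' B' M, {s | ∃ q ∈ I, s.rank (e q) = M}, ?_, fun u => ?_,
    fun u s hs hfinal => exists_congr fun q => and_congr_right fun _ => ?_⟩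
  · simpa only [Fintype.card_fin] using State.card_le (Fin (Fintype.card Q)) M
  · obtain ⟨r, δ, h⟩ := exists_isMeasure Δ' B' u
    exact State.existsUnique_final_run h
  · obtain ⟨r, δ, h⟩ := exists_isMeasure Δ' B' u
    have top_iff := State.rank_eq_top_iff_nbaAccepts hs hfinal h (odd_two_mul_add_one _) 0 (e q)
    simp only [zero_add] at top_iff
    exact top_iff.trans (nbaAccepts_equiv e)
end

section
/- For every nondeterministic Büchi automaton over an alphabet A with n states and initial state set I there exists a backward deterministic automaton over A with a state-based Büchi recurrence condition and at most (12n)^n states which, augmented with a suitable set of initial states, recognizes the same ω-language. -/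
/-- A run is final for the state-based Büchi condition `Ω` if it visits `Ω` infinitely
often. -/
def SBFinal {P : Type*} (Ω : Set P) (r : ℕ → P) : Prop :=
  ∀ m, ∃ i, m ≤ i ∧ r i ∈ Ω

/-!
The graph of all runs on an ω-word is ranked by alternately removing the nodes without an infinite
path (even ranks) and the nodes that no longer reach a Büchi node (odd ranks). If the automaton has
`n` states, one of which is Büchi, the ranks `0, …, 2n - 1` suffice, and the accepting nodes are
those of rank `2n - 1`.

The ranks at one level of the graph are a function of those at the next level, but this recursion
has spurious solutions. A solution is the right one if and only if every node carries a discharged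
obligation: a node of even rank has to leave its rank along all paths, and a node of odd rank has to
arrive at a node witnessing its rank along some path. The time until an obligation is discharged is
again determined by the next level. Only the relative order of the times at each level and rank
matters, so ranks and times at a level fit into `n` priorities below `3n`. That all obligations are
discharged becomes visible as `2n` transition Büchi conditions, one for each rank, and each of these
is traded for one bit of the state, whence `(3n)^n * 2^(2n) = (12n)^n` states.
-/

namespace CartonMichel

open Classical in
/-- The rank of a node of the run graph, given its successors `S`, their ranks `F`, and whether the
node itself is Büchi (`b`): the maximal rank of a successor, made even if the node is Büchi and the
rank is not `top`. -/
noncomputable def rankStep {ι : Type*} (top : ℕ) (b : Prop) (S : Finset ι) (F : ι → ℕ) : ℕ :=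
  if Odd (S.sup F) ∧ b ∧ S.sup F ≠ top then S.sup F + 1 else S.sup F

/-- The successors that have the same rank as the node. -/
noncomputable def sameRank {ι : Type*} (top : ℕ) (b : Prop) (S : Finset ι) (F : ι → ℕ) :
    Finset ι :=
  S.filter (F · = rankStep top b S F)

/-- What a path of nodes of the same odd rank has to arrive at: a Büchi node if the rank is `top`,
and a node with a successor of the next smaller rank otherwise, where rank `0` is realized by the
absence of an infinite path. -/
def Goal {ι : Type*} (top : ℕ) (b : Prop) (S : Finset ι) (F : ι → ℕ) : Prop :=
  if rankStep top b S F = top then b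
  else rankStep top b S F = 1 ∨ ∃ y ∈ S, F y + 1 = rankStep top b S F

/-- The obligation of a node is discharged one step after that of its successors in `Z`. An even
rank is obliged to be left along every path, an odd rank to reach a goal along some path. -/
def Discharge {ι : Type*} (top : ℕ) (b : Prop) (S : Finset ι) (F : ι → ℕ) (Z : ι → Prop) : Prop :=
  if Even (rankStep top b S F) then ∀ y ∈ sameRank top b S F, Z y
  else Goal top b S F ∨ ∃ y ∈ sameRank top b S F, Z y

/-- The number of steps after which the obligation of a node is discharged, given the corresponding
numbers `t` for its successors. -/
noncomputable def timer {ι : Type*} (top : ℕ) (b : Prop) (S : Finset ι) (F t : ι → ℕ) : ℕ :=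
  sInf {k | Discharge top b S F (t · < k)}

section Node

variable {ι κ : Type*} {top : ℕ} {b : Prop} {S : Finset ι} {F : ι → ℕ}

theorem mem_sameRank {y : ι} : y ∈ sameRank top b S F ↔ y ∈ S ∧ F y = rankStep top b S F :=
  Finset.mem_filter

theorem sup_le_rankStep : S.sup F ≤ rankStep top b S F := by
  unfold rankStep
  split_ifs <;> omega

theorem le_rankStep {y : ι} (hy : y ∈ S) : F y ≤ rankStep top b S F :=
  (Finset.le_sup hy).trans sup_le_rankStep

theorem rankStep_le (hF : ∀ y ∈ S, F y ≤ top) : rankStep top b S F ≤ top := by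
  have hsup : S.sup F ≤ top := Finset.sup_le hF
  unfold rankStep
  split_ifs <;> omega

theorem rankStep_le_iff_of_even {r : ℕ} (hr : Even r) :
    rankStep top b S F ≤ r ↔ ∀ y ∈ S, F y ≤ r := by
  rw [← Finset.sup_le_iff]
  unfold rankStep
  split_ifs <;> grind

theorem rankStep_le_iff_of_odd {r : ℕ} (hr : Odd r) (hrt : r < top) :
    rankStep top b S F ≤ r ↔ (∀ y ∈ S, F y ≤ r) ∧ (b → ∀ y ∈ S, F y < r) := by
  rw [← Finset.sup_le_iff, ← Finset.sup_lt_iff (bot_lt_iff_ne_bot.2 hr.pos.ne')]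
  unfold rankStep
  split_ifs <;> grind

theorem even_rankStep (hb : b) (htop : rankStep top b S F ≠ top) : Even (rankStep top b S F) := by
  unfold rankStep at *
  split_ifs at * <;> grind

theorem rankStep_eq_sup (h : Odd (rankStep top b S F) ∨ ¬b) : rankStep top b S F = S.sup F := by
  unfold rankStep at *
  split_ifs at * <;> grind

theorem sameRank_nonempty (h0 : rankStep top b S F ≠ 0) (h : Odd (rankStep top b S F) ∨ ¬b) :
    (sameRank top b S F).Nonempty := by
  have hsup := rankStep_eq_sup h
  have hS : S.Nonempty := by
    by_contra! hS
    exact h0 (by rw [hsup, hS, Finset.sup_empty, bot_eq_zero])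
  obtain ⟨y, hy, hy'⟩ := S.exists_mem_eq_sup hS F
  exact ⟨y, mem_sameRank.2 ⟨hy, by rw [hsup, hy']⟩⟩

theorem Discharge.mono {Z Z' : ι → Prop} (h : Discharge top b S F Z)
    (hZ : ∀ y ∈ sameRank top b S F, Z y → Z' y) : Discharge top b S F Z' := by
  unfold Discharge at *
  split_ifs at * with heven
  · exact fun y hy => hZ y hy (h y hy)
  · exact h.imp_right fun ⟨y, hy, hZy⟩ => ⟨y, hy, hZ y hy hZy⟩

theorem discharge_true : Discharge top b S F fun _ => True := by
  unfold Discharge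
  split_ifs with heven
  · simp
  · have hodd := Nat.not_even_iff_odd.1 heven
    obtain ⟨y, hy⟩ := sameRank_nonempty hodd.pos.ne' (.inl hodd)
    exact .inr ⟨y, hy, trivial⟩

theorem Discharge.exists_of_monotone {Z : ℕ → ι → Prop} (hZ : Monotone Z)
    (h : Discharge top b S F fun y => ∃ k, Z k y) : ∃ k, Discharge top b S F (Z k) := by
  unfold Discharge at *
  split_ifs at * with heven
  · choose! k hk using h
    exact ⟨(sameRank top b S F).sup k, fun y hy => hZ (Finset.le_sup hy) y (hk y hy)⟩
  · rcases h with hgoal | ⟨y, hy, k, hk⟩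
    · exact ⟨0, .inl hgoal⟩
    · exact ⟨k, .inr ⟨y, hy, hk⟩⟩

theorem timer_le_iff {t : ι → ℕ} {k : ℕ} :
    timer top b S F t ≤ k ↔ Discharge top b S F (t · < k) := by
  have hmono : Monotone fun k y => t y < k := fun _ _ hkl _ hk => lt_of_lt_of_le hk hkl
  have hne : ∃ k, Discharge top b S F (t · < k) :=
    (discharge_true.mono fun y _ _ => ⟨t y + 1, by simp⟩).exists_of_monotone hmono
  have hmin : Discharge top b S F (t · < timer top b S F t) := Nat.sInf_mem hne
  exact ⟨fun h => hmin.mono fun y _ => hmono h y, fun h => Nat.sInf_le h⟩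

theorem discharge_lt_timer (t : ι → ℕ) : Discharge top b S F (t · < timer top b S F t) :=
  timer_le_iff.1 le_rfl

theorem Discharge.exists_le_of_lt_timer {t : ι → ℕ} {Z : ι → Prop} {k : ℕ}
    (h : Discharge top b S F Z) (hk : k < timer top b S F t) :
    ∃ y ∈ sameRank top b S F, Z y ∧ k ≤ t y := by
  contrapose! hk
  exact timer_le_iff.2 (h.mono hk)

theorem exists_add_one_eq_timer {t : ι → ℕ} (h : 0 < timer top b S F t) :
    ∃ y ∈ sameRank top b S F, t y + 1 = timer top b S F t := by
  obtain ⟨y, hy, hlt, hle⟩ := (discharge_lt_timer t).exists_le_of_lt_timer (Nat.sub_lt h one_pos)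
  exact ⟨y, hy, by omega⟩

theorem lt_timer_of_even {t : ι → ℕ} (heven : Even (rankStep top b S F)) {y : ι}
    (hy : y ∈ sameRank top b S F) : t y < timer top b S F t := by
  have h := discharge_lt_timer (top := top) (b := b) (S := S) (F := F) t
  rw [Discharge, if_pos heven] at h
  exact h y hy

theorem goal_or_exists_lt_timer (t : ι → ℕ) (hodd : Odd (rankStep top b S F)) :
    Goal top b S F ∨ ∃ y ∈ sameRank top b S F, t y < timer top b S F t := by
  have h := discharge_lt_timer (top := top) (b := b) (S := S) (F := F) t
  rwa [Discharge, if_neg (Nat.not_even_iff_odd.2 hodd)] at h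

theorem timer_le_timer {b' : Prop} {S' : Finset ι} {t p : ι → ℕ}
    (hp : ∀ y ∈ sameRank top b S F, ∀ y' ∈ sameRank top b' S' F,
      t y < timer top b S F t → t y ≤ t y' → p y ≤ p y')
    (h : timer top b S F t ≤ timer top b' S' F t) :
    timer top b S F p ≤ timer top b' S' F p := by
  by_contra! hlt
  obtain ⟨y, hy, hty, hpy⟩ := (discharge_lt_timer t).exists_le_of_lt_timer hlt
  have hle : timer top b' S' F t ≤ t y := timer_le_iff.2 <|
    (discharge_lt_timer p).mono fun y' hy' hpy' => by
      by_contra! hyy'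
      have := hp y hy y' hy' hty hyy'
      omega
  omega

theorem timer_lt_timer {b' : Prop} {S' : Finset ι} {t p : ι → ℕ}
    (hp : ∀ y ∈ sameRank top b S F, ∀ y' ∈ sameRank top b' S' F,
      t y < timer top b S F t → t y < t y' → p y < p y')
    (h : timer top b S F t < timer top b' S' F t) :
    timer top b S F p < timer top b' S' F p := by
  by_contra! hle
  have hpos : 0 < timer top b' S' F p := by
    by_contra! h0
    have h0' : timer top b' S' F t ≤ 0 := timer_le_iff.2 <|
      (timer_le_iff.1 h0).mono fun _ _ hy => absurd hy (Nat.not_lt_zero _)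
    omega
  obtain ⟨y, hy, hty, hpy⟩ := (discharge_lt_timer t).exists_le_of_lt_timer
    ((Nat.sub_one_lt hpos.ne').trans_le hle)
  have hle' : timer top b' S' F t ≤ t y + 1 := timer_le_iff.2 <|
    (discharge_lt_timer p).mono fun y' hy' hpy' => by
      by_contra! hyy'
      have := hp y hy y' hy' hty (by omega)
      omega
  omega

variable (e : ι ↪ κ) (G : κ → ℕ)

theorem rankStep_map : rankStep top b (S.map e) G = rankStep top b S (G ∘ e) := by
  rw [rankStep, rankStep, Finset.sup_map]

theorem discharge_map (Z : κ → Prop) :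
    Discharge top b (S.map e) G Z ↔ Discharge top b S (G ∘ e) (Z ∘ e) := by
  simp [Discharge, Goal, sameRank, rankStep_map]

theorem timer_map (t : κ → ℕ) : timer top b (S.map e) G t = timer top b S (G ∘ e) (t ∘ e) := by
  simp only [timer, discharge_map, Function.comp_def]

end Node

section Graph

variable {V : Type*}

/-- A locally consistent assignment of ranks `≤ top` to the nodes of a finitely branching graph with
successor function `S` and Büchi nodes `B`. -/
structure IsRanking (top : ℕ) (B : Set V) (S : V → Finset V) (F : V → ℕ) : Prop where
  le_top : ∀ v, F v ≤ top
  eq_rankStep : ∀ v, F v = rankStep top (v ∈ B) (S v) F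

/-- The obligation of a node with respect to the ranking `F` is discharged in fewer than `k`
steps. -/
def DischargedIn (top : ℕ) (B : Set V) (S : V → Finset V) (F : V → ℕ) : ℕ → V → Prop
  | 0, _ => False
  | k + 1, v => Discharge top (v ∈ B) (S v) F (DischargedIn top B S F k)

/-- The obligation of a node with respect to the ranking `F` is discharged eventually. -/
def Live (top : ℕ) (B : Set V) (S : V → Finset V) (F : V → ℕ) (v : V) : Prop :=
  ∃ k, DischargedIn top B S F k v

/-- `g v` is the number of steps after which the obligation of `v` with respect to the ranking `F`
is discharged. -/
def IsTimer (top : ℕ) (B : Set V) (S : V → Finset V) (F g : V → ℕ) : Prop :=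
  ∀ v, g v = timer top (v ∈ B) (S v) F g

/-- Reachability in the graph with successor function `S`. -/
abbrev Reach (S : V → Finset V) : V → V → Prop :=
  Relation.ReflTransGen fun v w => w ∈ S v

variable {top : ℕ} {B : Set V} {S : V → Finset V} {F g : V → ℕ} {v w : V}

theorem dischargedIn_mono : Monotone (DischargedIn top B S F) := by
  refine monotone_nat_of_le_succ fun k => ?_
  induction k with
  | zero => exact fun _ => False.elim
  | succ k ih => exact fun v h => Discharge.mono h fun w _ => ih w

theorem live_of_discharge (h : Discharge top (v ∈ B) (S v) F (Live top B S F)) :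
    Live top B S F v :=
  let ⟨k, hk⟩ := h.exists_of_monotone dischargedIn_mono
  ⟨k + 1, hk⟩

theorem exists_lt_iff_dischargedIn (h : Live top B S F v) :
    ∃ m, ∀ k, m < k ↔ DischargedIn top B S F k v := by
  classical
  have hpos : 0 < Nat.find h := (Nat.find_pos h).2 id
  refine ⟨Nat.find h - 1, fun k => ⟨fun hk => ?_, fun hk => ?_⟩⟩
  · exact dischargedIn_mono (by omega) v (Nat.find_spec h)
  · have := Nat.find_min' h hk
    omega

theorem exists_isTimer (h : ∀ v, Live top B S F v) : ∃ g, IsTimer top B S F g := by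
  choose g hg using fun v => exists_lt_iff_dischargedIn (h v)
  refine ⟨g, fun v => eq_of_forall_ge_iff fun k => ?_⟩
  rw [timer_le_iff, ← Nat.lt_succ_iff, hg]
  exact iff_of_eq (congrArg _ (funext fun w => propext (hg w k).symm))

namespace IsRanking

variable (hF : IsRanking top B S F)
include hF

theorem mem_sameRank_iff : w ∈ sameRank top (v ∈ B) (S v) F ↔ w ∈ S v ∧ F w = F v := by
  rw [mem_sameRank, ← hF.eq_rankStep]

theorem le_of_mem (h : w ∈ S v) : F w ≤ F v :=
  (le_rankStep h).trans (hF.eq_rankStep v).ge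

theorem le_of_reach (h : Reach S v w) : F w ≤ F v := by
  induction h with
  | refl => exact le_rfl
  | tail _ h ih => exact (hF.le_of_mem h).trans ih

theorem even_of_mem (hv : v ∈ B) (htop : F v ≠ top) : Even (F v) := by
  rw [hF.eq_rankStep v] at htop ⊢
  exact even_rankStep hv htop

theorem exists_mem_eq (h0 : F v ≠ 0) (h : Odd (F v) ∨ v ∉ B) : ∃ w ∈ S v, F w = F v := by
  rw [hF.eq_rankStep v] at h0 h
  obtain ⟨w, hw⟩ := sameRank_nonempty h0 h
  exact ⟨w, hF.mem_sameRank_iff.1 hw⟩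

theorem goal_iff :
    Goal top (v ∈ B) (S v) F ↔
      if F v = top then v ∈ B else F v = 1 ∨ ∃ w ∈ S v, F w + 1 = F v := by
  rw [Goal, ← hF.eq_rankStep]

theorem lt_of_even (hg : IsTimer top B S F g) (heven : Even (F v)) (hw : w ∈ S v)
    (hFw : F w = F v) : g w < g v := by
  rw [hF.eq_rankStep v] at heven
  exact (lt_timer_of_even heven (hF.mem_sameRank_iff.2 ⟨hw, hFw⟩)).trans_eq (hg v).symm

theorem goal_or_exists_lt (hg : IsTimer top B S F g) (hodd : Odd (F v)) :
    Goal top (v ∈ B) (S v) F ∨ ∃ w ∈ S v, F w = F v ∧ g w < g v := by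
  rw [hF.eq_rankStep v] at hodd
  refine (goal_or_exists_lt_timer g hodd).imp_right fun ⟨w, hw, hlt⟩ => ?_
  obtain ⟨hwS, hFw⟩ := hF.mem_sameRank_iff.1 hw
  exact ⟨w, hwS, hFw, hlt.trans_eq (hg v).symm⟩

theorem exists_path_of_eq_top (hg : IsTimer top B S F g) (htop : Odd top) (hv : F v = top) :
    ∃ r : ℕ → V, r 0 = v ∧ (∀ j, r (j + 1) ∈ S (r j)) ∧ ∃ᶠ j in Filter.atTop, r j ∈ B := by
  have hsucc (v : {v // F v = top}) : ∃ w : {w // F w = top},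
      w.1 ∈ S v.1 ∧ (v.1 ∈ B ∨ g w.1 < g v.1) := by
    obtain ⟨v, rfl⟩ := v
    rcases hF.goal_or_exists_lt hg htop with hgoal | ⟨w, hw, hFw, hlt⟩
    · obtain ⟨w, hw, hFw⟩ := hF.exists_mem_eq htop.pos.ne' (.inl htop)
      rw [hF.goal_iff, if_pos rfl] at hgoal
      exact ⟨⟨w, hFw⟩, hw, .inl hgoal⟩
    · exact ⟨⟨w, hFw⟩, hw, .inr hlt⟩
  choose next hnext hdesc using hsucc
  let r (j : ℕ) := next^[j] ⟨v, hv⟩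
  have hr (j : ℕ) : r (j + 1) = next (r j) := Function.iterate_succ_apply' _ _ _
  refine ⟨fun j => (r j).1, rfl, fun j => by simp only [hr, hnext], Filter.frequently_atTop.2 ?_⟩
  by_contra! ⟨m, hm⟩
  refine not_strictAnti_of_wellFoundedLT (fun j => g (r (m + j)).1)
    (strictAnti_nat_of_succ_lt fun j => ?_)
  have := (hdesc (r (m + j))).resolve_left (hm _ (Nat.le_add_right m j))
  rwa [← hr] at this

theorem eq_top_of_path (hg : IsTimer top B S F g) {r : ℕ → V} (hr : ∀ j, r (j + 1) ∈ S (r j))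
    (hB : ∃ᶠ j in Filter.atTop, r j ∈ B) : F (r 0) = top := by
  have hanti : Antitone (F ∘ r) := antitone_nat_of_succ_le fun j => hF.le_of_mem (hr j)
  obtain ⟨m, hm⟩ : ∃ m, ∀ j, m ≤ j → F (r j) = F (r m) :=
    ⟨_, fun j hj => (hanti hj).antisymm (Function.argmin_le (F ∘ r) j)⟩
  obtain ⟨k, hmk, hk⟩ := Filter.frequently_atTop.1 hB m
  by_contra hne
  have hlt : F (r k) < top := (hanti k.zero_le).trans_lt ((hF.le_top _).lt_of_ne hne)
  have heven : Even (F (r m)) := hm k hmk ▸ hF.even_of_mem hk hlt.ne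
  refine not_strictAnti_of_wellFoundedLT (fun j => g (r (m + j)))
    (strictAnti_nat_of_succ_lt fun j => ?_)
  have hj := hm (m + j) (by omega)
  exact hF.lt_of_even hg (hj ▸ heven) (hr _) ((hm (m + j + 1) (by omega)).trans hj.symm)

theorem eq_top_iff (hg : IsTimer top B S F g) (htop : Odd top) :
    F v = top ↔
      ∃ r : ℕ → V, r 0 = v ∧ (∀ j, r (j + 1) ∈ S (r j)) ∧ ∃ᶠ j in Filter.atTop, r j ∈ B :=
  ⟨hF.exists_path_of_eq_top hg htop, fun ⟨_, h0, hr, hB⟩ => h0 ▸ hF.eq_top_of_path hg hr hB⟩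

theorem exists_reach_mem_of_even (hg : IsTimer top B S F g) (h0 : F v ≠ 0) (heven : Even (F v)) :
    ∃ w, Reach S v w ∧ w ∈ B ∧ F w = F v := by
  induction hk : g v using Nat.strong_induction_on generalizing v with
  | _ k ih =>
    by_cases hv : v ∈ B
    · exact ⟨v, .refl, hv, rfl⟩
    · obtain ⟨w, hw, hFw⟩ := hF.exists_mem_eq h0 (.inr hv)
      have hlt : g w < k := hk ▸ hF.lt_of_even hg heven hw hFw
      obtain ⟨z, hwz, hz, hFz⟩ := ih _ hlt (hFw ▸ h0) (hFw ▸ heven) rfl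
      exact ⟨z, .head hw hwz, hz, hFz.trans hFw⟩

theorem exists_reach_goal_of_odd (hg : IsTimer top B S F g) (hodd : Odd (F v)) :
    ∃ w, Reach S v w ∧ Goal top (w ∈ B) (S w) F ∧ F w = F v := by
  induction hk : g v using Nat.strong_induction_on generalizing v with
  | _ k ih =>
    rcases hF.goal_or_exists_lt hg hodd with hgoal | ⟨w, hw, hFw, hlt⟩
    · exact ⟨v, .refl, hgoal, rfl⟩
    · obtain ⟨z, hwz, hz, hFz⟩ := ih _ (hk ▸ hlt) (hFw ▸ hodd) rfl
      exact ⟨z, .head hw hwz, hz, hFz.trans hFw⟩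

theorem exists_reach_mem (hg : IsTimer top B S F g) (h1 : 1 < F v) :
    ∃ w, Reach S v w ∧ w ∈ B ∧ F v ≤ F w + 1 := by
  rcases Nat.even_or_odd (F v) with heven | hodd
  · obtain ⟨w, hvw, hw, hFw⟩ := hF.exists_reach_mem_of_even hg (by omega) heven
    exact ⟨w, hvw, hw, by omega⟩
  · obtain ⟨w, hvw, hgoal, hFw⟩ := hF.exists_reach_goal_of_odd hg hodd
    rw [hF.goal_iff] at hgoal
    split_ifs at hgoal with htop
    · exact ⟨w, hvw, hgoal, by omega⟩
    · obtain ⟨y, hy, hFy⟩ := hgoal.resolve_left (by omega)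
      obtain ⟨z, hyz, hz, hFz⟩ := hF.exists_reach_mem_of_even hg (v := y) (by omega) (by grind)
      exact ⟨z, hvw.trans (.head hy hyz), hz, by omega⟩

theorem live_of_goal (hodd : Odd (F v)) (hgoal : Goal top (v ∈ B) (S v) F) :
    Live top B S F v := by
  refine live_of_discharge ?_
  rw [Discharge, ← hF.eq_rankStep, if_neg (Nat.not_even_iff_odd.2 hodd)]
  exact .inl hgoal

theorem live_of_live (hodd : Odd (F v)) (hw : w ∈ S v) (hFw : F w = F v)
    (hlive : Live top B S F w) : Live top B S F v := by
  refine live_of_discharge ?_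
  rw [Discharge, ← hF.eq_rankStep, if_neg (Nat.not_even_iff_odd.2 hodd)]
  exact .inr ⟨w, hF.mem_sameRank_iff.2 ⟨hw, hFw⟩, hlive⟩

theorem live_of_reach_mem (h : Reach S v w) (hw : w ∈ B) (hodd : Odd (F v)) (hle : F v ≤ F w + 1)
    (htop : F v = top → F w = top) : Live top B S F v := by
  induction h using Relation.ReflTransGen.head_induction_on with
  | refl =>
    have hFw : F w = top := by
      by_contra hne
      exact Nat.not_even_iff_odd.2 hodd (hF.even_of_mem hw hne)
    exact hF.live_of_goal hodd (hF.goal_iff.2 (by rwa [if_pos hFw]))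
  | @head v y hy hyw ih =>
    have hyv := hF.le_of_mem hy
    have hwy := hF.le_of_reach hyw
    by_cases hFy : F y = F v
    · exact hF.live_of_live hodd hy hFy
        (ih (hFy ▸ hodd) (hFy.trans_le hle) fun h => htop (hFy.symm.trans h))
    · refine hF.live_of_goal hodd (hF.goal_iff.2 ?_)
      rw [if_neg fun h => hFy (by have := htop h; omega)]
      exact .inr ⟨y, hy, by omega⟩

end IsRanking

open Classical in
/-- The nodes removed from the graph before round `r` of Kupferman and Vardi's ranking procedure,
which alternately removes the nodes without an infinite path and the nodes that reach no Büchi node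
in what is left of the graph. -/
noncomputable def stage (B : Set V) (S : V → Finset V) : ℕ → Set V
  | 0 => ∅
  | r + 1 =>
    if Even r then {v | Acc (fun w v => w ∈ S v ∧ w ∉ stage B S r) v}
    else {v | ∀ w, Reach S v w → w ∈ B → w ∈ stage B S r}

/-- `F v` is the round in which `v` is removed, or `top` if `v` survives the first `top` rounds. -/
structure IsStageRank (top : ℕ) (B : Set V) (S : V → Finset V) (F : V → ℕ) : Prop where
  le_top : ∀ v, F v ≤ top
  lt_iff : ∀ v, ∀ r ≤ top, F v < r ↔ v ∈ stage B S r

/-- The nodes removed because they reach no Büchi node after `l + 1` removals of the nodes without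
an infinite path. -/
def oddLayer (B : Set V) (S : V → Finset V) (l : ℕ) : Set V :=
  stage B S (2 * l + 2) \ stage B S (2 * l + 1)

section Stage

variable {r : ℕ}

theorem mem_stage_succ_of_even (hr : Even r) :
    v ∈ stage B S (r + 1) ↔ Acc (fun w v => w ∈ S v ∧ w ∉ stage B S r) v := by
  rw [stage, if_pos hr, Set.mem_ofPred_eq]

theorem mem_stage_succ_of_odd (hr : Odd r) :
    v ∈ stage B S (r + 1) ↔ ∀ w, Reach S v w → w ∈ B → w ∈ stage B S r := by
  rw [stage, if_neg (Nat.not_even_iff_odd.2 hr), Set.mem_ofPred_eq]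

theorem stage_subset_succ_of_closed (h : ∀ v ∈ stage B S r, ∀ w ∈ S v, w ∈ stage B S r) :
    stage B S r ⊆ stage B S (r + 1) := by
  intro v hv
  rcases Nat.even_or_odd r with hr | hr
  · exact (mem_stage_succ_of_even hr).2 (.intro v fun w hw => absurd (h v hv w hw.1) hw.2)
  · refine (mem_stage_succ_of_odd hr).2 fun w hvw hw => ?_
    clear hw
    induction hvw with
    | refl => exact hv
    | tail _ hw ih => exact h _ ih _ hw

theorem mem_stage_of_mem (hv : v ∈ stage B S r) (hw : w ∈ S v) : w ∈ stage B S r := by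
  induction r generalizing v w with
  | zero => exact hv.elim
  | succ r ih =>
    rcases Nat.even_or_odd r with hr | hr
    · by_cases hwr : w ∈ stage B S r
      · exact stage_subset_succ_of_closed (fun _ hv _ hw => ih hv hw) hwr
      · rw [mem_stage_succ_of_even hr] at hv ⊢
        exact hv.inv ⟨hw, hwr⟩
    · rw [mem_stage_succ_of_odd hr] at hv ⊢
      exact fun z hwz => hv z (.head hw hwz)

theorem stage_mono : Monotone (stage B S) :=
  monotone_nat_of_le_succ fun _ =>
    stage_subset_succ_of_closed fun _ hv _ hw => mem_stage_of_mem hv hw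

theorem mem_stage_succ_iff_of_even (hr : Even r) :
    v ∈ stage B S (r + 1) ↔ ∀ w ∈ S v, w ∈ stage B S (r + 1) := by
  refine ⟨fun hv w hw => mem_stage_of_mem hv hw, fun h => ?_⟩
  exact (mem_stage_succ_of_even hr).2
    (.intro v fun w hw => (mem_stage_succ_of_even hr).1 (h w hw.1))

theorem mem_stage_succ_iff_of_odd (hr : Odd r) :
    v ∈ stage B S (r + 1) ↔ (∀ w ∈ S v, w ∈ stage B S (r + 1)) ∧ (v ∈ B → v ∈ stage B S r) := by
  refine ⟨fun hv => ⟨fun w hw => mem_stage_of_mem hv hw,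
    (mem_stage_succ_of_odd hr).1 hv v .refl⟩, fun ⟨hS, hB⟩ => ?_⟩
  refine (mem_stage_succ_of_odd hr).2 fun w hvw hw => ?_
  rcases hvw.cases_head with rfl | ⟨y, hy, hyw⟩
  · exact hB hw
  · exact (mem_stage_succ_of_odd hr).1 (hS y hy) w hyw hw

end Stage

namespace IsRanking

variable {r : ℕ} (hF : IsRanking top B S F)
include hF

theorem le_iff_acc_of_even (hg : IsTimer top B S F g) (hr : Even r) :
    F v ≤ r ↔ Acc (fun w v => w ∈ S v ∧ r ≤ F w) v := by
  refine ⟨fun hv => ?_, fun hv => ?_⟩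
  · induction hk : g v using Nat.strong_induction_on generalizing v with
    | _ k ih =>
      refine .intro v fun w ⟨hw, hrw⟩ => ?_
      have hwv := hF.le_of_mem hw
      have heven : Even (F v) := (hv.antisymm (hrw.trans hwv)) ▸ hr
      have hlt : g w < k := hk ▸ hF.lt_of_even hg heven hw (by omega)
      exact ih _ hlt (by omega) rfl
  · induction hv with
    | intro v _ ih =>
      rw [hF.eq_rankStep v, rankStep_le_iff_of_even hr]
      exact fun w hw => (le_total (F w) r).elim id fun hrw => ih w ⟨hw, hrw⟩

theorem le_iff_forall_reach_of_odd (hg : IsTimer top B S F g) (hr : Odd r) (hrt : r < top) :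
    F v ≤ r ↔ ∀ w, Reach S v w → w ∈ B → F w < r := by
  refine ⟨fun hv w hvw hw => ?_, fun h => ?_⟩
  · have hwr : F w ≤ r := (hF.le_of_reach hvw).trans hv
    refine hwr.lt_of_ne ?_
    rintro rfl
    exact Nat.not_even_iff_odd.2 hr (hF.even_of_mem hw hrt.ne)
  · by_contra! hv
    obtain ⟨w, hvw, hw, hFw⟩ := hF.exists_reach_mem hg (lt_of_le_of_lt hr.pos hv)
    have := h w hvw hw
    omega

theorem isStageRank (hg : IsTimer top B S F g) : IsStageRank top B S F := by
  refine ⟨hF.le_top, fun v r hr => ?_⟩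
  induction r generalizing v with
  | zero => exact iff_of_false (Nat.not_lt_zero _) (Set.notMem_empty v)
  | succ r ih =>
    have ih (w) : F w < r ↔ w ∈ stage B S r := ih w (by omega)
    rw [Nat.lt_succ_iff]
    rcases Nat.even_or_odd r with heven | hodd
    · simp only [hF.le_iff_acc_of_even hg heven, mem_stage_succ_of_even heven, ← ih, not_lt]
    · simp only [hF.le_iff_forall_reach_of_odd hg hodd hr, mem_stage_succ_of_odd hodd, ih]

end IsRanking

theorem exists_isStageRank (top : ℕ) (B : Set V) (S : V → Finset V) :
    ∃ F, IsStageRank top B S F := by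
  let removal (v : V) : Set ℕ := {r | r = top ∨ v ∈ stage B S (r + 1)}
  refine ⟨fun v => sInf (removal v), fun v => Nat.sInf_le (.inl rfl), fun v r hr => ?_⟩
  refine ⟨fun h => ?_, fun h => ?_⟩
  · have hmem : sInf (removal v) ∈ removal v := Nat.sInf_mem ⟨top, .inl rfl⟩
    exact stage_mono (Nat.succ_le_of_lt h) (hmem.resolve_left (by omega))
  · cases r with
    | zero => exact h.elim
    | succ r => exact Nat.lt_succ_of_le (Nat.sInf_le (.inr h))

namespace IsStageRank

variable (hF : IsStageRank top B S F)
include hF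

theorem le_iff {r : ℕ} (hr : r < top) : F v ≤ r ↔ v ∈ stage B S (r + 1) :=
  Nat.lt_succ_iff.symm.trans (hF.lt_iff v (r + 1) hr)

theorem unique {F' : V → ℕ} (hF' : IsStageRank top B S F') : F = F' := by
  refine funext fun v => eq_of_forall_ge_iff fun r => ?_
  rcases le_or_gt top r with hr | hr
  · exact iff_of_true ((hF.le_top v).trans hr) ((hF'.le_top v).trans hr)
  · rw [hF.le_iff hr, hF'.le_iff hr]

theorem isRanking : IsRanking top B S F := by
  refine ⟨hF.le_top, fun v => eq_of_forall_ge_iff fun r => ?_⟩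
  rcases le_or_gt top r with hr | hr
  · exact iff_of_true ((hF.le_top v).trans hr) ((rankStep_le fun w _ => hF.le_top w).trans hr)
  rcases Nat.even_or_odd r with heven | hodd
  · simp only [rankStep_le_iff_of_even heven, hF.le_iff hr, ← mem_stage_succ_iff_of_even heven]
  · obtain ⟨l, rfl⟩ := hodd
    simp only [rankStep_le_iff_of_odd ⟨l, rfl⟩ hr, hF.le_iff hr, hF.lt_iff _ _ hr.le,
      ← mem_stage_succ_iff_of_even (even_two_mul l), ← mem_stage_succ_iff_of_odd ⟨l, rfl⟩]

theorem live_of_even (htop : Odd top) (heven : Even (F v)) : Live top B S F v := by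
  have hlt : F v < top := (hF.le_top v).lt_of_ne fun h => Nat.not_even_iff_odd.2 htop (h ▸ heven)
  have hacc := (mem_stage_succ_of_even heven).1 ((hF.le_iff hlt).1 le_rfl)
  generalize hr : F v = r at hacc
  induction hacc with
  | intro v _ ih =>
    refine live_of_discharge ?_
    rw [Discharge, ← hF.isRanking.eq_rankStep, if_pos heven]
    intro w hw
    obtain ⟨hwS, hFw⟩ := hF.isRanking.mem_sameRank_iff.1 hw
    have hwr : w ∉ stage B S r := by
      rw [← hF.lt_iff w r (by omega)]
      omega
    exact ih w ⟨hwS, hwr⟩ (hFw ▸ heven) (hFw ▸ hlt) (hFw.trans hr)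

theorem exists_reach_mem_of_notMem_stage {r : ℕ} (hr : Odd r) (hrt : r ≤ top)
    (hv : v ∉ stage B S (r + 1)) : ∃ w, Reach S v w ∧ w ∈ B ∧ r ≤ F w := by
  simpa only [mem_stage_succ_of_odd hr, ← hF.lt_iff _ r hrt, not_forall, not_lt, exists_prop]
    using hv

theorem live_of_odd (htop : Odd top) (hstage : stage B S (top + 1) ⊆ stage B S top)
    (hodd : Odd (F v)) : Live top B S F v := by
  have hrank := hF.isRanking
  have hvtop := hF.le_top v
  obtain ⟨l, hl⟩ := hodd
  by_cases hFv : F v = top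
  · have hv : v ∉ stage B S (top + 1) := fun h =>
      ((hF.lt_iff v top le_rfl).2 (hstage h)).ne hFv
    obtain ⟨w, hvw, hw, hFw⟩ := hF.exists_reach_mem_of_notMem_stage htop le_rfl hv
    exact hrank.live_of_reach_mem hvw hw ⟨l, hl⟩ (by omega) fun _ => (hF.le_top w).antisymm hFw
  cases l with
  | zero => exact hrank.live_of_goal ⟨0, hl⟩ (hrank.goal_iff.2 (by rw [if_neg hFv]; exact .inl hl))
  | succ l =>
    have hv : v ∉ stage B S (2 * l + 2) := by
      rw [← hF.lt_iff v _ (by omega)]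
      omega
    obtain ⟨w, hvw, hw, hFw⟩ :=
      hF.exists_reach_mem_of_notMem_stage (r := 2 * l + 1) ⟨l, rfl⟩ (by omega) hv
    have hwv := hrank.le_of_reach hvw
    obtain ⟨m, hm⟩ := hrank.even_of_mem hw (by omega)
    exact hrank.live_of_reach_mem hvw hw ⟨l + 1, hl⟩ (by omega) (by omega)

end IsStageRank

theorem disjoint_oddLayer {k l : ℕ} (hkl : k < l) : Disjoint (oddLayer B S k) (oddLayer B S l) :=
  Set.disjoint_left.2 fun _ hk hl => hl.2 (stage_mono (by omega) hk.1)

theorem notMem_of_mem_oddLayer {l : ℕ} (hv : v ∈ oddLayer B S l) : v ∉ B := fun hB =>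
  hv.2 ((mem_stage_succ_of_odd ⟨l, rfl⟩).1 hv.1 v .refl hB)

theorem exists_mem_oddLayer {l : ℕ} (hv : v ∈ oddLayer B S l) : ∃ w ∈ S v, w ∈ oddLayer B S l := by
  have := hv.2
  rw [mem_stage_succ_iff_of_even (even_two_mul l)] at this
  push Not at this
  obtain ⟨w, hw, hwl⟩ := this
  exact ⟨w, hw, mem_stage_of_mem hv.1 hw, hwl⟩

theorem oddLayer_nonempty_of_mem_stage {l : ℕ} (hv : v ∈ stage B S (2 * l + 3))
    (hv' : v ∉ stage B S (2 * l + 1)) : (oddLayer B S l).Nonempty := by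
  rw [mem_stage_succ_of_even ⟨l + 1, by ring⟩] at hv
  induction hv with
  | intro v _ ih =>
    rw [mem_stage_succ_iff_of_even (even_two_mul l)] at hv'
    push Not at hv'
    obtain ⟨w, hw, hwl⟩ := hv'
    by_cases h : w ∈ stage B S (2 * l + 2)
    · exact ⟨w, h, hwl⟩
    · exact ih w ⟨hw, h⟩ hwl

theorem oddLayer_nonempty_of_succ {l : ℕ} (h : (oddLayer B S (l + 1)).Nonempty) :
    (oddLayer B S l).Nonempty := by
  obtain ⟨v, hv, hv'⟩ := h
  have hv2 : v ∉ stage B S (2 * l + 2) := fun hv2 => hv' (stage_mono (by omega) hv2)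
  rw [mem_stage_succ_of_odd ⟨l, rfl⟩] at hv2
  push Not at hv2
  obtain ⟨w, hvw, hw, hwl⟩ := hv2
  exact oddLayer_nonempty_of_mem_stage
    ((mem_stage_succ_of_odd ⟨l + 1, rfl⟩).1 hv w hvw hw) hwl

theorem oddLayer_nonempty_of_le {k l : ℕ} (hkl : k ≤ l) (h : (oddLayer B S l).Nonempty) :
    (oddLayer B S k).Nonempty :=
  Nat.decreasingInduction (fun _ _ => oddLayer_nonempty_of_succ) h hkl

end Graph

section RunGraph

variable {Q : Type*}

/-- The graph of the runs through the levelled successor functions `s`: its nodes at level `i` are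
the pairs `(i, x)`, and the successors of `(i, x)` are the pairs `(i + 1, y)` with `y ∈ s i x`. -/
def runGraph (s : ℕ → Q → Finset Q) (v : ℕ × Q) : Finset (ℕ × Q) :=
  (s v.1 v.2).map (.sectR (v.1 + 1) Q)

variable {B : Set Q} {s : ℕ → Q → Finset Q}

theorem mem_runGraph {v w : ℕ × Q} :
    w ∈ runGraph s v ↔ w.1 = v.1 + 1 ∧ w.2 ∈ s v.1 v.2 := by
  obtain ⟨i, y⟩ := w
  simp only [runGraph, Finset.mem_map, Function.Embedding.sectR_apply, Prod.mk.injEq]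
  grind

theorem rankStep_runGraph (top : ℕ) (b : Prop) (F : ℕ × Q → ℕ) (v : ℕ × Q) :
    rankStep top b (runGraph s v) F = rankStep top b (s v.1 v.2) fun y => F (v.1 + 1, y) :=
  rankStep_map _ F

theorem discharge_runGraph (top : ℕ) (b : Prop) (F : ℕ × Q → ℕ) (Z : ℕ × Q → Prop) (v : ℕ × Q) :
    Discharge top b (runGraph s v) F Z ↔
      Discharge top b (s v.1 v.2) (fun y => F (v.1 + 1, y)) fun y => Z (v.1 + 1, y) :=
  discharge_map _ F Z

theorem timer_runGraph (top : ℕ) (b : Prop) (F t : ℕ × Q → ℕ) (v : ℕ × Q) :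
    timer top b (runGraph s v) F t =
      timer top b (s v.1 v.2) (fun y => F (v.1 + 1, y)) fun y => t (v.1 + 1, y) :=
  timer_map _ F t

theorem exists_path_runGraph_iff {q : Q} :
    (∃ R : ℕ → ℕ × Q, R 0 = (0, q) ∧ (∀ j, R (j + 1) ∈ runGraph s (R j)) ∧
        ∃ᶠ j in Filter.atTop, R j ∈ Prod.snd ⁻¹' B) ↔
      ∃ r : ℕ → Q, r 0 = q ∧ (∀ j, r (j + 1) ∈ s j (r j)) ∧ ∃ᶠ j in Filter.atTop, r j ∈ B := by
  simp only [mem_runGraph]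
  refine ⟨fun ⟨R, h0, hR, hB⟩ => ?_, fun ⟨r, h0, hr, hB⟩ => ?_⟩
  · have hlevel (j : ℕ) : (R j).1 = j := by
      induction j with
      | zero => rw [h0]
      | succ j ih => rw [(hR j).1, ih]
    have hstep (j : ℕ) : (R (j + 1)).2 ∈ s j (R j).2 := by simpa only [hlevel] using (hR j).2
    exact ⟨fun j => (R j).2, congrArg Prod.snd h0, hstep, hB⟩
  · exact ⟨fun j => (j, r j), congrArg (Prod.mk 0) h0, fun j => ⟨rfl, hr j⟩, hB⟩

theorem exists_mem_oddLayer_of_le {l : ℕ}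
    (h : (oddLayer (Prod.snd ⁻¹' B) (runGraph s) l).Nonempty) :
    ∃ m, ∀ i, m ≤ i → ∃ x, (i, x) ∈ oddLayer (Prod.snd ⁻¹' B) (runGraph s) l := by
  obtain ⟨⟨m, x⟩, hx⟩ := h
  refine ⟨m, fun i hi => ?_⟩
  induction i, hi using Nat.le_induction with
  | base => exact ⟨x, hx⟩
  | succ i _ ih =>
    obtain ⟨y, hy⟩ := ih
    obtain ⟨⟨j, z⟩, hz, hzl⟩ := exists_mem_oddLayer hy
    obtain rfl : j = i + 1 := (mem_runGraph.1 hz).1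
    exact ⟨z, hzl⟩

/-- Far enough down the run graph all nonempty odd layers have a node, and as these nodes are
distinct and not Büchi, there are fewer of them than states. -/
theorem oddLayer_runGraph_eq_empty [Finite Q] (hB : B.Nonempty) {n : ℕ} (hn : Nat.card Q ≤ n + 1) :
    oddLayer (Prod.snd ⁻¹' B) (runGraph s) n = ∅ := by
  by_contra! hne
  choose m hm using fun l : Fin (n + 1) =>
    exists_mem_oddLayer_of_le (oddLayer_nonempty_of_le (Nat.lt_succ_iff.1 l.2) hne)
  choose x hx using fun l => hm l (Finset.univ.sup m) (Finset.le_sup (Finset.mem_univ l))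
  have hinj : Function.Injective x := Function.Injective.of_lt_imp_ne fun k l hkl heq =>
    Set.disjoint_left.1 (disjoint_oddLayer hkl) (hx k) (heq ▸ hx l)
  have hbij : Function.Bijective x := hinj.bijective_of_nat_card_le (by simpa using hn)
  obtain ⟨q, hq⟩ := hB
  obtain ⟨l, rfl⟩ := hbij.surjective q
  exact notMem_of_mem_oddLayer (hx l) hq

end RunGraph

section Encoding

variable {Q : Type*}

theorem card_image_le_card_image {α β : Type*} [DecidableEq α] [DecidableEq β] {Y : Finset Q}
    {f : Q → α} {g : Q → β} (h : ∀ x ∈ Y, ∀ y ∈ Y, g x = g y → f x = f y) :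
    (Y.image f).card ≤ (Y.image g).card := by
  obtain ⟨Y', hY', hinj, heq⟩ := Finset.exists_subset_injOn_image_eq_of_surjOn (f := f) Y
    (Y.image f) (by simp [Set.SurjOn])
  have hg : Set.InjOn g Y' := fun x hx y hy hxy => hinj hx hy (h x (hY' hx) y (hY' hy) hxy)
  calc (Y.image f).card = Y'.card := by rw [← heq, Finset.card_image_of_injOn hinj]
    _ = (Y'.image g).card := (Finset.card_image_of_injOn hg).symm
    _ ≤ (Y.image g).card := Finset.card_le_card (Finset.image_subset_image hY')

theorem card_image_eq_card_image {α β : Type*} [DecidableEq α] [DecidableEq β] {Y : Finset Q}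
    {f : Q → α} {g : Q → β} (h : ∀ x ∈ Y, ∀ y ∈ Y, f x = f y ↔ g x = g y) :
    (Y.image f).card = (Y.image g).card :=
  (card_image_le_card_image fun x hx y hy => (h x hx y hy).2).antisymm
    (card_image_le_card_image fun x hx y hy => (h x hx y hy).1)

variable [Fintype Q]

/-- The position of `f x` among the values of `f`. -/
def levelIndex {α : Type*} [LinearOrder α] (f : Q → α) (x : Q) : ℕ :=
  ((Finset.univ.filter (f · < f x)).image f).card

/-- The position of a state in the lexicographic order of rank and timer, shifted by its rank so
that the rank can be recovered. -/
def encode (F t : Q → ℕ) (x : Q) : ℕ :=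
  F x + levelIndex (fun y => toLex (F y, t y)) x

/-- The rank of a state whose priorities are given by `encode`. Truncating at `top` makes the value
a rank for all other priorities, too. -/
def decode (top : ℕ) (p : Q → ℕ) (x : Q) : ℕ :=
  min top (p x - levelIndex p x)

section LevelIndex

variable {α β : Type*} [LinearOrder α] [LinearOrder β] {f : Q → α} {g : Q → β} {x y : Q}

theorem levelIndex_congr (h : ∀ x y, f x < f y ↔ g x < g y) : levelIndex f = levelIndex g := by
  have heq (x y : Q) : f x = f y ↔ g x = g y := by
    simp only [le_antisymm_iff, ← not_lt, h]
  funext x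
  simp only [levelIndex, h]
  exact card_image_eq_card_image fun y _ z _ => heq y z

theorem levelIndex_strictMono (h : f x < f y) : levelIndex f x < levelIndex f y := by
  refine Finset.card_lt_card (Finset.ssubset_iff_of_subset ?_ |>.2 ⟨f x, ?_, ?_⟩)
  · exact Finset.image_subset_image fun z hz => by
      simp only [Finset.mem_filter_univ] at hz ⊢
      exact hz.trans h
  · exact Finset.mem_image_of_mem f (by simpa using h)
  · simp +contextual [ne_of_lt]

theorem levelIndex_lt_card (f : Q → α) (x : Q) : levelIndex f x < Fintype.card Q :=
  Finset.card_image_le.trans_lt (Finset.card_lt_univ_of_notMem (x := x) (by simp))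

end LevelIndex

variable {top : ℕ} {F t t' : Q → ℕ} {x y : Q}

theorem encode_lt_iff : encode F t x < encode F t y ↔ toLex (F x, t x) < toLex (F y, t y) := by
  have hmono {x y : Q} (h : toLex (F x, t x) < toLex (F y, t y)) : encode F t x < encode F t y :=
    add_lt_add_of_le_of_lt (Prod.Lex.monotone_fst _ _ h.le) (levelIndex_strictMono h)
  refine ⟨fun h => ?_, hmono⟩
  by_contra! hle
  rcases hle.lt_or_eq with hlt | heq
  · exact (hmono hlt).not_gt h
  · have hF : F y = F x := congrArg Prod.fst (toLex.injective heq)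
    have ht : t y = t x := congrArg Prod.snd (toLex.injective heq)
    exact h.ne (by simp only [encode, levelIndex, hF, ht])

theorem encode_lt_iff_of_eq (h : F x = F y) : encode F t x < encode F t y ↔ t x < t y := by
  simp [encode_lt_iff, Prod.Lex.toLex_lt_toLex, h]

theorem encode_congr (h : ∀ x y, F x = F y → (t x < t y ↔ t' x < t' y)) :
    encode F t = encode F t' := by
  have hlex (x y : Q) :
      toLex (F x, t x) < toLex (F y, t y) ↔ toLex (F x, t' x) < toLex (F y, t' y) := by
    simp only [Prod.Lex.toLex_lt_toLex]
    exact or_congr_right (and_congr_right fun hF => h x y hF)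
  funext x
  simp only [encode, levelIndex_congr hlex]

theorem encode_lt (hF : F x ≤ top) : encode F t x < top + Fintype.card Q :=
  add_lt_add_of_le_of_lt hF (levelIndex_lt_card _ x)

theorem decode_encode (hF : ∀ x, F x ≤ top) : decode top (encode F t) = F := by
  funext x
  rw [decode, levelIndex_congr fun x y => encode_lt_iff, encode, Nat.add_sub_cancel,
    min_eq_right (hF x)]

theorem decode_le (p : Q → ℕ) (x : Q) : decode top p x ≤ top :=
  min_le_left _ _

end Encoding

section Priority

variable {Q : Type*}

/-- The values of `t` above `t x` on the states of the same rank as `x`. -/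
def levelsAbove [Fintype Q] (F t : Q → ℕ) (x : Q) : Finset ℕ :=
  (Finset.univ.filter fun z => F z = F x ∧ t x < t z).image t

/-- The obligations of all states of rank `r` are discharged even if those successors do not count
whose timers, given by `p`, are maximal for their rank `F`. -/
def Marked (top : ℕ) (B : Set Q) (s : Q → Finset Q) (F p : Q → ℕ) (r : ℕ) : Prop :=
  ∀ x, rankStep top (x ∈ B) (s x) F = r →
    Discharge top (x ∈ B) (s x) F fun y => ∃ z, F z = F y ∧ p y < p z

/-- The priorities of all states at some level of the run graph, given the priorities `p` at the
next level; in the comparison of timers, priorities are as good as timers. -/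
noncomputable def step [Fintype Q] (top : ℕ) (B : Set Q) (s : Q → Finset Q) (p : Q → ℕ) : Q → ℕ :=
  encode (fun x => rankStep top (x ∈ B) (s x) (decode top p))
    fun x => timer top (x ∈ B) (s x) (decode top p) p

/-- Every rank is marked infinitely often in the sequence of priorities `p`. -/
def Fair [Fintype Q] (top : ℕ) (B : Set Q) (s : ℕ → Q → Finset Q) (p : ℕ → Q → ℕ) : Prop :=
  ∀ r ≤ top, ∃ᶠ i in Filter.atTop, Marked top B (s i) (decode top (p (i + 1))) (p (i + 1)) r

/-- The ranks in a run graph that are given by the priorities `p` at its levels. -/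
def runRank [Fintype Q] (top : ℕ) (p : ℕ → Q → ℕ) : ℕ × Q → ℕ :=
  Function.uncurry fun i => decode top (p i)

/-- The number of priorities above that of `v` among the nodes of the same level and rank. -/
def levelCount [Fintype Q] (top : ℕ) (p : ℕ → Q → ℕ) (v : ℕ × Q) : ℕ :=
  (levelsAbove (decode top (p v.1)) (p v.1) v.2).card

section OneStep

variable {top : ℕ} {B : Set Q} {s : Q → Finset Q} {F p t : Q → ℕ} {x y : Q}

theorem timer_lt_timer_iff (hpt : ∀ y y', F y = F y' → (p y < p y' ↔ t y < t y'))
    (hxy : rankStep top (x ∈ B) (s x) F = rankStep top (y ∈ B) (s y) F) :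
    timer top (x ∈ B) (s x) F p < timer top (y ∈ B) (s y) F p ↔
      timer top (x ∈ B) (s x) F t < timer top (y ∈ B) (s y) F t := by
  have hlt {x y z z'} (hxy : rankStep top (x ∈ B) (s x) F = rankStep top (y ∈ B) (s y) F)
      (hz : z ∈ sameRank top (x ∈ B) (s x) F) (hz' : z' ∈ sameRank top (y ∈ B) (s y) F) :
      p z < p z' ↔ t z < t z' :=
    hpt z z' (by rw [(mem_sameRank.1 hz).2, (mem_sameRank.1 hz').2, hxy])
  exact ⟨timer_lt_timer fun z hz z' hz' _ => (hlt hxy hz hz').1,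
    timer_lt_timer fun z hz z' hz' _ => (hlt hxy hz hz').2⟩

variable [Fintype Q]

theorem mem_levelsAbove {k : ℕ} : k ∈ levelsAbove F t x ↔ ∃ z, F z = F x ∧ t x < t z ∧ t z = k := by
  simp [levelsAbove, and_assoc]

theorem card_levelsAbove_le : (levelsAbove F t x).card ≤ Fintype.card Q :=
  Finset.card_image_le.trans (Finset.card_le_univ _)

theorem card_levelsAbove_encode :
    (levelsAbove F (encode F t) x).card = (levelsAbove F t x).card := by
  have hfilter : Finset.univ.filter (fun z => F z = F x ∧ encode F t x < encode F t z) =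
      Finset.univ.filter (fun z => F z = F x ∧ t x < t z) :=
    Finset.filter_congr fun z _ => and_congr_right fun hz => encode_lt_iff_of_eq hz.symm
  rw [levelsAbove, levelsAbove, hfilter]
  refine card_image_eq_card_image fun y hy z hz => ?_
  simp only [Finset.mem_filter_univ] at hy hz
  have hyz : F y = F z := hy.1.trans hz.1.symm
  simp only [le_antisymm_iff, ← not_lt, encode_lt_iff_of_eq hyz, encode_lt_iff_of_eq hyz.symm]

section

variable (hy : y ∈ sameRank top (x ∈ B) (s x) F) (hlt : p y < timer top (x ∈ B) (s x) F p)
include hy hlt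

theorem levelsAbove_timer_subset :
    levelsAbove (fun x => rankStep top (x ∈ B) (s x) F) (fun x => timer top (x ∈ B) (s x) F p) x ⊆
      (levelsAbove F p y).image (· + 1) := by
  intro k hk
  obtain ⟨z, hz, hxz, rfl⟩ := mem_levelsAbove.1 hk
  obtain ⟨a, ha, hak⟩ := exists_add_one_eq_timer (pos_of_gt hxz)
  refine Finset.mem_image.2 ⟨p a, mem_levelsAbove.2 ⟨a, ?_, by omega, rfl⟩, hak⟩
  rw [(mem_sameRank.1 ha).2, (mem_sameRank.1 hy).2, hz]

theorem card_levelsAbove_timer_le :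
    (levelsAbove (fun x => rankStep top (x ∈ B) (s x) F)
      (fun x => timer top (x ∈ B) (s x) F p) x).card ≤ (levelsAbove F p y).card :=
  (Finset.card_le_card (levelsAbove_timer_subset hy hlt)).trans Finset.card_image_le

theorem card_levelsAbove_timer_lt
    (hmark : Marked top B s F p (rankStep top (x ∈ B) (s x) F)) :
    (levelsAbove (fun x => rankStep top (x ∈ B) (s x) F)
      (fun x => timer top (x ∈ B) (s x) F p) x).card < (levelsAbove F p y).card := by
  have hFy : F y = rankStep top (x ∈ B) (s x) F := (mem_sameRank.1 hy).2
  obtain ⟨w, hw, hmax⟩ := (Finset.univ.filter (F · = F y)).exists_max_image p ⟨y, by simp⟩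
  simp only [Finset.mem_filter_univ] at hw hmax
  have htimer (z : Q) (hz : rankStep top (z ∈ B) (s z) F = rankStep top (x ∈ B) (s x) F) :
      timer top (z ∈ B) (s z) F p ≤ p w :=
    timer_le_iff.2 <| (hmark z hz).mono fun a ha ⟨c, hca, hac⟩ =>
      hac.trans_le (hmax c (by rw [hca, (mem_sameRank.1 ha).2, hz, hFy]))
  rw [← Finset.card_image_of_injective (levelsAbove F p y) (add_left_injective 1)]
  refine Finset.card_lt_card ((Finset.ssubset_iff_of_subset
    (levelsAbove_timer_subset hy hlt)).2 ⟨p w + 1, ?_, fun h => ?_⟩)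
  · exact Finset.mem_image_of_mem _
      (mem_levelsAbove.2 ⟨w, hw, hlt.trans_le (htimer x rfl), rfl⟩)
  · obtain ⟨z, hz, -, hzw⟩ := mem_levelsAbove.1 h
    have := htimer z hz
    omega

end

theorem step_lt (p : Q → ℕ) (x : Q) : step top B s p x < top + Fintype.card Q :=
  encode_lt (rankStep_le fun y _ => decode_le p y)

theorem decode_step (p : Q → ℕ) :
    decode top (step top B s p) = fun x => rankStep top (x ∈ B) (s x) (decode top p) :=
  decode_encode fun _ => rankStep_le fun y _ => decode_le p y

end OneStep

variable [Fintype Q] {top : ℕ} {B : Set Q} {s : ℕ → Q → Finset Q}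

section Run

variable {p : ℕ → Q → ℕ} (hp : IsBackRun (step top B) s p)
include hp

theorem decode_run (i : ℕ) (x : Q) :
    decode top (p i) x = rankStep top (x ∈ B) (s i x) (decode top (p (i + 1))) := by
  rw [hp i, decode_step]

theorem isRanking_runRank : IsRanking top (Prod.snd ⁻¹' B) (runGraph s) (runRank top p) where
  le_top _ := decode_le _ _
  eq_rankStep v := by
    rw [rankStep_runGraph]
    exact decode_run hp v.1 v.2

theorem run_eq_encode_timer (i : ℕ) :
    p i = encode (decode top (p i))
      fun x => timer top (x ∈ B) (s i x) (decode top (p (i + 1))) (p (i + 1)) := by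
  rw [funext (decode_run hp i)]
  exact hp i

theorem run_lt_run_iff {i : ℕ} {x y : Q} (hxy : decode top (p i) x = decode top (p i) y) :
    p i x < p i y ↔ timer top (x ∈ B) (s i x) (decode top (p (i + 1))) (p (i + 1)) <
      timer top (y ∈ B) (s i y) (decode top (p (i + 1))) (p (i + 1)) := by
  rw [run_eq_encode_timer hp i, encode_lt_iff_of_eq hxy]

theorem levelCount_eq_timer (i : ℕ) (x : Q) :
    levelCount top p (i, x) =
      (levelsAbove (fun x => rankStep top (x ∈ B) (s i x) (decode top (p (i + 1))))
        (fun x => timer top (x ∈ B) (s i x) (decode top (p (i + 1))) (p (i + 1))) x).card := by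
  rw [levelCount, hp i, decode_step]
  exact card_levelsAbove_encode

theorem exists_not_live_succ {i : ℕ} {x : Q}
    (hx : ¬Live top (Prod.snd ⁻¹' B) (runGraph s) (runRank top p) (i, x)) :
    ∃ y, ¬Live top (Prod.snd ⁻¹' B) (runGraph s) (runRank top p) (i + 1, y) ∧
      decode top (p (i + 1)) y = decode top (p i) x ∧
      levelCount top p (i, x) ≤ levelCount top p (i + 1, y) ∧
      (Marked top B (s i) (decode top (p (i + 1))) (p (i + 1)) (decode top (p i) x) →
        levelCount top p (i, x) < levelCount top p (i + 1, y)) := by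
  obtain ⟨y, hy, hlt, hlive⟩ : ∃ y ∈ sameRank top (x ∈ B) (s i x) (decode top (p (i + 1))),
      p (i + 1) y < timer top (x ∈ B) (s i x) (decode top (p (i + 1))) (p (i + 1)) ∧
      ¬Live top (Prod.snd ⁻¹' B) (runGraph s) (runRank top p) (i + 1, y) := by
    contrapose! hx
    refine live_of_discharge ((discharge_runGraph ..).2 ?_)
    exact (discharge_lt_timer (p (i + 1))).mono hx
  rw [decode_run hp, levelCount_eq_timer hp]
  exact ⟨y, hlive, (mem_sameRank.1 hy).2, card_levelsAbove_timer_le hy hlt,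
    card_levelsAbove_timer_lt hy hlt⟩

theorem exists_not_live_of_le {i j : ℕ} {x : Q} (hij : i ≤ j)
    (hx : ¬Live top (Prod.snd ⁻¹' B) (runGraph s) (runRank top p) (i, x)) :
    ∃ y, ¬Live top (Prod.snd ⁻¹' B) (runGraph s) (runRank top p) (j, y) ∧
      decode top (p j) y = decode top (p i) x ∧
      levelCount top p (i, x) ≤ levelCount top p (j, y) := by
  induction j, hij using Nat.le_induction with
  | base => exact ⟨x, hx, rfl, le_rfl⟩
  | succ j _ ih =>
    obtain ⟨y, hy, hyr, hxy⟩ := ih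
    obtain ⟨z, hz, hzr, hyz, -⟩ := exists_not_live_succ hp hy
    exact ⟨z, hz, hzr.trans hyr, hxy.trans hyz⟩

/-- The descendants of a node whose obligation is never discharged include such nodes on all later
levels; their number of levels above can be kept from decreasing and grows at every mark, although
it is bounded by the number of states. -/
theorem live_of_fair (hfair : Fair top B s p) (v : ℕ × Q) :
    Live top (Prod.snd ⁻¹' B) (runGraph s) (runRank top p) v := by
  by_contra hv
  have hcount (k : ℕ) : ∃ w, ¬Live top (Prod.snd ⁻¹' B) (runGraph s) (runRank top p) w ∧
      k ≤ levelCount top p w := by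
    induction k with
    | zero => exact ⟨v, hv, Nat.zero_le _⟩
    | succ k ih =>
      obtain ⟨⟨i, x⟩, hx, hk⟩ := ih
      obtain ⟨j, hij, hj⟩ :=
        Filter.frequently_atTop.1 (hfair (decode top (p i) x) (decode_le _ _)) i
      obtain ⟨y, hy, hyr, hxy⟩ := exists_not_live_of_le hp hij hx
      obtain ⟨z, hz, -, -, hyz⟩ := exists_not_live_succ hp hy
      exact ⟨_, hz, (hk.trans hxy).trans_lt (hyz (hyr ▸ hj))⟩
  obtain ⟨w, -, hw⟩ := hcount (Fintype.card Q + 1)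
  exact (card_levelsAbove_le.trans_lt hw).false

theorem run_le_and_lt_of_timer {g : ℕ → Q → ℕ}
    (hg : IsTimer top (Prod.snd ⁻¹' B) (runGraph s) (runRank top p) (Function.uncurry g))
    {i : ℕ} {x y : Q} (hxy : decode top (p i) x = decode top (p i) y) :
    (g i x ≤ g i y → p i x ≤ p i y) ∧ (g i x < g i y → p i x < p i y) := by
  induction hk : g i x using Nat.strong_induction_on generalizing i x y with
  | _ k ih =>
    have hgi (x : Q) :
        g i x = timer top (x ∈ B) (s i x) (decode top (p (i + 1))) (g (i + 1)) :=
      (hg (i, x)).trans (timer_runGraph ..)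
    have hsucc : ∀ z ∈ sameRank top (x ∈ B) (s i x) (decode top (p (i + 1))),
        ∀ z' ∈ sameRank top (y ∈ B) (s i y) (decode top (p (i + 1))),
        g (i + 1) z < timer top (x ∈ B) (s i x) (decode top (p (i + 1))) (g (i + 1)) →
        (g (i + 1) z ≤ g (i + 1) z' → p (i + 1) z ≤ p (i + 1) z') ∧
          (g (i + 1) z < g (i + 1) z' → p (i + 1) z < p (i + 1) z') := by
      intro z hz z' hz' hlt
      refine ih _ (by rwa [← hk, hgi]) ?_ rfl
      rw [(mem_sameRank.1 hz).2, (mem_sameRank.1 hz').2, ← decode_run hp,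
        ← decode_run hp, hxy]
    rw [← hk, ← not_lt (a := p i y), run_lt_run_iff hp hxy, run_lt_run_iff hp hxy.symm, not_lt,
      hgi, hgi]
    exact ⟨timer_le_timer fun z hz z' hz' hlt => (hsucc z hz z' hz' hlt).1,
      timer_lt_timer fun z hz z' hz' hlt => (hsucc z hz z' hz' hlt).2⟩

theorem run_eq_encode {g : ℕ → Q → ℕ}
    (hg : IsTimer top (Prod.snd ⁻¹' B) (runGraph s) (runRank top p) (Function.uncurry g)) (i : ℕ) :
    p i = encode (decode top (p i)) (g i) := by
  refine (run_eq_encode_timer hp i).trans (encode_congr fun x y hxy => ?_)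
  rw [← run_lt_run_iff hp hxy]
  refine ⟨fun h => ?_, (run_le_and_lt_of_timer hp hg hxy).2⟩
  contrapose! h
  exact (run_le_and_lt_of_timer hp hg hxy.symm).1 h

end Run

section Encode

variable {F g : ℕ → Q → ℕ}
  (hF : IsRanking top (Prod.snd ⁻¹' B) (runGraph s) (Function.uncurry F))
  (hg : IsTimer top (Prod.snd ⁻¹' B) (runGraph s) (Function.uncurry F) (Function.uncurry g))

include hF in
theorem decode_encode_level (i : ℕ) : decode top (encode (F i) (g i)) = F i :=
  decode_encode fun x => hF.le_top (i, x)

include hF hg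

theorem isBackRun_encode : IsBackRun (step top B) s fun i => encode (F i) (g i) := by
  intro i
  have hFi (x : Q) : F i x = rankStep top (x ∈ B) (s i x) (F (i + 1)) :=
    (hF.eq_rankStep (i, x)).trans (rankStep_runGraph ..)
  have hgi (x : Q) : g i x = timer top (x ∈ B) (s i x) (F (i + 1)) (g (i + 1)) :=
    (hg (i, x)).trans (timer_runGraph ..)
  simp only [step, decode_encode_level hF, ← hFi]
  refine encode_congr fun x y hxy => ?_
  rw [hgi, hgi]
  refine timer_lt_timer_iff (fun y y' hy => (encode_lt_iff_of_eq hy).symm) ?_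
  rw [← hFi, ← hFi, hxy]

theorem fair_encode : Fair top B s fun i => encode (F i) (g i) := by
  intro r _
  simp only [decode_encode_level hF]
  refine Filter.frequently_atTop.2 ?_
  by_contra! ⟨m, hm⟩
  simp only [Marked] at hm
  push Not at hm
  choose x hxr hx using fun j => hm (m + j) (Nat.le_add_right m j)
  have hFx (j : ℕ) : F (m + j) (x j) = r :=
    ((hF.eq_rankStep (m + j, x j)).trans (rankStep_runGraph ..)).trans (hxr j)
  refine not_strictAnti_of_wellFoundedLT (fun j => g (m + j) (x j))
    (strictAnti_nat_of_succ_lt fun j => ?_)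
  by_contra! hle
  refine hx j ((discharge_lt_timer (g (m + j + 1))).mono fun z hz hzlt => ?_)
  have hFz : F (m + j + 1) z = F (m + j + 1) (x (j + 1)) := by
    rw [(mem_sameRank.1 hz).2, hxr, add_assoc, hFx]
  refine ⟨x (j + 1), hFz.symm, (encode_lt_iff_of_eq hFz).2 (hzlt.trans_le ?_)⟩
  exact ((hg (m + j, x j)).trans (timer_runGraph ..)).ge.trans hle

end Encode

theorem existsUnique_run_fair (htop : Odd top)
    (hstage : stage (Prod.snd ⁻¹' B) (runGraph s) (top + 1) ⊆
      stage (Prod.snd ⁻¹' B) (runGraph s) top) :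
    ∃! p, IsBackRun (step top B) s p ∧ Fair top B s p := by
  obtain ⟨F, hF⟩ : ∃ F : ℕ → Q → ℕ,
      IsStageRank top (Prod.snd ⁻¹' B) (runGraph s) (Function.uncurry F) :=
    (exists_isStageRank top _ _).imp' Function.curry fun _ => id
  obtain ⟨g, hg⟩ : ∃ g : ℕ → Q → ℕ,
      IsTimer top (Prod.snd ⁻¹' B) (runGraph s) (Function.uncurry F) (Function.uncurry g) :=
    (exists_isTimer fun v => (Function.uncurry F v).even_or_odd.elim (hF.live_of_even htop)
      (hF.live_of_odd htop hstage)).imp' Function.curry fun _ => id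
  refine ⟨fun i => encode (F i) (g i),
    ⟨isBackRun_encode hF.isRanking hg, fair_encode hF.isRanking hg⟩, fun p ⟨hp, hfair⟩ => ?_⟩
  have hrank : runRank top p = Function.uncurry F := by
    obtain ⟨g', hg'⟩ := exists_isTimer (live_of_fair hp hfair)
    exact ((isRanking_runRank hp).isStageRank hg').unique hF
  funext i
  rw [run_eq_encode hp (hrank ▸ hg) i]
  exact congrArg (encode · (g i)) (funext fun x => congrFun hrank (i, x))

theorem decode_run_zero_eq_top_iff {p : ℕ → Q → ℕ} (htop : Odd top)
    (hp : IsBackRun (step top B) s p) (hfair : Fair top B s p) (q : Q) :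
    decode top (p 0) q = top ↔
      ∃ r : ℕ → Q, r 0 = q ∧ (∀ i, r (i + 1) ∈ s i (r i)) ∧ ∃ᶠ i in Filter.atTop, r i ∈ B := by
  obtain ⟨g, hg⟩ := exists_isTimer (live_of_fair hp hfair)
  exact ((isRanking_runRank hp).eq_top_iff hg htop (v := (0, q))).trans exists_path_runGraph_iff

end Priority

section Degeneralization

/-- `b` predicts whether `X` occurs before the next occurrence of `Y`, read from right to left. -/
def IsLatch (X Y b : ℕ → Prop) : Prop :=
  ∀ i, b i ↔ X i ∨ ¬Y (i + 1) ∧ b (i + 1)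

theorem exists_isLatch (X Y : ℕ → Prop) : ∃ b, IsLatch X Y b := by
  refine ⟨fun i => ∃ j ≥ i, X j ∧ ∀ l, i < l → l ≤ j → ¬Y l, fun i => ⟨?_, ?_⟩⟩
  · rintro ⟨j, hij, hj, hY⟩
    rcases hij.eq_or_lt with rfl | hij
    · exact .inl hj
    · exact .inr ⟨hY _ (Nat.lt_succ_self i) hij, j, hij, hj, fun l hl => hY l (by omega)⟩
  · rintro (hi | ⟨hY, j, hij, hj, hYj⟩)
    · exact ⟨i, le_rfl, hi, fun l hil hli => by omega⟩
    · refine ⟨j, by omega, hj, fun l hil hlj => ?_⟩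
      rcases (Nat.succ_le_of_lt hil).eq_or_lt with rfl | hl
      · exact hY
      · exact hYj l hl hlj

namespace IsLatch

variable {X Y b b' : ℕ → Prop} (hb : IsLatch X Y b)
include hb

theorem unique (hb' : IsLatch X Y b') (hY : ∃ᶠ i in Filter.atTop, Y i) : b = b' := by
  funext i
  obtain ⟨j, hij, hj⟩ := Filter.frequently_atTop.1 hY (i + 1)
  obtain ⟨k, rfl⟩ : ∃ k, j = k + 1 := ⟨j - 1, by omega⟩
  have hk : b k ↔ b' k := by simp only [hb k, hb' k, hj, not_true_eq_false, false_and]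
  refine propext (Nat.decreasingInduction' (P := fun l => b l ↔ b' l)
    (fun l _ _ hl => ?_) (Nat.le_of_succ_le_succ hij) hk)
  rw [hb l, hb' l, hl]

theorem frequently_of_frequently_and (h : ∃ᶠ i in Filter.atTop, Y i ∧ b i) :
    ∃ᶠ i in Filter.atTop, X i := by
  by_contra hX
  obtain ⟨m, hm⟩ := Filter.eventually_atTop.1 (Filter.not_frequently.1 hX)
  obtain ⟨i, hmi, -, hi⟩ := Filter.frequently_atTop.1 h m
  have hafter (j : ℕ) : ¬Y (i + j + 1) ∧ b (i + j + 1) := by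
    induction j with
    | zero => exact ((hb i).1 hi).resolve_left (hm i hmi)
    | succ j ih => exact ((hb _).1 ih.2).resolve_left (hm _ (by omega))
  obtain ⟨k, hk, hYk, -⟩ := Filter.frequently_atTop.1 h (i + 1)
  obtain ⟨j, rfl⟩ := Nat.exists_eq_add_of_le hk
  exact (hafter j).1 (by rwa [add_right_comm])

theorem exists_and_of_le {i j : ℕ} (hij : i ≤ j) (hi : Y i) (hj : b j) :
    ∃ k ≥ i, Y k ∧ b k := by
  induction j, hij using Nat.le_induction with
  | base => exact ⟨i, le_rfl, hi, hj⟩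
  | succ j hij ih =>
    by_cases hY : Y (j + 1)
    · exact ⟨j + 1, by omega, hY, hj⟩
    · exact ih ((hb j).2 (.inr ⟨hY, hj⟩))

theorem frequently_and_iff :
    (∃ᶠ i in Filter.atTop, Y i ∧ b i) ↔
      (∃ᶠ i in Filter.atTop, Y i) ∧ ∃ᶠ i in Filter.atTop, X i := by
  refine ⟨fun h => ⟨h.mono fun _ => And.left, hb.frequently_of_frequently_and h⟩,
    fun ⟨hY, hX⟩ => Filter.frequently_atTop.2 fun m => ?_⟩
  obtain ⟨i, hmi, hi⟩ := Filter.frequently_atTop.1 hY m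
  obtain ⟨j, hij, hj⟩ := Filter.frequently_atTop.1 hX i
  obtain ⟨k, hik, hk⟩ := hb.exists_and_of_le hij hi ((hb j).2 (.inl hj))
  exact ⟨k, hmi.trans hik, hk⟩

end IsLatch

variable {A P : Type*}

/-- The automaton with transition function `ρ` and a latch for `T` and `Ω` in its states: visiting
`Ω` with the latch on is as good as visiting `Ω` and using transitions from `T`. -/
def latchStep (ρ : A → P → P) (Ω : Set P) (T : Set (P × A × P)) (a : A) (x : P × Prop) : P × Prop :=
  (ρ a x.1, (ρ a x.1, a, x.1) ∈ T ∨ x.1 ∉ Ω ∧ x.2)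

theorem sbFinal_iff_frequently {Ω : Set P} {r : ℕ → P} :
    SBFinal Ω r ↔ ∃ᶠ i in Filter.atTop, r i ∈ Ω :=
  Filter.frequently_atTop.symm

theorem gtbFinal_succ_iff {k : ℕ} {T : Fin (k + 1) → Set (P × A × P)} {u : ℕ → A} {r : ℕ → P} :
    GTBFinal T u r ↔ (∃ᶠ i in Filter.atTop, (r i, u i, r (i + 1)) ∈ T 0) ∧
      GTBFinal (fun j => T j.succ) u r := by
  rw [Filter.frequently_atTop]
  exact Fin.forall_fin_succ

theorem isBackRun_latchStep_iff {ρ : A → P → P} {Ω : Set P} {T : Set (P × A × P)} {u : ℕ → A}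
    {r : ℕ → P × Prop} :
    IsBackRun (latchStep ρ Ω T) u r ↔ IsBackRun ρ u (Prod.fst ∘ r) ∧
      IsLatch (fun i => ((r i).1, u i, (r (i + 1)).1) ∈ T) (fun i => (r i).1 ∈ Ω)
        fun i => (r i).2 := by
  simp only [IsBackRun, IsLatch, latchStep, Prod.ext_iff, ← forall_and, Function.comp_apply,
    eq_iff_iff]
  refine forall_congr' fun i => and_congr_right fun hi => ?_
  rw [← hi]

theorem bijOn_fst_latchStep (ρ : A → P → P) (Ω : Set P) (T : Set (P × A × P)) (u : ℕ → A) :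
    Set.BijOn (Prod.fst ∘ ·)
      {r | IsBackRun (latchStep ρ Ω T) u r ∧ SBFinal {x | x.1 ∈ Ω ∧ x.2} r}
      {r | (IsBackRun ρ u r ∧ SBFinal Ω r) ∧
        ∃ᶠ i in Filter.atTop, (r i, u i, r (i + 1)) ∈ T} := by
  simp only [isBackRun_latchStep_iff, sbFinal_iff_frequently]
  refine ⟨fun r ⟨⟨hr, hlatch⟩, hfin⟩ => ?_, fun r ⟨⟨_, hlatch⟩, hfin⟩ r' ⟨⟨_, hlatch'⟩, _⟩ h => ?_,
    fun r ⟨⟨hr, hΩ⟩, hT⟩ => ?_⟩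
  · obtain ⟨hΩ, hT⟩ := hlatch.frequently_and_iff.1 hfin
    exact ⟨⟨hr, hΩ⟩, hT⟩
  · have hfst (i : ℕ) : (r' i).1 = (r i).1 := (congrFun h i).symm
    simp only [hfst] at hlatch'
    have hsnd := hlatch.unique hlatch' (hlatch.frequently_and_iff.1 hfin).1
    exact funext fun i => Prod.ext (hfst i).symm (congrFun hsnd i)
  · obtain ⟨b, hb⟩ := exists_isLatch (fun i => (r i, u i, r (i + 1)) ∈ T) fun i => r i ∈ Ω
    exact ⟨fun i => (r i, b i), ⟨⟨hr, hb⟩, hb.frequently_and_iff.2 ⟨hΩ, hT⟩⟩, rfl⟩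

theorem exists_bijOn_sbFinal_gtbFinal {P : Type} [Fintype P] {k : ℕ} (ρ : A → P → P) (Ω : Set P)
    (T : Fin k → Set (P × A × P)) :
    ∃ (P' : Type) (_ : Fintype P') (ρ' : A → P' → P') (Ω' : Set P') (π : P' → P),
      Fintype.card P' = Fintype.card P * 2 ^ k ∧
      ∀ u, Set.BijOn (π ∘ ·) {r | IsBackRun ρ' u r ∧ SBFinal Ω' r}
        {r | (IsBackRun ρ u r ∧ SBFinal Ω r) ∧ GTBFinal T u r} := by
  induction k generalizing P with
  | zero =>
    refine ⟨P, inferInstance, ρ, Ω, id, by simp, fun u => ?_⟩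
    simp only [GTBFinal, Fin.forall_fin_zero, and_true]
    exact Set.bijOn_id _
  | succ k ih =>
    obtain ⟨P', _, ρ', Ω', π, hcard, hbij⟩ := ih (latchStep ρ Ω (T 0)) {x | x.1 ∈ Ω ∧ x.2}
      fun j => Prod.map Prod.fst (Prod.map id Prod.fst) ⁻¹' T j.succ
    refine ⟨P', inferInstance, ρ', Ω', Prod.fst ∘ π, ?_, fun u => ?_⟩
    · rw [hcard, Fintype.card_prod, Fintype.card_prop, pow_succ']
      ring
    · have htail := (bijOn_fst_latchStep ρ Ω (T 0) u).inter_mapsTo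
        (s₂ := {r | GTBFinal (fun j => Prod.map Prod.fst (Prod.map id Prod.fst) ⁻¹' T j.succ) u r})
        (t₂ := {r | GTBFinal (fun j => T j.succ) u r}) (fun _ => id) fun _ h => h.2
      have hsplit : {r | (IsBackRun ρ u r ∧ SBFinal Ω r) ∧ GTBFinal T u r} =
          {r | (IsBackRun ρ u r ∧ SBFinal Ω r) ∧
            ∃ᶠ i in Filter.atTop, (r i, u i, r (i + 1)) ∈ T 0} ∩
          {r | GTBFinal (fun j => T j.succ) u r} :=
        Set.ext fun r => (and_congr_right' gtbFinal_succ_iff).trans and_assoc.symm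
      rw [hsplit]
      exact htail.comp (hbij u)

end Degeneralization

section Recognition

variable {A : Type*}

/-- Some backward deterministic automaton with at most `N` states and a state-based Büchi condition
recognizes the ω-language `L`. -/
def IsBackwardRecognizable (L : Set (ℕ → A)) (N : ℕ) : Prop :=
  ∃ (P : Type) (_ : Fintype P) (ρ : A → P → P) (Ω : Set P) (I : Set P),
    Fintype.card P ≤ N ∧ (∀ u, ∃! r, IsBackRun ρ u r ∧ SBFinal Ω r) ∧
    ∀ u r, IsBackRun ρ u r → SBFinal Ω r → (r 0 ∈ I ↔ u ∈ L)

theorem existsUnique_of_bijOn {α β : Type*} {f : α → β} {p : α → Prop} {q : β → Prop}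
    (hf : Set.BijOn f {x | p x} {y | q y}) (h : ∃! y, q y) : ∃! x, p x := by
  obtain ⟨y, hy, hunique⟩ := h
  obtain ⟨x, hx, -⟩ := hf.surjOn hy
  exact ⟨x, hx, fun x' hx' =>
    hf.injOn hx' hx ((hunique _ (hf.mapsTo hx')).trans (hunique _ (hf.mapsTo hx)).symm)⟩

theorem isBackwardRecognizable_empty {N : ℕ} (hN : 0 < N) :
    IsBackwardRecognizable (∅ : Set (ℕ → A)) N :=
  ⟨Unit, inferInstance, fun _ => id, .univ, ∅, hN,
    fun _ => ⟨fun _ => (), ⟨fun _ => rfl, fun m => ⟨m, le_rfl, trivial⟩⟩, fun _ _ => rfl⟩,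
    fun _ _ _ _ => Iff.rfl⟩

theorem exists_bijOn_isBackRun {X P : Type*} {σ : A → X → X} {f : P → X} (hf : f.Injective)
    (hσ : ∀ a x, σ a x ∈ Set.range f) :
    ∃ ρ : A → P → P, ∀ u, Set.BijOn (f ∘ ·) {r | IsBackRun ρ u r} {r | IsBackRun σ u r} := by
  choose ρ hρ using fun a x => hσ a (f x)
  refine ⟨ρ, fun u => ⟨fun r hr i => ?_, hf.comp_left.injOn, fun r hr => ?_⟩⟩
  · exact (congrArg f (hr i)).trans (hρ ..)
  · choose r' hr' using fun i => (hr i).symm ▸ hσ (u i) (r (i + 1))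
    refine ⟨r', fun i => hf ?_, funext hr'⟩
    rw [hr', hρ, hr', hr i]

theorem isBackwardRecognizable_of_gtbFinal {X : Type*} {P : Type} [Fintype P] {k : ℕ}
    {σ : A → X → X} {T : Fin k → Set (X × A × X)} {I : Set X} {L : Set (ℕ → A)} {f : P → X}
    (hf : f.Injective) (hσ : ∀ a x, σ a x ∈ Set.range f)
    (hunique : ∀ u, ∃! r, IsBackRun σ u r ∧ GTBFinal T u r)
    (hI : ∀ u r, IsBackRun σ u r → GTBFinal T u r → (r 0 ∈ I ↔ u ∈ L)) :
    IsBackwardRecognizable L (Fintype.card P * 2 ^ k) := by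
  obtain ⟨ρ, hρ⟩ := exists_bijOn_isBackRun hf hσ
  obtain ⟨P', _, ρ', Ω', π, hcard, hπ⟩ := exists_bijOn_sbFinal_gtbFinal ρ .univ
    fun j => Prod.map f (Prod.map id f) ⁻¹' T j
  have huniv (r : ℕ → P) : SBFinal .univ r := fun m => ⟨m, le_rfl, trivial⟩
  simp only [huniv, and_true] at hπ
  have hbij (u : ℕ → A) : Set.BijOn (f ∘ π ∘ ·) {r | IsBackRun ρ' u r ∧ SBFinal Ω' r}
      {r | IsBackRun σ u r ∧ GTBFinal T u r} :=
    ((hρ u).inter_mapsTo (t₂ := {r | GTBFinal T u r}) (fun _ => id) fun _ h => h.2).comp (hπ u)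
  refine ⟨P', inferInstance, ρ', Ω', f ∘ π ⁻¹' I, hcard.le,
    fun u => existsUnique_of_bijOn (hbij u) (hunique u), fun u r hr hΩ => ?_⟩
  obtain ⟨hrun, hT⟩ := (hbij u).mapsTo ⟨hr, hΩ⟩
  exact hI u _ hrun hT

theorem exists_injective_mem_range_of_lt (Q : Type*) [Fintype Q] (N : ℕ) :
    ∃ f : (Fin (Fintype.card Q) → Fin N) → Q → ℕ, f.Injective ∧
      ∀ p : Q → ℕ, (∀ x, p x < N) → p ∈ Set.range f := by
  let e : Q ≃ Fin (Fintype.card Q) := Fintype.equivFin Q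
  refine ⟨fun v x => v (e x), fun v w h => funext fun i => Fin.ext ?_, fun p hp => ?_⟩
  · simpa using congrFun h (e.symm i)
  · exact ⟨fun i => ⟨p (e.symm i), hp _⟩, funext fun x => congrArg p (e.symm_apply_apply x)⟩

theorem setOf_nbaAccepts_empty {Q : Type*} (Δ : Set (Q × A × Q)) (I : Set Q) :
    {u | ∃ q ∈ I, NBAAccepts Δ ∅ u q} = ∅ :=
  Set.eq_empty_of_forall_notMem fun _ ⟨_, _, _, _, _, h⟩ => (h 0).elim fun _ hi => hi.2

variable {Q : Type*} [Fintype Q] {Δ : Set (Q × A × Q)} {B : Set Q}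

open Classical in
/-- The set of successors in a nondeterministic automaton, as the finite set that the run graph
needs. -/
noncomputable def successors (Δ : Set (Q × A × Q)) (a : A) (x : Q) : Finset Q :=
  Finset.univ.filter fun y => (x, a, y) ∈ Δ

/-- The transitions on which the rank `r` is marked, as the `r`-th transition Büchi condition. -/
def markedTransitions (top : ℕ) (Δ : Set (Q × A × Q)) (B : Set Q) (r : Fin (top + 1)) :
    Set ((Q → ℕ) × A × (Q → ℕ)) :=
  {e | Marked top B (successors Δ e.2.1) (decode top e.2.2) e.2.2 r}

theorem gtbFinal_markedTransitions_iff {top : ℕ} {u : ℕ → A} {p : ℕ → Q → ℕ} :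
    GTBFinal (markedTransitions top Δ B) u p ↔ Fair top B (fun i => successors Δ (u i)) p := by
  simp only [GTBFinal, Fair, Filter.frequently_atTop, Fin.forall_iff, Nat.lt_succ_iff]
  rfl

theorem nbaAccepts_iff {u : ℕ → A} {q : Q} :
    NBAAccepts Δ B u q ↔ ∃ r : ℕ → Q, r 0 = q ∧ (∀ i, r (i + 1) ∈ successors Δ (u i) (r i)) ∧
      ∃ᶠ i in Filter.atTop, r i ∈ B := by
  simp only [NBAAccepts, successors, Finset.mem_filter_univ, Filter.frequently_atTop]

theorem existsUnique_run_fair_of_card_eq {l : ℕ} (hB : B.Nonempty) (hcard : Fintype.card Q = l + 1)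
    (s : ℕ → Q → Finset Q) :
    ∃! p, IsBackRun (step (2 * l + 1) B) s p ∧ Fair (2 * l + 1) B s p :=
  existsUnique_run_fair (odd_two_mul_add_one l) <| Set.sdiff_eq_empty.1 <|
    oddLayer_runGraph_eq_empty hB (Nat.card_eq_fintype_card.trans hcard).le

theorem isBackwardRecognizable_nbaAccepts (Δ : Set (Q × A × Q)) (hB : B.Nonempty) (I : Set Q) :
    IsBackwardRecognizable {u | ∃ q ∈ I, NBAAccepts Δ B u q}
      ((12 * Fintype.card Q) ^ Fintype.card Q) := by
  obtain ⟨l, hcard⟩ : ∃ l, Fintype.card Q = l + 1 :=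
    Nat.exists_eq_succ_of_ne_zero (Fintype.card_pos_iff.2 hB.to_type).ne'
  set top : ℕ := 2 * l + 1
  obtain ⟨f, hf, hrange⟩ := exists_injective_mem_range_of_lt Q (3 * Fintype.card Q)
  have hbound : Fintype.card (Fin (Fintype.card Q) → Fin (3 * Fintype.card Q)) * 2 ^ (top + 1) =
      (12 * Fintype.card Q) ^ Fintype.card Q := by
    rw [Fintype.card_fun, Fintype.card_fin, Fintype.card_fin,
      show top + 1 = 2 * Fintype.card Q by omega, pow_mul, ← mul_pow]
    ring
  rw [← hbound]
  refine isBackwardRecognizable_of_gtbFinal (σ := fun a => step top B (successors Δ a))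
    (T := markedTransitions top Δ B) (I := {p | ∃ q ∈ I, decode top p q = top}) hf
    (fun a p => hrange _ fun x => (step_lt p x).trans_le (by omega)) (fun u => ?_)
    fun u p hp hfair => ?_
  · simp only [gtbFinal_markedTransitions_iff]
    exact existsUnique_run_fair_of_card_eq hB hcard _
  · exact exists_congr fun q => and_congr_right fun _ => (decode_run_zero_eq_top_iff
      (odd_two_mul_add_one l) hp (gtbFinal_markedTransitions_iff.1 hfair) q).trans
      nbaAccepts_iff.symm

end Recognition

end CartonMichel

/-- Carton–Michel: for every nondeterministic Büchi automaton with `n`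
states and initial state set `I` there is an equivalent backward deterministic automaton
with a state-based Büchi condition and at most `(12n)^n` states. -/
theorem buechi_to_backward_deterministic_buechi {Q A : Type*} [Fintype Q]
    (Δ : Set (Q × A × Q)) (B : Set Q) (I : Set Q) :
    ∃ (P : Type) (_ : Fintype P) (ρ : A → P → P) (Ω : Set P) (I' : Set P),
      Fintype.card P ≤ (12 * Fintype.card Q) ^ Fintype.card Q ∧
      (∀ u : ℕ → A, ∃! r : ℕ → P, IsBackRun ρ u r ∧ SBFinal Ω r) ∧
      (∀ (u : ℕ → A) (r : ℕ → P), IsBackRun ρ u r → SBFinal Ω r →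
        (r 0 ∈ I' ↔ ∃ q ∈ I, NBAAccepts Δ B u q)) := by
  rcases B.eq_empty_or_nonempty with rfl | hB
  · have hpos : 0 < (12 * Fintype.card Q) ^ Fintype.card Q := by
      rcases (Fintype.card Q).eq_zero_or_pos with h | h
      · simp only [h, pow_zero, zero_lt_one]
      · positivity
    have hrec := CartonMichel.isBackwardRecognizable_empty (A := A) hpos
    rw [← CartonMichel.setOf_nbaAccepts_empty Δ I] at hrec
    exact hrec
  · exact CartonMichel.isBackwardRecognizable_nbaAccepts Δ hB I
end

section
/- For every nondeterministic Büchi automaton (Q, Δ, B) with |Q| = n and every ω-word u, applying the peeling operation n times to the run DAG of the automaton on u yields exactly the subgraph induced by the B-recurring vertices of the run DAG. -/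
/-- A leveled DAG over `Q`: vertex set a subset of `ℕ × Q`, every edge goes from a
vertex on some level `i` to a vertex on level `i + 1`. -/
structure LDAG (Q : Type*) where
  V : Set (ℕ × Q)
  E : ℕ × Q → ℕ × Q → Prop
  edge_mem : ∀ ⦃v w⦄, E v w → v ∈ V ∧ w ∈ V
  edge_level : ∀ ⦃v w⦄, E v w → w.1 = v.1 + 1

namespace LDAG

variable {Q : Type*}

/-- `w` is a descendant of `v` (including `v` itself). -/
def Desc (D : LDAG Q) : ℕ × Q → ℕ × Q → Prop := Relation.ReflTransGen D.E

/-- A vertex is finitary if it has only finitely many descendants. -/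
def Finitary (D : LDAG Q) (v : ℕ × Q) : Prop := {w | D.Desc v w}.Finite

/-- A vertex is `B`-free if no descendant of it (including itself) is `B`-tagged. -/
def BFree (D : LDAG Q) (B : Set Q) (v : ℕ × Q) : Prop :=
  ∀ w, D.Desc v w → w.2 ∉ B

/-- A vertex is `B`-recurring if some infinite path starting in it contains infinitely
many `B`-tagged vertices. -/
def BRecurring (D : LDAG Q) (B : Set Q) (v : ℕ × Q) : Prop :=
  ∃ p : ℕ → ℕ × Q, p 0 = v ∧ (∀ n, D.E (p n) (p (n + 1))) ∧
    ∀ m, ∃ n, m ≤ n ∧ (p n).2 ∈ B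

/-- The subgraph of `D` induced by the set `S` of vertices. -/
def induced (D : LDAG Q) (S : Set (ℕ × Q)) : LDAG Q where
  V := D.V ∩ S
  E v w := D.E v w ∧ v ∈ S ∧ w ∈ S
  edge_mem := fun _ _ h => ⟨⟨(D.edge_mem h.1).1, h.2.1⟩, ⟨(D.edge_mem h.1).2, h.2.2⟩⟩
  edge_level := fun _ _ h => D.edge_level h.1

/-- One peeling step: first remove all finitary vertices, then remove all vertices that
are `B`-free in the resulting induced subgraph. -/
def peel (B : Set Q) (D : LDAG Q) : LDAG Q :=
  let D₁ := D.induced {v | ¬ D.Finitary v}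
  D₁.induced {v | ¬ D₁.BFree B v}

end LDAG

/-- The run DAG of the Büchi automaton with transition relation `Δ` on the ω-word `u`:
vertex set `ℕ × Q`, edges from `⟨i, q⟩` to `⟨i+1, q'⟩` whenever `(q, u i, q') ∈ Δ`. -/
def runDAG {Q A : Type*} (Δ : Set (Q × A × Q)) (u : ℕ → A) : LDAG Q where
  V := Set.univ
  E v w := w.1 = v.1 + 1 ∧ (v.2, u v.1, w.2) ∈ Δ
  edge_mem := fun _ _ _ => ⟨trivial, trivial⟩
  edge_level := fun _ _ h => h.1

/-!
Peeling deletes no vertex of a path that is `B`-tagged infinitely often, so all iterated peelings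
have the same `B`-recurring vertices. By König's lemma every vertex has a successor once the
finitary vertices are gone. If no vertex is `B`-free, then walking repeatedly towards a nearest
`B`-tagged descendant shows that every vertex is `B`-recurring. Otherwise some vertex is `B`-free,
and so are its descendants, which occupy every later level: the peeling removes an untagged vertex
from almost every level. Hence `k + 1` peelings suffice as soon as infinitely many levels have at
most `k` untagged vertices. Any vertex surviving a peeling has a `B`-tagged descendant, so
`B` may be assumed nonempty, which leaves at most `|Q| - 1` untagged states.
-/

attribute [ext] LDAG

namespace LDAG

open Filter

variable {Q : Type*} {D : LDAG Q} {B : Set Q} {v w : ℕ × Q} {p : ℕ → ℕ × Q}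

theorem Desc.level_le (h : D.Desc v w) : v.1 ≤ w.1 := by
  induction h with
  | refl => exact le_rfl
  | tail _ hE ih => exact ih.trans (D.edge_level hE ▸ Nat.le_succ _)

theorem BFree.of_edge (hv : D.BFree B v) (hE : D.E v w) : D.BFree B w :=
  fun x hx => hv x (Relation.ReflTransGen.head hE hx)

/-- An infinite path of `D`, as a sequence of vertices; it need not start on level `0`. -/
def IsPath (D : LDAG Q) (p : ℕ → ℕ × Q) : Prop := ∀ n, D.E (p n) (p (n + 1))

theorem IsPath.level_eq (hp : D.IsPath p) (n : ℕ) : (p n).1 = (p 0).1 + n := by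
  induction n with
  | zero => rfl
  | succ n ih => rw [D.edge_level (hp n), ih, add_assoc]

theorem IsPath.injective (hp : D.IsPath p) : Function.Injective p := fun m n h => by
  have hlevel := congrArg Prod.fst h
  rwa [hp.level_eq m, hp.level_eq n, Nat.add_left_cancel_iff] at hlevel

theorem IsPath.desc (hp : D.IsPath p) {m n : ℕ} (hmn : m ≤ n) : D.Desc (p m) (p n) := by
  induction n, hmn using Nat.le_induction with
  | base => exact .refl
  | succ n _ ih => exact ih.tail (hp n)

theorem IsPath.not_finitary (hp : D.IsPath p) (m : ℕ) : ¬ D.Finitary (p m) :=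
  Set.infinite_of_injective_forall_mem (f := fun n => p (m + n))
    (hp.injective.comp (add_right_injective m)) fun n => hp.desc (Nat.le_add_right m n)

theorem exists_isPath_of_step {R : ℕ × Q → ℕ × Q → Prop}
    (hstep : ∀ x ∈ D.V, ∃ y, D.E x y ∧ R x y) (hv : v ∈ D.V) :
    ∃ p, p 0 = v ∧ D.IsPath p ∧ ∀ n, R (p n) (p (n + 1)) := by
  have : Nonempty (ℕ × Q) := ⟨v⟩
  choose! next hE hR using hstep
  have hmem (n : ℕ) : next^[n] v ∈ D.V := by
    induction n with
    | zero => exact hv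
    | succ n ih => exact Function.iterate_succ_apply' next n v ▸ (D.edge_mem (hE _ ih)).2
  refine ⟨fun n => next^[n] v, rfl, fun n => ?_, fun n => ?_⟩
  · simpa only [Function.iterate_succ_apply'] using hE _ (hmem n)
  · simpa only [Function.iterate_succ_apply'] using hR _ (hmem n)

/-- Every vertex of `D` has a successor. -/
def Serial (D : LDAG Q) : Prop := ∀ v ∈ D.V, ∃ w, D.E v w

theorem Serial.eventually_exists_bFree (hD : D.Serial) (hv : v ∈ D.V) (hfree : D.BFree B v) :
    ∀ᶠ l in atTop, ∃ q, (l, q) ∈ D.V ∧ D.BFree B (l, q) := by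
  filter_upwards [eventually_ge_atTop v.1] with l hl
  induction l, hl using Nat.le_induction with
  | base => exact ⟨v.2, hv, hfree⟩
  | succ l _ ih =>
    obtain ⟨q, hq, hqfree⟩ := ih
    obtain ⟨⟨l', q'⟩, hE⟩ := hD _ hq
    obtain rfl : l' = l + 1 := D.edge_level hE
    exact ⟨q', (D.edge_mem hE).2, hqfree.of_edge hE⟩

/-- The level of a nearest `B`-tagged descendant of `v`; it is the junk value `0` if `v` is
`B`-free. -/
noncomputable def tagLevel (D : LDAG Q) (B : Set Q) (v : ℕ × Q) : ℕ :=
  sInf {l | ∃ q ∈ B, D.Desc v (l, q)}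

theorem exists_desc_tagLevel (hv : ¬ D.BFree B v) : ∃ q ∈ B, D.Desc v (D.tagLevel B v, q) := by
  simp only [BFree, not_forall, not_not] at hv
  obtain ⟨w, hvw, hw⟩ := hv
  exact Nat.sInf_mem (s := {l | ∃ q ∈ B, D.Desc v (l, q)}) ⟨w.1, w.2, hw, hvw⟩

theorem level_le_tagLevel (hv : ¬ D.BFree B v) : v.1 ≤ D.tagLevel B v := by
  obtain ⟨q, -, hvq⟩ := exists_desc_tagLevel hv
  exact hvq.level_le

theorem exists_edge_tagLevel_le (hv : ¬ D.BFree B v) (hvB : v.2 ∉ B) :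
    ∃ w, D.E v w ∧ D.tagLevel B w ≤ D.tagLevel B v := by
  obtain ⟨q, hqB, hvq⟩ := exists_desc_tagLevel hv
  rcases Relation.ReflTransGen.cases_head hvq with heq | ⟨w, hvw, hwq⟩
  · exact absurd (heq ▸ hqB : v.2 ∈ B) hvB
  · exact ⟨w, hvw, Nat.sInf_le ⟨q, hqB, hwq⟩⟩

theorem IsPath.exists_ge_tagged (hp : D.IsPath p) (hfree : ∀ n, ¬ D.BFree B (p n))
    (hle : ∀ n, (p n).2 ∉ B → D.tagLevel B (p (n + 1)) ≤ D.tagLevel B (p n)) (m : ℕ) :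
    ∃ n, m ≤ n ∧ (p n).2 ∈ B := by
  by_contra! huntagged
  have hbound (n : ℕ) (hmn : m ≤ n) : D.tagLevel B (p n) ≤ D.tagLevel B (p m) := by
    induction n, hmn using Nat.le_induction with
    | base => exact le_rfl
    | succ n hmn ih => exact (hle n (huntagged n hmn)).trans ih
  let N := m + D.tagLevel B (p m) + 1
  have hlevel : (p N).1 ≤ D.tagLevel B (p m) :=
    (level_le_tagLevel (hfree N)).trans (hbound N (by omega))
  have := hp.level_eq N
  omega

theorem Serial.bRecurring_of_not_bFree (hD : D.Serial) (hfree : ∀ x ∈ D.V, ¬ D.BFree B x)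
    (hv : v ∈ D.V) : D.BRecurring B v := by
  have hstep (x) (hx : x ∈ D.V) :
      ∃ y, D.E x y ∧ (x.2 ∉ B → D.tagLevel B y ≤ D.tagLevel B x) := by
    by_cases hxB : x.2 ∈ B
    · exact (hD x hx).imp fun y hE => ⟨hE, absurd hxB⟩
    · exact (exists_edge_tagLevel_le (hfree x hx) hxB).imp fun y hy => ⟨hy.1, fun _ => hy.2⟩
  obtain ⟨p, hp0, hp, hle⟩ := exists_isPath_of_step hstep hv
  exact ⟨p, hp0, hp, hp.exists_ge_tagged (fun n => hfree _ (D.edge_mem (hp n)).1) hle⟩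

/-- Every vertex of `D` has finitely many successors: the hypothesis of König's lemma. -/
def FinitelyBranching (D : LDAG Q) : Prop := ∀ v, {w | D.E v w}.Finite

theorem finitelyBranching_of_finite [Finite Q] (D : LDAG Q) : D.FinitelyBranching := fun v =>
  ((Set.finite_singleton (v.1 + 1)).prod Set.finite_univ).subset
    fun _ hw => ⟨D.edge_level hw, trivial⟩

theorem FinitelyBranching.exists_edge_not_finitary (hD : D.FinitelyBranching)
    (hv : ¬ D.Finitary v) : ∃ w, D.E v w ∧ ¬ D.Finitary w := by
  by_contra! hfin
  refine hv (((Set.finite_singleton v).union ((hD v).biUnion hfin)).subset fun x hx => ?_)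
  rcases Relation.ReflTransGen.cases_head hx with rfl | ⟨w, hvw, hwx⟩
  · exact Or.inl rfl
  · exact Or.inr (Set.mem_biUnion (s := {w | D.E v w}) hvw hwx)

/-- The first half of a peeling step: `D` without its finitary vertices. -/
def trim (D : LDAG Q) : LDAG Q := D.induced {v | ¬ D.Finitary v}

theorem FinitelyBranching.trim_serial (hD : D.FinitelyBranching) : D.trim.Serial := fun _ hv =>
  (hD.exists_edge_not_finitary hv.2).imp fun _ hw => ⟨hw.1, hv.2, hw.2⟩

theorem IsPath.trim (hp : D.IsPath p) : D.trim.IsPath p := fun n =>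
  ⟨hp n, hp.not_finitary n, hp.not_finitary (n + 1)⟩

theorem BRecurring.of_trim (h : D.trim.BRecurring B v) : D.BRecurring B v :=
  h.imp fun _ hp => ⟨hp.1, fun n => (hp.2.1 n).1, hp.2.2⟩

theorem induced_induced (D : LDAG Q) (S T : Set (ℕ × Q)) :
    (D.induced S).induced T = D.induced (S ∩ T) := by
  ext <;> simp only [induced, Set.mem_inter_iff] <;> tauto

theorem peel_eq_induced (B : Set Q) (D : LDAG Q) :
    D.peel B = D.induced ({v | ¬ D.Finitary v} ∩ {v | ¬ D.trim.BFree B v}) :=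
  induced_induced D _ _

theorem induced_eq_self {S : Set (ℕ × Q)} (h : D.V ⊆ S) : D.induced S = D := by
  ext x y
  · exact and_iff_left_of_imp (@h x)
  · exact and_iff_left_of_imp fun hE => ⟨h (D.edge_mem hE).1, h (D.edge_mem hE).2⟩

theorem IsPath.peel (hp : D.IsPath p) (hB : ∀ m, ∃ n, m ≤ n ∧ (p n).2 ∈ B) :
    (D.peel B).IsPath p := by
  have hfree (m : ℕ) : ¬ D.trim.BFree B (p m) := fun hm => by
    obtain ⟨n, hmn, hn⟩ := hB m
    exact hm _ (hp.trim.desc hmn) hn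
  exact fun n => ⟨hp.trim n, hfree n, hfree (n + 1)⟩

theorem bRecurring_peel_iff : (D.peel B).BRecurring B v ↔ D.BRecurring B v := by
  constructor
  · rintro ⟨p, hp0, hp, hB⟩
    exact ⟨p, hp0, fun n => (hp n).1.1, hB⟩
  · rintro ⟨p, hp0, hp, hB⟩
    exact ⟨p, hp0, IsPath.peel hp hB, hB⟩

theorem BRecurring.mem (h : D.BRecurring B v) : v ∈ D.V := by
  obtain ⟨p, rfl, hp, -⟩ := h
  exact (D.edge_mem (hp 0)).1

/-- The subgraph induced by the `B`-recurring vertices, the limit of iterated peeling. -/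
def recurringPart (B : Set Q) (D : LDAG Q) : LDAG Q := D.induced {v | D.BRecurring B v}

theorem recurringPart_peel (B : Set Q) (D : LDAG Q) :
    (D.peel B).recurringPart B = D.recurringPart B := by
  have hsurvive : {v | D.BRecurring B v} ⊆ {v | ¬ D.Finitary v} ∩ {v | ¬ D.trim.BFree B v} := by
    intro v hv
    have hmem : v ∈ (D.peel B).V := (bRecurring_peel_iff.2 hv).mem
    exact ⟨hmem.1.2, hmem.2⟩
  simp only [recurringPart, bRecurring_peel_iff]
  rw [peel_eq_induced, induced_induced, Set.inter_eq_right.2 hsurvive]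

theorem bRecurring_iterate_peel_iff (n : ℕ) :
    ((peel B)^[n] D).BRecurring B v ↔ D.BRecurring B v := by
  induction n generalizing D with
  | zero => rfl
  | succ n ih => rw [Function.iterate_succ_apply, ih, bRecurring_peel_iff]

theorem iterate_peel_eq_recurringPart {n : ℕ}
    (h : ((peel B)^[n] D).V ⊆ {v | D.BRecurring B v}) :
    (peel B)^[n] D = D.recurringPart B := by
  calc (peel B)^[n] D
      = ((peel B)^[n] D).recurringPart B :=
        (induced_eq_self fun _ hv => (bRecurring_iterate_peel_iff n).2 (h hv)).symm
    _ = D.recurringPart B :=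
        congrFun (Function.iterate_invariant (g := recurringPart B)
          (funext (recurringPart_peel B)) n) D

theorem peel_V_subset_trim (B : Set Q) (D : LDAG Q) : (D.peel B).V ⊆ D.trim.V :=
  Set.inter_subset_left

theorem peel_V_subset (B : Set Q) (D : LDAG Q) : (D.peel B).V ⊆ D.V :=
  (peel_V_subset_trim B D).trans Set.inter_subset_left

theorem iterate_peel_V_subset (B : Set Q) (D : LDAG Q) (n : ℕ) : ((peel B)^[n] D).V ⊆ D.V := by
  induction n generalizing D with
  | zero => exact subset_rfl
  | succ n ih => exact (ih (D.peel B)).trans (peel_V_subset B D)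

theorem FinitelyBranching.peel (hD : D.FinitelyBranching) : (D.peel B).FinitelyBranching :=
  fun v => (hD v).subset fun _ hw => hw.1.1

theorem nonempty_of_mem_peel (hv : v ∈ (D.peel B).V) : B.Nonempty := by
  by_contra! hB
  exact hv.2 fun w _ => hB ▸ Set.notMem_empty w.2

/-- The states of the vertices on level `l` that are not `B`-tagged. The number of these is the
measure that decreases under peeling. -/
def untagged (B : Set Q) (D : LDAG Q) (l : ℕ) : Set Q := {q | q ∉ B ∧ (l, q) ∈ D.V}

theorem untagged_peel_ssubset {l : ℕ} (h : ∃ q, (l, q) ∈ D.trim.V ∧ D.trim.BFree B (l, q)) :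
    (D.peel B).untagged B l ⊂ D.untagged B l := by
  obtain ⟨q, hq, hfree⟩ := h
  exact ⟨fun _ hx => ⟨hx.1, peel_V_subset B D hx.2⟩,
    fun hsub => (hsub (a := q) ⟨hfree _ .refl, hq.1⟩).2.2 hfree⟩

theorem FinitelyBranching.peel_V_subset_bRecurring_or_untagged_ssubset
    (hD : D.FinitelyBranching) (B : Set Q) :
    (D.peel B).V ⊆ {v | D.BRecurring B v} ∨
      ∀ᶠ l in atTop, (D.peel B).untagged B l ⊂ D.untagged B l := by
  by_cases hfree : ∃ v ∈ D.trim.V, D.trim.BFree B v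
  · obtain ⟨v, hv, hvfree⟩ := hfree
    exact Or.inr <| (hD.trim_serial.eventually_exists_bFree hv hvfree).mono
      fun _ => untagged_peel_ssubset
  · push Not at hfree
    exact Or.inl fun v hv =>
      (hD.trim_serial.bRecurring_of_not_bFree hfree (peel_V_subset_trim B D hv)).of_trim

theorem iterate_peel_V_subset_bRecurring (hD : D.FinitelyBranching) (k : ℕ)
    (hk : ∃ᶠ l in atTop, (D.untagged B l).encard ≤ k) :
    ((peel B)^[k + 1] D).V ⊆ {v | D.BRecurring B v} := by
  induction k generalizing D with
  | zero =>
    refine (hD.peel_V_subset_bRecurring_or_untagged_ssubset B).resolve_right fun hdrop => ?_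
    obtain ⟨l, hl, hlt⟩ := (hk.and_eventually hdrop).exists
    have hempty : D.untagged B l = ∅ := Set.encard_eq_zero.1 (nonpos_iff_eq_zero.1 hl)
    exact (Set.nonempty_of_ssubset' hlt).ne_empty hempty
  | succ k ih =>
    rw [Function.iterate_succ_apply]
    rcases hD.peel_V_subset_bRecurring_or_untagged_ssubset B with hrec | hdrop
    · exact (iterate_peel_V_subset B (D.peel B) (k + 1)).trans hrec
    · have hk' : ∃ᶠ l in atTop, ((D.peel B).untagged B l).encard ≤ k :=
        (hk.and_eventually hdrop).mono fun l ⟨hl, hlt⟩ =>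
          Order.le_of_lt_add_one <|
            (((Set.finite_of_encard_le_coe hl).subset hlt.subset).encard_lt_encard hlt).trans_le hl
      exact fun v hv => bRecurring_peel_iff.1 (ih hD.peel hk' hv)

theorem encard_untagged_lt_card [Fintype Q] (hB : B.Nonempty) (D : LDAG Q) (l : ℕ) :
    (D.untagged B l).encard < Fintype.card Q := by
  obtain ⟨b, hb⟩ := hB
  have hlt : D.untagged B l ⊂ Set.univ :=
    Set.ssubset_univ_iff.2 fun huniv => (huniv ▸ Set.mem_univ b : b ∈ D.untagged B l).1 hb
  simpa using (Set.toFinite _).encard_lt_encard hlt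

end LDAG

theorem peel_runDAG_general {Q : Type*} [Fintype Q] (B : Set Q) (D : LDAG Q) :
    (LDAG.peel B)^[Fintype.card Q] D = D.induced {v | D.BRecurring B v} := by
  refine LDAG.iterate_peel_eq_recurringPart fun v hv => ?_
  obtain ⟨k, hk⟩ := Nat.exists_eq_succ_of_ne_zero (Fintype.card_pos_iff.2 ⟨v.2⟩).ne'
  rw [hk] at hv
  have hB : B.Nonempty :=
    LDAG.nonempty_of_mem_peel (Function.iterate_succ_apply' (LDAG.peel B) k D ▸ hv)
  have huntagged (l : ℕ) : (D.untagged B l).encard ≤ k :=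
    Order.le_of_lt_add_one (by simpa [hk] using D.encard_untagged_lt_card hB l)
  exact LDAG.iterate_peel_V_subset_bRecurring D.finitelyBranching_of_finite k
    (Filter.Frequently.of_forall huntagged) hv

/-- Kupferman–Vardi: for a nondeterministic Büchi automaton `(Q, Δ, B)`
with `n` states, peeling the run DAG on any ω-word `n` times yields exactly the subgraph
induced by the `B`-recurring vertices. -/
theorem peel_runDAG {Q A : Type*} [Fintype Q] (Δ : Set (Q × A × Q)) (B : Set Q)
    (u : ℕ → A) :
    (LDAG.peel B)^[Fintype.card Q] (runDAG Δ u) =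
      (runDAG Δ u).induced {v | (runDAG Δ u).BRecurring B v} :=
  peel_runDAG_general B (runDAG Δ u)
end

section
/- Let Q be a finite set, B ⊆ Q, and D a leveled DAG over Q. If D contains at least one infinitary (i.e., non-finitary) vertex that is not B-recurring, then the ultimate width of the leveled DAG obtained from D by one peeling step is strictly smaller than the ultimate width of D. -/
/-- The ultimate width of a leveled DAG: the limit inferior, as `i → ∞`, of the number
of vertices on level `i` that are infinitary (non-finitary) and not `B`-recurring. -/
noncomputable def LDAG.ultWidth {Q : Type*} (B : Set Q) (D : LDAG Q) : ℕ :=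
  Filter.atTop.liminf fun i : ℕ =>
    Nat.card {v : ℕ × Q // v ∈ D.V ∧ v.1 = i ∧ ¬ D.Finitary v ∧ ¬ D.BRecurring B v}

/-!
If every vertex reachable from `v` in the infinitary part of `D` could still reach a `B`-tagged
vertex, always walking towards a nearest tagged vertex would make `v` `B`-recurring. So an
infinitary vertex that is not `B`-recurring has a descendant `w` that is `B`-free in the infinitary
part. By König's lemma `w` has, on every later level, a descendant in the infinitary part; it is
again `B`-free there, so it counts towards the width of `D` but is peeled off. Conversely, infinite
paths recurring to `B` survive peeling, so no vertex starts to count towards the width.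
-/

open Filter Relation

theorem liminf_lt_liminf_of_eventually_lt {ι : Type*} {l : Filter ι} {f g : ι → ℕ}
    (hg : l.IsCoboundedUnder (· ≥ ·) g) (hfg : ∀ᶠ i in l, f i < g i) :
    liminf f l < liminf g l := by
  have liminf_le : ∀ᶠ i in l, liminf f l ≤ f i := by
    cases hf : liminf f l with
    | zero => exact .of_forall fun i => Nat.zero_le (f i)
    | succ a => exact eventually_lt_of_lt_liminf (show a < liminf f l by omega)
  refine Nat.lt_of_succ_le (le_liminf_of_le hg ?_)
  filter_upwards [liminf_le, hfg] with i hi hlt using Nat.succ_le_of_lt (hi.trans_lt hlt)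

section Relation

variable {α : Type*} {r : α → α → Prop} {P : α → Prop} {x y : α}

theorem exists_rel_infinite_reflTransGen (hfin : {y | r x y}.Finite)
    (hx : {z | ReflTransGen r x z}.Infinite) :
    ∃ y, r x y ∧ {z | ReflTransGen r y z}.Infinite := by
  by_contra! hsucc
  have hunion : (⋃ y ∈ {y | r x y}, {z | ReflTransGen r y z}).Finite :=
    hfin.biUnion hsucc
  refine hx ((hunion.insert x).subset fun z hz => ?_)
  rcases hz.cases_head with rfl | ⟨y, hxy, hyz⟩
  · exact Set.mem_insert x _
  · exact Set.mem_insert_of_mem x (Set.mem_biUnion hxy hyz)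

/-- `ReachesIn r P n x` says that some `r`-path with exactly `n` edges leads from `x` to an element
satisfying `P`. It measures the distance from `x` to `P`. -/
def ReachesIn (r : α → α → Prop) (P : α → Prop) : ℕ → α → Prop
  | 0, x => P x
  | n + 1, x => ∃ y, r x y ∧ ReachesIn r P n y

theorem exists_reachesIn_of_reflTransGen (hxy : ReflTransGen r x y) (hy : P y) :
    ∃ n, ReachesIn r P n x := by
  induction hxy using ReflTransGen.head_induction_on with
  | refl => exact ⟨0, hy⟩
  | head hxz _ ih =>
    obtain ⟨n, hn⟩ := ih
    exact ⟨n + 1, _, hxz, hn⟩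

theorem exists_rank_of_transGen (r : α → α → Prop) (P : α → Prop) :
    ∃ d : α → ℕ, ∀ x, (∃ z, TransGen r x z ∧ P z) → ∃ y, r x y ∧ (P y ∨ d y < d x) := by
  let d (x : α) : ℕ := sInf {n | ReachesIn r P (n + 1) x}
  refine ⟨d, fun x ⟨z, hxz, hz⟩ => ?_⟩
  have nonempty : {n | ReachesIn r P (n + 1) x}.Nonempty := by
    obtain ⟨y, hxy, hyz⟩ := TransGen.head'_iff.mp hxz
    obtain ⟨n, hn⟩ := exists_reachesIn_of_reflTransGen hyz hz
    exact ⟨n, y, hxy, hn⟩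
  obtain ⟨y, hxy, hy⟩ : ReachesIn r P (d x + 1) x := Nat.sInf_mem nonempty
  refine ⟨y, hxy, ?_⟩
  cases hd : d x with
  | zero => exact .inl (by rwa [hd] at hy)
  | succ n => exact .inr (Nat.lt_succ_of_le (Nat.sInf_le (by rwa [hd] at hy)))

theorem exists_path_infinitely_often
    (h : ∀ y, ReflTransGen r x y → ∃ z, TransGen r y z ∧ P z) :
    ∃ p : ℕ → α, p 0 = x ∧ (∀ n, r (p n) (p (n + 1))) ∧ ∀ m, ∃ n, m ≤ n ∧ P (p n) := by
  obtain ⟨d, hd⟩ := exists_rank_of_transGen r P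
  have : Nonempty α := ⟨x⟩
  choose! next next_rel next_rank using fun y hxy => hd y (h y hxy)
  let p (n : ℕ) : α := next^[n] x
  have p_succ (n : ℕ) : p (n + 1) = next (p n) := Function.iterate_succ_apply' next n x
  have reach (n : ℕ) : ReflTransGen r x (p n) := by
    induction n with
    | zero => exact .refl
    | succ n ih => exact p_succ n ▸ ih.tail (next_rel _ ih)
  refine ⟨p, rfl, fun n => p_succ n ▸ next_rel _ (reach n), fun m => ?_⟩
  by_contra! not_P
  have rank_anti : StrictAnti fun k => d (p (m + k)) := strictAnti_nat_of_succ_lt fun k =>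
    (p_succ (m + k) ▸ next_rank _ (reach (m + k))).resolve_left (not_P (m + k + 1) (by omega))
  exact not_strictAnti_of_wellFoundedLT _ rank_anti

end Relation

namespace LDAG

variable {Q : Type*} {D : LDAG Q} {B : Set Q} {v w : ℕ × Q} {p : ℕ → ℕ × Q} {i : ℕ}

/-- The subgraph of infinitary vertices, the intermediate stage of a peeling step. -/
def infinitaryPart (D : LDAG Q) : LDAG Q := D.induced {v | ¬ D.Finitary v}

/-- The infinitary, not `B`-recurring vertices on level `i`, which are the vertices counted by the
ultimate width. -/
def nonrecurringLevel (B : Set Q) (D : LDAG Q) (i : ℕ) : Set (ℕ × Q) :=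
  {v | v ∈ D.V ∧ v.1 = i ∧ ¬ D.Finitary v ∧ ¬ D.BRecurring B v}

theorem ultWidth_eq_liminf_ncard (B : Set Q) (D : LDAG Q) :
    D.ultWidth B = liminf (fun i => (D.nonrecurringLevel B i).ncard) atTop :=
  rfl

theorem Desc.mem (h : D.Desc v w) (hv : v ∈ D.V) : w ∈ D.V := by
  rcases ReflTransGen.cases_tail h with rfl | ⟨_, _, hw⟩
  · exact hv
  · exact (D.edge_mem hw).2

theorem BFree.of_desc (hv : D.BFree B v) (h : D.Desc v w) : D.BFree B w :=
  fun _ hwx => hv _ (ReflTransGen.trans h hwx)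

theorem exists_desc_of_level_le (hsucc : ∀ x ∈ D.V, ∃ y, D.E x y) (hv : v ∈ D.V) (hi : v.1 ≤ i) :
    ∃ w, w.1 = i ∧ D.Desc v w := by
  induction i, hi using Nat.le_induction with
  | base => exact ⟨v, rfl, .refl⟩
  | succ i _ ih =>
    obtain ⟨x, rfl, hvx⟩ := ih
    obtain ⟨y, hxy⟩ := hsucc x (hvx.mem hv)
    exact ⟨y, D.edge_level hxy, ReflTransGen.tail hvx hxy⟩

theorem desc_of_path (hp : ∀ n, D.E (p n) (p (n + 1))) {m n : ℕ} (hmn : m ≤ n) :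
    D.Desc (p m) (p n) :=
  Nat.rel_of_forall_rel_succ_of_le (ReflTransGen D.E) (fun n => .single (hp n)) hmn

theorem injective_of_path (hp : ∀ n, D.E (p n) (p (n + 1))) : Function.Injective p := by
  have level_strictMono : StrictMono fun n => (p n).1 :=
    strictMono_nat_of_lt_succ fun n => D.edge_level (hp n) ▸ Nat.lt_succ_self _
  exact level_strictMono.injective.of_comp (f := Prod.fst)

theorem not_finitary_of_path (hp : ∀ n, D.E (p n) (p (n + 1))) (n : ℕ) : ¬ D.Finitary (p n) :=
  Set.infinite_of_injective_forall_mem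
    ((injective_of_path hp).comp (add_right_injective n))
    fun k => desc_of_path hp (Nat.le_add_right n k)

theorem infinitaryPart_edge_of_path (hp : ∀ n, D.E (p n) (p (n + 1))) (n : ℕ) :
    D.infinitaryPart.E (p n) (p (n + 1)) :=
  ⟨hp n, not_finitary_of_path hp n, not_finitary_of_path hp (n + 1)⟩

theorem not_bFree_of_path (hp : ∀ n, D.E (p n) (p (n + 1))) (hB : ∀ m, ∃ n, m ≤ n ∧ (p n).2 ∈ B)
    (m : ℕ) : ¬ D.BFree B (p m) := by
  obtain ⟨n, hmn, hn⟩ := hB m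
  exact fun hfree => hfree _ (desc_of_path hp hmn) hn

theorem BRecurring.infinitaryPart (h : D.BRecurring B v) : D.infinitaryPart.BRecurring B v := by
  obtain ⟨p, hp₀, hp, hB⟩ := h
  exact ⟨p, hp₀, infinitaryPart_edge_of_path hp, hB⟩

theorem BRecurring.not_bFree (h : D.BRecurring B v) : ¬ D.BFree B v := by
  obtain ⟨p, rfl, hp, hB⟩ := h
  exact not_bFree_of_path hp hB 0

theorem BRecurring.peel (h : D.BRecurring B v) : (D.peel B).BRecurring B v := by
  obtain ⟨p, hp₀, hp, hB⟩ := h.infinitaryPart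
  exact ⟨p, hp₀, fun n => ⟨hp n, not_bFree_of_path hp hB n, not_bFree_of_path hp hB (n + 1)⟩, hB⟩

theorem nonrecurringLevel_peel_subset (B : Set Q) (D : LDAG Q) (i : ℕ) :
    (D.peel B).nonrecurringLevel B i ⊆ D.nonrecurringLevel B i :=
  fun _ ⟨hmem, hlevel, _, hrec⟩ => ⟨hmem.1.1, hlevel, hmem.1.2, fun h => hrec h.peel⟩

theorem exists_infinitaryPart_edge (hD : {w | D.E v w}.Finite) (hv : ¬ D.Finitary v) :
    ∃ w, D.infinitaryPart.E v w := by
  obtain ⟨w, hvw, hw⟩ := exists_rel_infinite_reflTransGen hD hv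
  exact ⟨w, hvw, hv, hw⟩

theorem exists_desc_bFree_of_not_bRecurring (hD : ∀ v, {w | D.E v w}.Finite)
    (hv : v ∈ D.infinitaryPart.V) (hrec : ¬ D.BRecurring B v) :
    ∃ w, D.infinitaryPart.Desc v w ∧ D.infinitaryPart.BFree B w := by
  by_contra! not_free
  have reach_tagged (x : ℕ × Q) (hvx : D.infinitaryPart.Desc v x) :
      ∃ z, TransGen D.infinitaryPart.E x z ∧ z.2 ∈ B := by
    obtain ⟨y, hxy⟩ := exists_infinitaryPart_edge (hD x) (hvx.mem hv).2
    have hy := not_free y (ReflTransGen.tail hvx hxy)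
    simp only [BFree, not_forall, not_not] at hy
    obtain ⟨z, hyz, hz⟩ := hy
    exact ⟨z, .head' hxy hyz, hz⟩
  obtain ⟨p, hp₀, hp, hB⟩ := exists_path_infinitely_often reach_tagged
  exact hrec ⟨p, hp₀, fun n => (hp n).1, hB⟩

theorem eventually_nonrecurringLevel_peel_ssubset (hD : ∀ v, {w | D.E v w}.Finite)
    (h : ∃ v ∈ D.V, ¬ D.Finitary v ∧ ¬ D.BRecurring B v) :
    ∀ᶠ i in atTop, (D.peel B).nonrecurringLevel B i ⊂ D.nonrecurringLevel B i := by
  obtain ⟨v, hv, hinf, hrec⟩ := h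
  obtain ⟨w, hvw, hfree⟩ := exists_desc_bFree_of_not_bRecurring hD ⟨hv, hinf⟩ hrec
  have hw : w ∈ D.infinitaryPart.V := hvw.mem ⟨hv, hinf⟩
  filter_upwards [eventually_ge_atTop w.1] with i hi
  obtain ⟨x, hxi, hwx⟩ :=
    exists_desc_of_level_le (fun y hy => exists_infinitaryPart_edge (hD y) hy.2) hw hi
  have hx : x ∈ D.infinitaryPart.V := hwx.mem hw
  have hx_free : D.infinitaryPart.BFree B x := hfree.of_desc hwx
  have hx_rec : ¬ D.BRecurring B x := fun h => h.infinitaryPart.not_bFree hx_free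
  exact Set.ssubset_iff_exists.mpr ⟨nonrecurringLevel_peel_subset B D i, x,
    ⟨hx.1, hxi, hx.2, hx_rec⟩, fun hpeel => hpeel.1.2 hx_free⟩

section Finite

variable [Finite Q]

theorem finite_setOf_edge (D : LDAG Q) (v : ℕ × Q) : {w | D.E v w}.Finite :=
  ((Set.finite_singleton (v.1 + 1)).prod Set.finite_univ).subset
    fun _ hw => ⟨D.edge_level hw, trivial⟩

theorem finite_nonrecurringLevel (B : Set Q) (D : LDAG Q) (i : ℕ) :
    (D.nonrecurringLevel B i).Finite :=
  ((Set.finite_singleton i).prod Set.finite_univ).subset fun _ hv => ⟨hv.2.1, trivial⟩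

theorem ncard_nonrecurringLevel_le (B : Set Q) (D : LDAG Q) (i : ℕ) :
    (D.nonrecurringLevel B i).ncard ≤ Nat.card Q := by
  rw [← Set.ncard_univ]
  exact Set.ncard_le_ncard_of_injOn Prod.snd (fun _ _ => trivial)
    fun _ hv _ hw hsnd => Prod.ext (hv.2.1.trans hw.2.1.symm) hsnd

theorem isCoboundedUnder_ncard_nonrecurringLevel (B : Set Q) (D : LDAG Q) :
    atTop.IsCoboundedUnder (· ≥ ·) fun i => (D.nonrecurringLevel B i).ncard :=
  (isBoundedUnder_of ⟨Nat.card Q, ncard_nonrecurringLevel_le B D⟩).isCoboundedUnder_ge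

end Finite

end LDAG

-- In `ℕ`, an infinite set has `ncard` `0`, and a sequence tending to infinity has `liminf` `0`.
theorem peel_ultWidth_lt_general {Q : Type*} (B : Set Q) (D : LDAG Q)
    (hD : ∀ v, {w | D.E v w}.Finite)
    (hfin : ∀ᶠ i in atTop, (D.nonrecurringLevel B i).Finite)
    (hbdd : atTop.IsCoboundedUnder (· ≥ ·) fun i => (D.nonrecurringLevel B i).ncard)
    (h : ∃ v ∈ D.V, ¬ D.Finitary v ∧ ¬ D.BRecurring B v) :
    (D.peel B).ultWidth B < D.ultWidth B := by
  rw [LDAG.ultWidth_eq_liminf_ncard, LDAG.ultWidth_eq_liminf_ncard]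
  refine liminf_lt_liminf_of_eventually_lt hbdd ?_
  filter_upwards [hfin, LDAG.eventually_nonrecurringLevel_peel_ssubset hD h] with i hi hssub
  exact Set.ncard_lt_ncard hssub hi

/-- if a leveled DAG `D` over a finite set `Q` contains an infinitary
vertex that is not `B`-recurring, then one peeling step strictly decreases the ultimate
width. -/
theorem peel_ultWidth_lt {Q : Type*} [Fintype Q] (B : Set Q) (D : LDAG Q)
    (h : ∃ v ∈ D.V, ¬ D.Finitary v ∧ ¬ D.BRecurring B v) :
    (D.peel B).ultWidth B < D.ultWidth B := by
  exact peel_ultWidth_lt_general B D D.finite_setOf_edge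
    (.of_forall (D.finite_nonrecurringLevel B)) (D.isCoboundedUnder_ncard_nonrecurringLevel B) h
end
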